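/- arXiv:2604.23050 — 10 statements merged into one kernel-verified Lean document; each statement's English description precedes it below -/
import Mathlib

section
/- Let f ∈ ℤ[x] be a polynomial of degree d ≥ 2 with positive leading coefficient having at least two distinct roots in an algebraic closure of ℚ, let m ≥ 2 be an integer, and let F(x) = f(x)^m. Then the set of lattice points visible along F has density 1, i.e., #Visible_F(N)/N² tends to 1 as N → ∞. -/
open Polynomial Filter

/-- A lattice point `(a, h)` (with `a, h` positive integers) is *visible along* the
polynomial `F ∈ ℤ[x]` if there is a rational `t` with `h = t·F(a)` and `a` is the
smallest positive integer `u` such that `t·F(u)` is a positive integer. -/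
def VisibleAlong (F : Polynomial ℤ) (a h : ℤ) : Prop :=
  ∃ t : ℚ, (h : ℚ) = t * ((F.eval a : ℤ) : ℚ) ∧
    ∀ u : ℤ, 0 < u → (∃ k : ℤ, 0 < k ∧ (k : ℚ) = t * ((F.eval u : ℤ) : ℚ)) → a ≤ u

/-- The set of lattice points in `[1,N]²` that are visible along `F`. -/
def visibleSet (F : Polynomial ℤ) (N : ℕ) : Set (ℤ × ℤ) :=
  {p | 1 ≤ p.1 ∧ p.1 ≤ (N : ℤ) ∧ 1 ≤ p.2 ∧ p.2 ≤ (N : ℤ) ∧ VisibleAlong F p.1 p.2}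

theorem asym (f : ℝ[X]) (hd : 1 ≤ f.natDegree) :
    ∃ δ : ℝ, ∀ η > 0, ∃ R : ℝ, ∀ x ≥ R, 
      |f.eval x - f.leadingCoeff * (x + δ) ^ f.natDegree| ≤ η * |(x + δ) ^ (f.natDegree - 1)| := by
  set d := f.natDegree with hdd
  set a := f.leadingCoeff with ha
  have hf0 : f ≠ 0 := by rintro rfl; simp at hdd; omega
  have ha0 : a ≠ 0 := by simpa [ha] using hf0
  refine ⟨f.coeff (d-1) / (d * a), fun η hη => ?_⟩
  set δ := f.coeff (d-1) / (d * a) with hδ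
  have hdeg : (f - C a * (X + C δ) ^ d).degree < ((X + C δ) ^ (d-1)).degree := by
    have h1 : ((X + C δ) ^ (d-1)).degree = ((d-1 : ℕ) : WithBot ℕ) := by
      rw [degree_pow, degree_X_add_C]; simp
    rw [h1, degree_lt_iff_coeff_zero]
    intro k hk
    rw [coeff_sub, coeff_C_mul, coeff_X_add_C_pow]
    rcases Nat.lt_or_ge d k with h | h
    · rw [coeff_eq_zero_of_natDegree_lt h, Nat.choose_eq_zero_of_lt h]; simp
    · rcases Nat.eq_or_lt_of_le h with h | h
      · subst h; simp [ha, hdd]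
      · have : k = d - 1 := by omega
        subst this
        have e : d - (d-1) = 1 := by omega
        rw [e, Nat.choose_symm_of_eq_add (show d = (d-1) + 1 by omega), Nat.choose_one_right, hδ]
        have : (d:ℝ) ≠ 0 := by positivity
        field_simp; ring
  have := (Polynomial.isLittleO_atTop_of_degree_lt _ _ hdeg).bound hη
  obtain ⟨R, hR⟩ := eventually_atTop.1 this
  refine ⟨R, fun x hx => ?_⟩
  simpa using hR x hx

theorem evpos_int (f : ℤ[X]) (hd : 1 ≤ f.natDegree) (hl : 0 < f.leadingCoeff) (B : ℤ) :
    ∃ X0 : ℤ, ∀ x ≥ X0, B < f.eval x := by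
  have hinj : Function.Injective (Int.castRingHom ℝ) := Int.cast_injective
  have h := (f.map (Int.castRingHom ℝ)).tendsto_atTop_of_leadingCoeff_nonneg
    (by rw [degree_map_eq_of_injective hinj]; exact natDegree_pos_iff_degree_pos.1 hd)
    (by rw [leadingCoeff_map_of_injective hinj]; simpa using hl.le)
  obtain ⟨R, hR⟩ := eventually_atTop.1 (h.eventually_gt_atTop (B:ℝ))
  refine ⟨⌈R⌉, fun x hx => ?_⟩
  have := hR x (Int.ceil_le.1 hx)
  rw [eval_intCast_map, eq_intCast] at this
  exact_mod_cast this

theorem bound_Icc (f : ℤ[X]) (Y : ℤ) : ∃ B : ℤ, ∀ u : ℤ, 0 < u → u ≤ Y → |f.eval u| ≤ B := by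
  refine ⟨∑ u ∈ Finset.Icc 1 Y, |f.eval u|, fun u h1 h2 => ?_⟩
  exact Finset.single_le_sum (f := fun u => |f.eval u|) (fun i _ => abs_nonneg _) 
    (Finset.mem_Icc.2 ⟨h1, h2⟩)

theorem evpos_real (f : ℤ[X]) (hd : 1 ≤ f.natDegree) (hl : 0 < f.leadingCoeff) :
    ∃ R : ℝ, ∀ x ≥ R, 0 < (f.map (Int.castRingHom ℝ)).eval x := by
  have hinj : Function.Injective (Int.castRingHom ℝ) := Int.cast_injective
  have h := (f.map (Int.castRingHom ℝ)).tendsto_atTop_of_leadingCoeff_nonneg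
    (by rw [degree_map_eq_of_injective hinj]; exact natDegree_pos_iff_degree_pos.1 hd)
    (by rw [leadingCoeff_map_of_injective hinj]; simpa using hl.le)
  exact eventually_atTop.1 (h.eventually_gt_atTop 0)

theorem evmono (f : ℤ[X]) (hd : 2 ≤ f.natDegree) (hl : 0 < f.leadingCoeff) :
    ∃ A : ℤ, ∀ a ≥ A, ∀ u, 0 < u → u < a → f.eval u < f.eval a := by
  have hdeg : (f.derivative).natDegree = f.natDegree - 1 := natDegree_derivative f
  obtain ⟨R, hR⟩ := evpos_real (f.derivative) (by omega) (by
    rw [leadingCoeff, hdeg, coeff_derivative, Nat.sub_add_cancel (by omega)]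
    have : 0 < f.coeff f.natDegree := hl
    positivity) 
  have hm : StrictMonoOn (fun x : ℝ => (f.map (Int.castRingHom ℝ)).eval x) (Set.Ici R) := by
    apply strictMonoOn_of_deriv_pos (convex_Ici R) (Polynomial.continuous _).continuousOn
    intro x hx
    rw [interior_Ici] at hx
    rw [Polynomial.deriv, derivative_map]
    exact hR x (le_of_lt hx)
  obtain ⟨B, hB⟩ := bound_Icc f ⌈R⌉
  obtain ⟨X0, hX⟩ := evpos_int f (by omega) hl B
  refine ⟨max X0 ⌈R⌉, fun a ha u h0 hu => ?_⟩
  rcases le_total u ⌈R⌉ with h | h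
  · exact lt_of_le_of_lt ((le_abs_self _).trans (hB u h0 h)) (hX a (le_of_max_le_left ha))
  · have := hm (a := (u:ℝ)) (b := (a:ℝ)) (Int.ceil_le.1 h) (Int.ceil_le.1 (le_of_max_le_right ha)) (by exact_mod_cast hu)
    simp only [eval_intCast_map, eq_intCast] at this
    exact_mod_cast this

theorem pow_ineq (s t : ℝ) (hs : 0 ≤ s) (ht : 0 ≤ t) (d : ℕ) (hd : 1 ≤ d) :
    |s - t| * s ^ (d-1) ≤ |s ^ d - t ^ d| := by
  rw [← (Commute.all s t).mul_geom_sum₂ d, abs_mul]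
  apply mul_le_mul_of_nonneg_left _ (abs_nonneg _)
  refine le_trans ?_ (le_abs_self _)
  have := Finset.single_le_sum (f := fun i => s ^ i * t ^ (d - 1 - i)) (s := Finset.range d)
    (fun i _ => by positivity) (Finset.mem_range.2 (show d - 1 < d by omega))
  simpa using this

theorem key (f : ℤ[X]) (hd : 2 ≤ f.natDegree) (hl : 0 < f.leadingCoeff) (p q : ℤ)
    (hp : 0 < p) (hpq : p < q) :
    ∃ l c : ℝ, 0 < l ∧ l < 1 ∧ ∀ ε > 0, ∃ X0 : ℤ, ∀ x y : ℤ, 0 < y → y < x → X0 ≤ x →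
      p * f.eval x = q * f.eval y → |y - l * x - c| < ε := by
  have hinj : Function.Injective (Int.castRingHom ℝ) := Int.cast_injective
  obtain ⟨δ, hδ⟩ := asym (f.map (Int.castRingHom ℝ)) 
    (by rw [natDegree_map_eq_of_injective hinj]; omega)
  rw [natDegree_map_eq_of_injective hinj, leadingCoeff_map_of_injective hinj] at hδ
  set d := f.natDegree with hdd
  set a : ℝ := (Int.castRingHom ℝ) f.leadingCoeff with ha
  have ha0 : 0 < a := by simpa [ha] using hl
  have hpR : (0:ℝ) < p := by exact_mod_cast hp
  have hpqR : (p:ℝ) < q := by exact_mod_cast hpq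
  have hqR : (0:ℝ) < q := hpR.trans hpqR
  have hr : (0:ℝ) < p / q := by positivity
  have hr1 : (p:ℝ) / q < 1 := by rw [div_lt_one hqR]; exact hpqR
  set l : ℝ := ((p:ℝ)/q) ^ ((d:ℝ)⁻¹) with hldef
  have hl0 : 0 < l := Real.rpow_pos_of_pos hr _
  have hld : l ^ d = p / q := Real.rpow_inv_natCast_pow hr.le (by omega)
  have hl1 : l < 1 := by
    by_contra h
    have := one_le_pow₀ (n := d) (not_lt.1 h)
    linarith
  refine ⟨l, (l - 1) * δ, hl0, hl1, fun ε hε => ?_⟩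
  set η : ℝ := ε * a * l ^ (d-1) / 4 with hη
  have hη0 : 0 < η := by positivity
  obtain ⟨R, hR⟩ := hδ η hη0
  -- y large
  obtain ⟨B, hB⟩ := bound_Icc f (max ⌈R⌉ (⌈-δ⌉))
  obtain ⟨X1, hX1⟩ := evpos_int f (by omega) hl (max (q * B) 0)
  refine ⟨max X1 0, fun x y hy hyx hx he => ?_⟩
  have hfx := hX1 x (le_of_max_le_left hx)
  have hyl : max ⌈R⌉ (⌈-δ⌉) < y := by
    by_contra h
    have h1 := hB y hy (not_lt.1 h)
    have h2 := le_abs_self (f.eval y)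
    have h3 := lt_of_le_of_lt (le_max_left _ _) hfx
    have h4 := lt_of_le_of_lt (le_max_right _ _) hfx
    nlinarith
  obtain ⟨hy1, hy2⟩ := max_lt_iff.1 hyl
  have hy1' : R ≤ y := Int.ceil_le.1 hy1.le
  have hy2' : -δ ≤ y := Int.ceil_le.1 hy2.le
  have hyxR : (y:ℝ) < x := by exact_mod_cast hyx
  have ey := hR y hy1'
  have ex := hR x (by linarith)
  rw [eval_intCast_map, eq_intCast, Int.cast_id] at ex ey
  have heR : (p:ℝ) * f.eval x = q * f.eval y := by exact_mod_cast he
  set X := (x:ℝ) + δ with hX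
  set Y := (y:ℝ) + δ with hY
  have hY0 : 0 ≤ Y := by linarith
  have hXY : Y < X := by linarith
  have hX0 : 0 < X := by linarith
  rw [abs_of_nonneg (a := X ^ (d-1)) (by positivity)] at ex
  rw [abs_of_nonneg (a := Y ^ (d-1)) (by positivity)] at ey
  have hYX : Y ^ (d-1) ≤ X ^ (d-1) := pow_le_pow_left₀ hY0 hXY.le _
  have h1 := pow_ineq (l * X) Y (by positivity) hY0 d (by omega)
  have h2 : a * ((l * X) ^ d - Y ^ d) = (f.eval y - a * Y ^ d) - (p / q) * (f.eval x - a * X ^ d) := by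
    rw [mul_pow, hld]
    field_simp
    linarith
  have h3 : a * |(l * X) ^ d - Y ^ d| ≤ 2 * η * X ^ (d-1) := by
    rw [← abs_of_pos ha0, ← abs_mul, h2]
    refine (abs_sub _ _).trans ?_
    rw [abs_mul, abs_of_pos hr]
    have : (p:ℝ)/q * |f.eval x - a * X ^ d| ≤ 1 * |f.eval x - a * X ^ d| := 
      mul_le_mul_of_nonneg_right hr1.le (abs_nonneg _)
    have := mul_le_mul_of_nonneg_left hYX hη0.le
    linarith
  have h4 : |l * X - Y| * (a * l ^ (d-1) * X ^ (d-1)) ≤ (ε / 2) * (a * l ^ (d-1) * X ^ (d-1)) := by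
    have := mul_le_mul_of_nonneg_left h1 ha0.le
    rw [mul_pow] at this
    rw [hη] at h3
    linarith
  have h5 := le_of_mul_le_mul_right h4 (by positivity)
  have h6 : (y:ℝ) - l * x - (l - 1) * δ = -(l * X - Y) := by rw [hX, hY]; ring
  rw [h6, abs_neg]
  linarith

theorem no_line (f : ℤ[X]) (hf : f ≠ 0)
    (hroots : ∃ α β : AlgebraicClosure ℚ, α ≠ β ∧
      Polynomial.aeval α f = 0 ∧ Polynomial.aeval β f = 0) (p q : ℤ) (hq : q ≠ 0) (k g e : ℤ)
    (hk : 0 < k) (hkg : k < g)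
    (hinf : {x : ℤ | ∃ y : ℤ, g * y = k * x + e ∧ p * f.eval x = q * f.eval y}.Infinite) : False := by
  obtain ⟨α, β, hne, hα, hβ⟩ := hroots
  set L : ℚ := k / g with hL
  have hkQ : (0:ℚ) < k := by exact_mod_cast hk
  have hkgQ : (k:ℚ) < g := by exact_mod_cast hkg
  have hgQ : (0:ℚ) < g := hkQ.trans hkgQ
  have hL0 : 0 < L := by positivity
  have hL1 : L < 1 := by rw [hL, div_lt_one hgQ]; exact hkgQ
  set P := f.map (Int.castRingHom ℚ) with hP
  have hPQ : C (p:ℚ) * P = C (q:ℚ) * P.comp (C L * X + C ((e:ℚ)/g)) := by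
    apply eq_of_infinite_eval_eq
    refine (hinf.image (f := fun x : ℤ => (x:ℚ)) Int.cast_injective.injOn).mono ?_
    rintro _ ⟨x, ⟨y, h1, h2⟩, rfl⟩
    have h1' : L * x + (e:ℚ)/g = y := by
      have : (g:ℚ) * y = k * x + e := by exact_mod_cast h1
      rw [hL]; field_simp; linarith
    simp only [Set.mem_ofPred_eq, eval_mul, eval_C, eval_comp, eval_add, eval_X, h1', hP,
      eval_intCast_map, eq_intCast]
    exact_mod_cast h2
  set T : AlgebraicClosure ℚ → AlgebraicClosure ℚ := 
    fun z => algebraMap ℚ _ L * z + algebraMap ℚ _ ((e:ℚ)/g) with hT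
  have hev : ∀ z : AlgebraicClosure ℚ, aeval z P = aeval z f := by
    intro z
    rw [hP]
    exact aeval_map_algebraMap ℚ z f
  have hroot : ∀ z, aeval z f = 0 → aeval (T z) f = 0 := by
    intro z hz
    have := congrArg (aeval z) hPQ
    rw [map_mul, map_mul, hev, hz, aeval_comp] at this
    simp only [map_add, map_mul, aeval_C, aeval_X, hev, mul_zero] at this
    rcases mul_eq_zero.1 this.symm with h | h
    · simp [hq] at h
    · exact h
  have hit : ∀ z, aeval z f = 0 → ∀ n : ℕ, aeval (T^[n] z) f = 0 := by
    intro z hz n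
    induction n with
    | zero => simpa
    | succ n ih => rw [Function.iterate_succ_apply']; exact hroot _ ih
  have hdiff : ∀ n : ℕ, T^[n] α - T^[n] β = algebraMap ℚ _ (L ^ n) * (α - β) := by
    intro n
    induction n with
    | zero => simp
    | succ n ih =>
      rw [Function.iterate_succ_apply', Function.iterate_succ_apply', pow_succ', map_mul, mul_assoc, ← ih]
      simp only [hT]; ring
  have hfin : (f.rootSet (AlgebraicClosure ℚ)).Finite := rootSet_finite f _
  have : Finite (f.rootSet (AlgebraicClosure ℚ)) := hfin
  have hmem : ∀ z, aeval z f = 0 → z ∈ f.rootSet (AlgebraicClosure ℚ) := fun z hz => by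
    rw [mem_rootSet_of_injective (by exact (algebraMap ℤ (AlgebraicClosure ℚ)).injective_int) hf]; exact hz
  obtain ⟨i, j, hij, he⟩ := Finite.exists_ne_map_eq_of_infinite 
    (fun n : ℕ => ((⟨_, hmem _ (hit α hα n)⟩, ⟨_, hmem _ (hit β hβ n)⟩) : 
      (f.rootSet (AlgebraicClosure ℚ)) × (f.rootSet (AlgebraicClosure ℚ))))
  simp only [Prod.mk.injEq, Subtype.mk.injEq] at he
  have h1 := hdiff i
  rw [he.1, he.2, hdiff j] at h1
  have h2 := mul_right_cancel₀ (sub_ne_zero.2 hne) h1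
  have h3 := (algebraMap ℚ (AlgebraicClosure ℚ)).injective h2
  exact hij ((pow_right_injective₀ hL0 hL1.ne) h3.symm)

/-- solution set -/
def solSet (f : ℤ[X]) (p q : ℤ) : Set ℤ :=
  {x | ∃ y : ℤ, 0 < y ∧ y < x ∧ p * f.eval x = q * f.eval y}

theorem sep (f : ℤ[X]) (hd : 2 ≤ f.natDegree) (hl : 0 < f.leadingCoeff)
    (hroots : ∃ α β : AlgebraicClosure ℚ, α ≠ β ∧
      Polynomial.aeval α f = 0 ∧ Polynomial.aeval β f = 0) (p q : ℤ)
    (hp : 0 < p) (hpq : p < q) (G : ℤ) :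
    ∃ X0 : ℤ, ∀ x ∈ solSet f p q, ∀ x' ∈ solSet f p q, X0 ≤ x → x < x' → G < x' - x := by
  by_contra hcon
  push Not at hcon
  obtain ⟨l, c, hl0, hl1, hkey⟩ := key f hd hl p q hp hpq
  have hf : f ≠ 0 := by rintro rfl; simp at hd
  -- common approximations
  obtain ⟨x1, ⟨y1, hy1, hyx1, he1⟩, -, -, -, -, hG⟩ := hcon 0
  -- for every tolerance
  have step : ∀ ε > 0, ∃ g k : ℤ, 0 < g ∧ g ≤ G ∧ |k - l * g| < ε := by
    intro ε hε
    obtain ⟨X0, hX0⟩ := hkey (ε/2) (by positivity)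
    obtain ⟨x, ⟨y, hy, hyx, he⟩, x', ⟨y', hy', hyx', he'⟩, h0, h1, h2⟩ := hcon X0
    refine ⟨x' - x, y' - y, by linarith, h2, ?_⟩
    have a1 := abs_lt.1 (hX0 x y hy hyx h0 he)
    have a2 := abs_lt.1 (hX0 x' y' hy' hyx' (by linarith) he')
    push_cast
    rw [abs_lt]
    constructor <;> linarith [a1.1, a1.2, a2.1, a2.2]
  have hrat : ∃ g k : ℤ, 0 < g ∧ (k:ℝ) = l * g := by
    by_contra hno
    push Not at hno
    -- minimal distance
    have hpos : ∀ g ∈ Finset.Icc 1 G, 0 < |(round (l * g) : ℝ) - l * g| := by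
      intro g hg
      rw [abs_pos, sub_ne_zero]
      exact hno g _ (Finset.mem_Icc.1 hg).1
    have : ∃ ε > 0, ∀ g ∈ Finset.Icc 1 G, ε ≤ |(round (l * g) : ℝ) - l * g| := by
      rcases (Finset.Icc 1 G).eq_empty_or_nonempty with h | h
      · exact ⟨1, one_pos, by simp [h]⟩
      · obtain ⟨b, hb, hmin⟩ := Finset.exists_min_image (Finset.Icc 1 G) 
          (fun g => |(round (l * g) : ℝ) - l * g|) h
        exact ⟨_, hpos b hb, hmin⟩
    obtain ⟨ε, hε, hmin⟩ := this
    obtain ⟨g, k, hg, hgG, hk⟩ := step ε hε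
    have h1 := hmin g (Finset.mem_Icc.2 ⟨hg, hgG⟩)
    have h2 := round_le (l * g) k
    rw [abs_sub_comm] at h2
    rw [abs_sub_comm (l * g)] at h2
    linarith
  obtain ⟨g, k, hg, hk⟩ := hrat
  have hgR : (0:ℝ) < g := by exact_mod_cast hg
  have hk0 : 0 < k := by
    have : (0:ℝ) < k := by rw [hk]; positivity
    exact_mod_cast this
  have hkg : k < g := by
    have : (k:ℝ) < g := by rw [hk]; nlinarith
    exact_mod_cast this
  obtain ⟨X0, hX0⟩ := hkey (1 / (2 * g)) (by positivity)
  obtain ⟨x0, ⟨y0, hy0, hyx0, he0⟩, -, -, h00, -⟩ := hcon X0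
  refine no_line f hf hroots p q (by omega) k g (g * y0 - k * x0) hk0 hkg ?_
  apply Set.infinite_of_not_bddAbove
  rintro ⟨M, hM⟩
  obtain ⟨x, ⟨y, hy, hyx, he⟩, -, -, h0, -⟩ := hcon (max X0 (M+1))
  have hxM : x ≤ M := by
    refine hM ⟨y, ?_, he⟩
    have a1 := abs_lt.1 (hX0 x y hy hyx (le_of_max_le_left h0) he)
    have a2 := abs_lt.1 (hX0 x0 y0 hy0 hyx0 h00 he0)
    have a3 : |((g * y - k * x - (g * y0 - k * x0) : ℤ) : ℝ)| < 1 := by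
      push_cast
      rw [hk]
      have e1 : (g:ℝ) * y - l * g * x - (g * y0 - l * g * x0) = 
        g * ((y - l * x - c) - (y0 - l * x0 - c)) := by ring
      rw [e1, abs_mul, abs_of_pos hgR, ← lt_div_iff₀' hgR]
      have e2 : (1:ℝ)/g = 1 / (2 * g) + 1 / (2 * g) := by field_simp; norm_num
      rw [e2, abs_lt]
      constructor <;> linarith [a1.1, a1.2, a2.1, a2.2]
    have a4 : |g * y - k * x - (g * y0 - k * x0)| < 1 := by exact_mod_cast a3
    have := Int.abs_lt_one_iff.1 a4
    linarith
  have := le_of_max_le_right h0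
  omega

open Classical in
/-- counting function -/
noncomputable def cnt (S : Set ℤ) (N : ℕ) : ℕ := ((Finset.Icc (1:ℤ) N).filter (· ∈ S)).card

/-- zero density -/
def ZD (S : Set ℤ) : Prop := ∀ ε > (0:ℝ), ∃ N0 : ℕ, ∀ N ≥ N0, (cnt S N : ℝ) ≤ ε * N

theorem cnt_mono {S T : Set ℤ} (h : S ⊆ T) (N : ℕ) : cnt S N ≤ cnt T N := by
  classical
  unfold cnt
  exact Finset.card_le_card (Finset.monotone_filter_right _ (fun a _ ha => h ha))

theorem ZD_mono {S T : Set ℤ} (h : S ⊆ T) (hT : ZD T) : ZD S := by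
  intro ε hε
  obtain ⟨N0, h0⟩ := hT ε hε
  refine ⟨N0, fun N hN => le_trans ?_ (h0 N hN)⟩
  exact_mod_cast cnt_mono h N

theorem cnt_union (S T : Set ℤ) (N : ℕ) : cnt (S ∪ T) N ≤ cnt S N + cnt T N := by
  classical
  unfold cnt
  refine le_trans (Finset.card_le_card ?_) (Finset.card_union_le _ _)
  intro x hx
  simp only [Finset.mem_filter, Finset.mem_union, Set.mem_union] at hx ⊢
  tauto

theorem ZD_union {S T : Set ℤ} (hS : ZD S) (hT : ZD T) : ZD (S ∪ T) := by
  intro ε hε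
  obtain ⟨N0, h0⟩ := hS (ε/2) (by positivity)
  obtain ⟨N1, h1⟩ := hT (ε/2) (by positivity)
  refine ⟨max N0 N1, fun N hN => ?_⟩
  have a := h0 N (le_of_max_le_left hN)
  have b := h1 N (le_of_max_le_right hN)
  have c : (cnt (S ∪ T) N : ℝ) ≤ cnt S N + cnt T N := by exact_mod_cast cnt_union S T N
  linarith

theorem ZD_empty : ZD ∅ := by
  intro ε hε
  refine ⟨0, fun N _ => ?_⟩
  simp [cnt]; positivity

theorem ZD_biUnion {ι : Type*} (s : Finset ι) (S : ι → Set ℤ) (h : ∀ i ∈ s, ZD (S i)) :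
    ZD (⋃ i ∈ s, S i) := by
  classical
  induction s using Finset.induction_on with
  | empty => simpa using ZD_empty
  | insert a s ha ih =>
    rw [Finset.set_biUnion_insert]
    exact ZD_union (h a (by simp)) (ih fun i hi => h i (by simp [hi]))

theorem cnt_Iio (A : ℤ) (N : ℕ) : cnt (Set.Iio A) N ≤ A.toNat := by
  unfold cnt
  have : (Finset.Icc (1:ℤ) A).card = A.toNat := by simp
  rw [← this]
  apply Finset.card_le_card
  intro x hx
  simp only [Finset.mem_filter, Finset.mem_Icc, Set.mem_Iio] at hx ⊢
  omega

theorem cnt_sep (S : Set ℤ) (G : ℕ) (X0 : ℤ) (N : ℕ)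
    (h : ∀ x ∈ S, ∀ x' ∈ S, X0 ≤ x → x < x' → (G:ℤ) < x' - x) :
    cnt (S ∩ Set.Ici X0) N ≤ N / (G+1) + 1 := by
  classical
  unfold cnt
  have : (Finset.Icc (0:ℤ) (N / (G+1) : ℕ)).card = N / (G+1) + 1 := by
    rw [Int.card_Icc, sub_zero]; exact_mod_cast Int.toNat_natCast _
  rw [← this]
  apply Finset.card_le_card_of_injOn (fun x => x / ((G:ℤ)+1))
  · intro x hx
    simp only [Finset.coe_filter, Finset.mem_Icc, Set.mem_ofPred_eq, Finset.coe_Icc, Set.mem_Icc] at hx ⊢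
    push_cast
    exact ⟨Int.ediv_nonneg (by omega) (by omega), Int.ediv_le_ediv (by omega) hx.1.2⟩
  · have key : ∀ x ∈ S, ∀ x' ∈ S, X0 ≤ x → x < x' → x / ((G:ℤ)+1) ≠ x' / ((G:ℤ)+1) := by
      intro x hx x' hx' h0 hlt he
      have h1 := h x hx x' hx' h0 hlt
      have e1 := Int.mul_ediv_add_emod x ((G:ℤ)+1)
      have e2 := Int.mul_ediv_add_emod x' ((G:ℤ)+1)
      have b1 := Int.emod_nonneg x (show ((G:ℤ)+1) ≠ 0 by omega)
      have b2 := Int.emod_lt_of_pos x' (show 0 < ((G:ℤ)+1) by omega)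
      rw [he] at e1
      omega
    intro x hx x' hx' he
    simp only [Finset.coe_filter, Finset.mem_Icc, Set.mem_ofPred_eq, Set.mem_inter_iff, Set.mem_Ici] at hx hx'
    by_contra hne
    rcases lt_or_gt_of_ne hne with hlt | hlt
    · exact key x hx.2.1 x' hx'.2.1 hx.2.2 hlt he
    · exact key x' hx'.2.1 x hx.2.1 hx'.2.2 hlt he.symm

theorem ZD_Iio (A : ℤ) : ZD (Set.Iio A) := by
  intro ε hε
  obtain ⟨N0, h0⟩ := exists_nat_ge ((A.toNat : ℝ) / ε)
  refine ⟨N0, fun N hN => ?_⟩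
  have a : (cnt (Set.Iio A) N : ℝ) ≤ A.toNat := by exact_mod_cast cnt_Iio A N
  have b : (N0:ℝ) ≤ N := by exact_mod_cast hN
  rw [div_le_iff₀ hε] at h0
  nlinarith

theorem ZD_sep (S : Set ℤ) (h : ∀ G : ℤ, ∃ X0 : ℤ, ∀ x ∈ S, ∀ x' ∈ S, X0 ≤ x → x < x' → G < x' - x) :
    ZD S := by
  intro ε hε
  obtain ⟨G, hG⟩ := exists_nat_ge (3 / ε)
  obtain ⟨X0, hX⟩ := h G
  obtain ⟨N0, h0⟩ := ZD_Iio X0 (ε/3) (by positivity)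
  obtain ⟨N1, h1⟩ := exists_nat_ge (3 / ε)
  refine ⟨max N0 N1, fun N hN => ?_⟩
  have a := h0 N (le_of_max_le_left hN)
  have b : (N1:ℝ) ≤ N := by exact_mod_cast le_of_max_le_right hN
  have c := cnt_sep S G X0 N hX
  have c' : (cnt (S ∩ Set.Ici X0) N : ℝ) ≤ N / ((G:ℝ)+1) + 1 := by
    have : ((N / (G+1) : ℕ) : ℝ) ≤ N / ((G:ℝ)+1) := by
      have := @Nat.cast_div_le ℝ _ _ _ N (G+1)
      push_cast at this; exact this
    have c2 : (cnt (S ∩ Set.Ici X0) N : ℝ) ≤ ((N / (G+1) : ℕ) : ℝ) + 1 := by exact_mod_cast c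
    linarith
  have d := cnt_union (S ∩ Set.Ici X0) (Set.Iio X0) N
  have d' : (cnt ((S ∩ Set.Ici X0) ∪ Set.Iio X0) N : ℝ) ≤ cnt (S ∩ Set.Ici X0) N + cnt (Set.Iio X0) N := by exact_mod_cast d
  have e : cnt S N ≤ cnt ((S ∩ Set.Ici X0) ∪ Set.Iio X0) N := by
    refine cnt_mono (fun x hx => ?_) N
    rcases lt_or_ge x X0 with h | h
    · right; exact h
    · left; exact ⟨hx, h⟩
  have e' : (cnt S N : ℝ) ≤ cnt ((S ∩ Set.Ici X0) ∪ Set.Iio X0) N := by exact_mod_cast e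
  have f1 : (N:ℝ) / ((G:ℝ)+1) ≤ ε / 3 * N := by
    rw [div_le_iff₀ (by positivity)]
    rw [div_le_iff₀ hε] at hG
    have : (0:ℝ) ≤ N := by positivity
    nlinarith
  have f2 : (1:ℝ) ≤ ε / 3 * N := by
    rw [div_le_iff₀ hε] at h1
    nlinarith
  linarith

theorem mult_count (r : ℕ) (hr : 0 < r) (N : ℕ) : cnt {h | (r:ℤ) ∣ h} N ≤ N / r := by
  classical
  unfold cnt
  have : (Finset.Icc (1:ℤ) (N / r : ℕ)).card = N / r := by
    rw [Int.card_Icc, add_sub_cancel_right]; exact Int.toNat_natCast _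
  rw [← this]
  refine le_trans (Finset.card_le_card ?_) (Finset.card_image_le (f := fun j : ℤ => (r:ℤ) * j))
  intro x hx
  simp only [Finset.mem_filter, Finset.mem_Icc, Set.mem_ofPred_eq, Finset.mem_image] at hx ⊢
  obtain ⟨⟨h1, h2⟩, j, rfl⟩ := hx
  have hr' : (0:ℤ) < r := by exact_mod_cast hr
  refine ⟨j, ⟨?_, ?_⟩, rfl⟩
  · by_contra hj
    nlinarith
  · push_cast
    rw [Int.le_ediv_iff_mul_le hr']; linarith

/-- heights divisible by a large square -/
def sqSet (K : ℕ) : Set ℤ := {h | ∃ q : ℕ, K < q ∧ ((q ^ 2 : ℕ) : ℤ) ∣ h}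

theorem sq_count (K : ℕ) (hK : 0 < K) (N : ℕ) : (cnt (sqSet K) N : ℝ) ≤ N / K := by
  classical
  have h1 : cnt (sqSet K) N ≤ ∑ q ∈ Finset.Ioc K (max K N), cnt {h | ((q^2 : ℕ):ℤ) ∣ h} N := by
    unfold cnt
    refine le_trans (Finset.card_le_card ?_) Finset.card_biUnion_le
    intro x hx
    rw [Finset.mem_filter, Finset.mem_Icc] at hx
    simp only [Finset.mem_filter, Finset.mem_Icc, Finset.mem_biUnion, Set.mem_ofPred_eq, Finset.mem_Ioc]
    obtain ⟨⟨hx1, hx2⟩, q, hq, hdvd⟩ := hx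
    refine ⟨q, ⟨hq, ?_⟩, ⟨hx1, hx2⟩, hdvd⟩
    have := Int.le_of_dvd (by omega) hdvd
    have h3 : q ^ 2 ≤ N := by exact_mod_cast this.trans hx2
    apply le_max_of_le_right
    nlinarith
  have h2 : ∀ q ∈ Finset.Ioc K (max K N), (cnt {h | ((q^2 : ℕ):ℤ) ∣ h} N : ℝ) ≤ N * ((q:ℝ)^2)⁻¹ := by
    intro q hq
    have hq0 : 0 < q := by have := (Finset.mem_Ioc.1 hq).1; omega
    have h3 : (cnt {h | ((q^2 : ℕ):ℤ) ∣ h} N : ℝ) ≤ ((N / q^2 : ℕ) : ℝ) := by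
      exact_mod_cast mult_count (q^2) (by positivity) N
    have h4 := @Nat.cast_div_le ℝ _ _ _ N (q^2)
    push_cast at h4
    rw [← div_eq_mul_inv]
    linarith
  have h3 : (cnt (sqSet K) N : ℝ) ≤ ∑ q ∈ Finset.Ioc K (max K N), (cnt {h | ((q^2 : ℕ):ℤ) ∣ h} N : ℝ) := by
    exact_mod_cast h1
  refine h3.trans ((Finset.sum_le_sum h2).trans ?_)
  rw [← Finset.mul_sum, div_eq_mul_inv]
  apply mul_le_mul_of_nonneg_left _ (by positivity)
  have := sum_Ioc_inv_sq_le_sub (α := ℝ) (k := K) (n := max K N) (by omega) (le_max_left _ _)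
  have h5 : (0:ℝ) ≤ ((max K N : ℕ):ℝ)⁻¹ := by positivity
  linarith

/-- exceptional abscissae -/
def excSet (f : ℤ[X]) (K : ℕ) (A : ℤ) : Set ℤ :=
  (⋃ q ∈ Finset.Icc (1:ℤ) K, ⋃ p ∈ Finset.Ico (1:ℤ) q, solSet f p q) ∪ Set.Iio A

theorem ZD_exc (f : ℤ[X]) (hd : 2 ≤ f.natDegree) (hl : 0 < f.leadingCoeff)
    (hroots : ∃ α β : AlgebraicClosure ℚ, α ≠ β ∧
      Polynomial.aeval α f = 0 ∧ Polynomial.aeval β f = 0) (K : ℕ) (A : ℤ) : ZD (excSet f K A) := by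
  apply ZD_union _ (ZD_Iio A)
  apply ZD_biUnion
  intro q hq
  apply ZD_biUnion
  intro p hp
  rw [Finset.mem_Ico] at hp
  exact ZD_sep _ (sep f hd hl hroots p q (by omega) hp.2)

theorem invis (f : ℤ[X]) (hd : 2 ≤ f.natDegree) (hl : 0 < f.leadingCoeff) (m : ℕ) (hm : 2 ≤ m)
    (K : ℕ) : ∃ A : ℤ, ∀ a h : ℤ, 0 < a → 0 < h → ¬ VisibleAlong (f ^ m) a h → 
      a ∈ excSet f K A ∨ h ∈ sqSet K := by
  obtain ⟨A0, hA0⟩ := evpos_int f (by omega) hl 0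
  obtain ⟨B, hB⟩ := bound_Icc f A0
  obtain ⟨A1, hA1⟩ := evpos_int f (by omega) hl (max (K * B) 0)
  obtain ⟨A2, hA2⟩ := evmono f hd hl
  refine ⟨max A1 A2, fun a h ha hh hv => ?_⟩
  by_cases haA : a < max A1 A2
  · left; right; exact haA
  rw [not_lt] at haA
  have hfa := hA1 a (le_of_max_le_left haA)
  have hfa1 := lt_of_le_of_lt (le_max_left _ _) hfa
  have hfa0 := lt_of_le_of_lt (le_max_right _ _) hfa
  have hFa : ((eval a (f ^ m) : ℤ) : ℚ) ≠ 0 := by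
    rw [eval_pow]; exact_mod_cast (pow_pos hfa0 m).ne'
  unfold VisibleAlong at hv
  push Not at hv
  obtain ⟨u, hu, ⟨k, hk, hke⟩, hua⟩ := hv ((h:ℚ) / ((eval a (f ^ m) : ℤ) : ℚ)) (by field_simp)
  have hke' : k * (f.eval a) ^ m = h * (f.eval u) ^ m := by
    rw [div_mul_eq_mul_div, eq_div_iff hFa] at hke
    simp only [eval_pow] at hke
    exact_mod_cast hke
  have hfu : f.eval u ≠ 0 := by
    intro h0
    rw [h0, zero_pow (by omega), mul_zero] at hke'
    have := mul_pos hk (pow_pos hfa0 m)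
    omega
  have hlt := hA2 a (le_of_max_le_right haA) u hu hua
  -- gcd decomposition
  obtain ⟨g, q, p, hg, hco, hq, hp⟩ : ∃ g q p : ℤ, 0 < g ∧ IsCoprime q p ∧ f.eval a = q * g ∧ f.eval u = p * g := by
    have hpos : 0 < Int.gcd (f.eval a) (f.eval u) := Int.gcd_pos_of_ne_zero_left _ hfa0.ne'
    obtain ⟨q, p, hc, h1, h2⟩ := Int.exists_gcd_one hpos
    exact ⟨_, q, p, by exact_mod_cast hpos, Int.isCoprime_iff_gcd_eq_one.2 hc, h1, h2⟩
  have hq0 : 0 < q := by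
    rw [hq] at hfa0; exact pos_of_mul_pos_left hfa0 hg.le
  have hdvd : q ^ m ∣ h := by
    have h1 : k * q ^ m = h * p ^ m := by
      rw [hq, hp, mul_pow, mul_pow] at hke'
      have : g ^ m ≠ 0 := (pow_pos hg m).ne'
      apply mul_right_cancel₀ this
      linarith
    exact (hco.pow (m := m) (n := m)).dvd_of_dvd_mul_right ⟨k, by linarith⟩
  rcases lt_or_ge (K:ℤ) q with hKq | hKq
  · right
    refine ⟨q.toNat, by omega, ?_⟩
    push_cast
    rw [Int.toNat_of_nonneg hq0.le]
    exact (pow_dvd_pow q hm).trans hdvd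
  · left; left
    have hp0 : 0 < p := by
      by_contra hpn
      have hp1 : p ≠ 0 := by rintro rfl; simp at hp; exact hfu hp
      have hp2 : p ≤ -1 := by omega
      have hfun : f.eval u ≤ -g := by rw [hp]; nlinarith
      have huA : u < A0 := by
        by_contra hc
        have := hA0 u (not_lt.1 hc)
        omega
      have hb := hB u hu huA.le
      have hb2 := neg_abs_le (f.eval u)
      have : g ≤ B := by linarith
      rw [hq] at hfa1
      have h1 : q * g ≤ K * B := by
        apply mul_le_mul hKq this hg.le (by positivity)
      linarith
    have hpq : p < q := by
      rw [hp, hq] at hlt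
      exact lt_of_mul_lt_mul_right hlt hg.le
    simp only [Set.mem_iUnion]
    refine ⟨q, Finset.mem_Icc.2 ⟨hq0, hKq⟩, p, Finset.mem_Ico.2 ⟨hp0, hpq⟩, u, hu, hua, ?_⟩
    rw [hq, hp]; ring

theorem visibility_density_one
    (f : Polynomial ℤ) (hd : 2 ≤ f.natDegree) (hlead : 0 < f.leadingCoeff)
    (hroots : ∃ α β : AlgebraicClosure ℚ, α ≠ β ∧
      Polynomial.aeval α f = 0 ∧ Polynomial.aeval β f = 0)
    (m : ℕ) (hm : 2 ≤ m) :
    Tendsto (fun N : ℕ => ((visibleSet (f ^ m) N).ncard : ℝ) / (N : ℝ) ^ 2)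
      atTop (nhds 1) := by
  classical
  rw [Metric.tendsto_atTop]
  intro ε hε
  obtain ⟨K, hK⟩ := exists_nat_gt (3 / ε)
  have hK0 : (0:ℝ) < K := lt_trans (by positivity) hK
  have hKn : 0 < K := by exact_mod_cast hK0
  obtain ⟨A, hA⟩ := invis f hd hlead m hm K
  obtain ⟨N0, hN0⟩ := ZD_exc f hd hlead hroots K A (ε/3) (by positivity)
  refine ⟨max N0 1, fun N hN => ?_⟩
  have h1 := hN0 N (le_of_max_le_left hN)
  have hN1 : 1 ≤ N := le_of_max_le_right hN
  have hNR : (0:ℝ) < N := by exact_mod_cast hN1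
  have h2 := sq_count K hKn N
  set I := Finset.Icc (1:ℤ) N with hI
  have hIc : I.card = N := by simp [hI]
  set V := (I ×ˢ I).filter (fun z => VisibleAlong (f ^ m) z.1 z.2) with hV
  have hvis : (visibleSet (f ^ m) N).ncard = V.card := by
    rw [← Set.ncard_coe_finset]
    congr 1
    ext ⟨a, h⟩
    simp only [visibleSet, hV, hI, Set.mem_ofPred_eq, Finset.coe_filter, Finset.mem_product, Finset.mem_Icc]
    tauto
  have hsum : V.card + ((I ×ˢ I).filter (fun z => ¬ VisibleAlong (f ^ m) z.1 z.2)).card = N * N := by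
    rw [hV, Finset.card_filter_add_card_filter_not, Finset.card_product, hIc]
  have hbad : ((I ×ˢ I).filter (fun z => ¬ VisibleAlong (f ^ m) z.1 z.2)).card ≤ 
      cnt (excSet f K A) N * N + N * cnt (sqSet K) N := by
    have : (I ×ˢ I).filter (fun z => ¬ VisibleAlong (f ^ m) z.1 z.2) ⊆ 
      (I.filter (· ∈ excSet f K A)) ×ˢ I ∪ I ×ˢ (I.filter (· ∈ sqSet K)) := by
      rintro ⟨a, h⟩ hz
      simp only [Finset.mem_filter, Finset.mem_product, Finset.mem_union] at hz ⊢
      have ha := (Finset.mem_Icc.1 hz.1.1).1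
      have hh := (Finset.mem_Icc.1 hz.1.2).1
      have := hA a h (by omega) (by omega) hz.2
      tauto
    refine (Finset.card_le_card this).trans ((Finset.card_union_le _ _).trans ?_)
    rw [Finset.card_product, Finset.card_product, hIc]
    unfold cnt
    apply le_of_eq
    congr!
  set W := ((I ×ˢ I).filter (fun z => ¬ VisibleAlong (f ^ m) z.1 z.2)).card with hW
  have hbadR : (W : ℝ) ≤ cnt (excSet f K A) N * N + N * cnt (sqSet K) N := by exact_mod_cast hbad
  have hsumR : (V.card : ℝ) + W = N * N := by exact_mod_cast hsum
  have hKe : (N:ℝ) / K ≤ ε / 3 * N := by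
    rw [div_le_iff₀ hK0]
    rw [div_lt_iff₀ hε] at hK
    nlinarith
  have hWle : (W:ℝ) ≤ (2 * ε / 3) * (N:ℝ)^2 := by nlinarith
  have e : (V.card : ℝ) / (N:ℝ)^2 - 1 = - (W / (N:ℝ)^2) := by
    field_simp; linarith
  rw [hvis, Real.dist_eq, e, abs_neg, abs_of_nonneg (by positivity), div_lt_iff₀ (by positivity)]
  have : 0 < (N:ℝ)^2 := by positivity
  nlinarith
end

section
/- Let f ∈ ℤ[x] be a polynomial of degree d ≥ 2 with positive leading coefficient having at least two distinct roots in an algebraic closure of ℚ, let m ≥ 2 be an integer, and let F(x) = f(x)^m. Then there exists an integer δ ≥ 2 such that: (i) for all positive integers s > r, every irreducible factor of G_{s,r}(x,y) = s·f(y) − r·f(x) in ℝ[x,y] has total degree at least δ; and (ii) for every ε > 0 there is a constant C (depending only on F and ε) such that #Invisible_F(N) ≤ C·N^{1 + 1/δ + ε} for all positive integers N. -/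
open Polynomial Filter

/-- The set of lattice points in `[1,N]²` that are invisible along `F`. -/
def invisibleSet (F : Polynomial ℤ) (N : ℕ) : Set (ℤ × ℤ) :=
  {p | 1 ≤ p.1 ∧ p.1 ≤ (N : ℤ) ∧ 1 ≤ p.2 ∧ p.2 ≤ (N : ℤ) ∧ ¬ VisibleAlong F p.1 p.2}

/-- The polynomial `G_{s,r}(x,y) = s·f(y) − r·f(x)`, viewed with real coefficients
as a polynomial in the two variables `X 0 = x` and `X 1 = y`. -/
noncomputable def Gpoly (f : Polynomial ℤ) (s r : ℤ) : MvPolynomial (Fin 2) ℝ :=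
  (s : MvPolynomial (Fin 2) ℝ) * Polynomial.aeval (MvPolynomial.X 1) f -
    (r : MvPolynomial (Fin 2) ℝ) * Polynomial.aeval (MvPolynomial.X 0) f

lemma keyA (p : ℝ[X]) (hd : 2 ≤ p.natDegree)
    (hroots : ∃ α β : ℂ, α ≠ β ∧ aeval α p = 0 ∧ aeval β p = 0)
    (s r : ℝ) (hr : 0 < r) (hrs : r < s) (l u : ℝ) :
    C s * p.comp (C l * X + C u) - C r * p ≠ 0 := by
  intro h
  have h := sub_eq_zero.mp h
  have hp : p ≠ 0 := by rintro rfl; simp at hd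
  have hs : 0 < s := hr.trans hrs
  have hl : l ≠ 0 := by
    rintro rfl
    have := congrArg natDegree h
    rw [natDegree_C_mul hr.ne', natDegree_C_mul hs.ne', natDegree_comp] at this
    simp at this
    omega
  have hlead := congrArg leadingCoeff h
  rw [leadingCoeff_mul, leadingCoeff_mul, leadingCoeff_comp (by rw [natDegree_linear hl]; simp),
    leadingCoeff_linear hl, leadingCoeff_C, leadingCoeff_C] at hlead
  have hld : s * l ^ p.natDegree = r := by
    have : p.leadingCoeff ≠ 0 := by simpa using hp
    apply mul_left_cancel₀ this
    linarith
  have hl1 : |l| < 1 := by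
    by_contra hcon
    push Not at hcon
    have h1 : (1:ℝ) ≤ |l| ^ p.natDegree := one_le_pow₀ hcon
    have h2 : s * |l| ^ p.natDegree = r := by
      have h3 := congrArg abs hld
      rwa [abs_mul, abs_pow, abs_of_pos hs, abs_of_pos hr] at h3
    nlinarith
  have hinv : ∀ z : ℂ, aeval z p = 0 → aeval ((l:ℂ) * z + u) p = 0 := by
    intro z hz
    have h3 := congrArg (aeval z) h
    simp only [map_mul, aeval_C, hz, mul_zero, aeval_comp, map_add, aeval_X] at h3
    simpa [hs.ne'] using h3
  obtain ⟨α, β, hab, ha, hb⟩ := hroots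
  classical
  let T : Finset (ℂ × ℂ) := ((p.aroots ℂ).toFinset ×ˢ (p.aroots ℂ).toFinset).filter
    (fun q => q.1 ≠ q.2)
  have hT : ∀ q : ℂ × ℂ, q ∈ T ↔ (aeval q.1 p = 0 ∧ aeval q.2 p = 0) ∧ q.1 ≠ q.2 := by
    intro q
    simp only [T, Finset.mem_filter, Finset.mem_product, Multiset.mem_toFinset, mem_aroots]
    tauto
  obtain ⟨q, hq, hmin⟩ := T.exists_min_image (fun q => ‖q.1 - q.2‖) ⟨(α, β), by rw [hT]; exact ⟨⟨ha, hb⟩, hab⟩⟩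
  rw [hT] at hq
  have hne : q.1 - q.2 ≠ 0 := sub_ne_zero.mpr hq.2
  have hlC : (l : ℂ) ≠ 0 := by exact_mod_cast hl
  have heq : ((l:ℂ) * q.1 + u) - ((l:ℂ) * q.2 + u) = l * (q.1 - q.2) := by ring
  have := hmin ((l:ℂ) * q.1 + u, (l:ℂ) * q.2 + u) (by
    rw [hT]
    refine ⟨⟨hinv _ hq.1.1, hinv _ hq.1.2⟩, ?_⟩
    rw [← sub_ne_zero]
    simp only
    rw [heq]
    exact mul_ne_zero hlC hne)
  simp only at this
  rw [heq, norm_mul, Complex.norm_real, Real.norm_eq_abs] at this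
  have : 0 < ‖q.1 - q.2‖ := norm_pos_iff.mpr hne
  nlinarith

lemma rootsC (f : ℤ[X]) (hroots : ∃ α β : AlgebraicClosure ℚ, α ≠ β ∧
      Polynomial.aeval α f = 0 ∧ Polynomial.aeval β f = 0) :
    ∃ α β : ℂ, α ≠ β ∧ aeval α (f.map (Int.castRingHom ℝ)) = 0 ∧
      aeval β (f.map (Int.castRingHom ℝ)) = 0 := by
  obtain ⟨α, β, hab, ha, hb⟩ := hroots
  have : Algebra.IsAlgebraic ℚ (AlgebraicClosure ℚ) := by
    convert AlgebraicClosure.isAlgebraic ℚ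
    · rfl
    · exact Subsingleton.elim _ _
  let φ : AlgebraicClosure ℚ →ₐ[ℚ] ℂ := IsAlgClosed.lift
  have key : ∀ z, aeval z f = 0 → aeval (φ z) (f.map (Int.castRingHom ℝ)) = 0 := by
    intro z hz
    have h1 : aeval (φ z) (f.map (Int.castRingHom ℝ)) = aeval (φ z) f := by
      exact aeval_map_algebraMap ℝ (φ z) f
    rw [h1]
    have := aeval_algHom_apply (φ.restrictScalars ℤ) z f
    simp only [AlgHom.coe_restrictScalars'] at this
    rw [this, hz, map_zero]
  exact ⟨φ α, φ β, fun h => hab (φ.toRingHom.injective h), key α ha, key β hb⟩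

lemma linform (g : MvPolynomial (Fin 2) ℝ) (hg : g.totalDegree ≤ 1) :
    ∃ a b c : ℝ, g = MvPolynomial.C a + MvPolynomial.C b * MvPolynomial.X 0
      + MvPolynomial.C c * MvPolynomial.X 1 := by
  classical
  refine ⟨g.coeff 0, g.coeff (Finsupp.single 0 1), g.coeff (Finsupp.single 1 1), ?_⟩
  ext n
  simp only [MvPolynomial.coeff_add, MvPolynomial.coeff_C, MvPolynomial.coeff_C_mul,
    MvPolynomial.coeff_X]
  by_cases h0 : n = 0
  · subst h0; simp
  by_cases h1 : n = Finsupp.single 0 1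
  · subst h1; simp [Finsupp.single_left_inj, eq_comm]
  by_cases h2 : n = Finsupp.single 1 1
  · subst h2; simp [Finsupp.single_left_inj, eq_comm]
  rw [if_neg (Ne.symm h0), if_neg (Ne.symm h1), if_neg (Ne.symm h2)]
  simp only [mul_zero, add_zero]
  by_contra hc
  have hmem : n ∈ g.support := MvPolynomial.mem_support_iff.mpr hc
  have := (MvPolynomial.le_totalDegree hmem).trans hg
  rw [Finsupp.sum_fintype _ _ (by simp), Fin.sum_univ_two] at this
  have e0 : n 0 ≠ 0 ∨ n 1 ≠ 0 := by
    by_contra hh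
    push Not at hh
    apply h0; ext i; fin_cases i <;> simp [hh]
  have : (n 0 = 1 ∧ n 1 = 0) ∨ (n 0 = 0 ∧ n 1 = 1) := by omega
  rcases this with hh | hh
  · apply h1; ext i; fin_cases i <;> simp [hh]
  · apply h2; ext i; fin_cases i <;> simp [hh]

lemma partOne (f : ℤ[X]) (hd : 2 ≤ f.natDegree)
    (hroots : ∃ α β : AlgebraicClosure ℚ, α ≠ β ∧
      Polynomial.aeval α f = 0 ∧ Polynomial.aeval β f = 0) (s r : ℤ) (hr : 0 < r) (hrs : r < s)
    (g : MvPolynomial (Fin 2) ℝ) (hg : Irreducible g) (hdiv : g ∣ Gpoly f s r) :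
    2 ≤ g.totalDegree := by
  by_contra hlt
  obtain ⟨a, b, c, hgeq⟩ := linform g (by omega)
  have hdp : (f.map (Int.castRingHom ℝ)).natDegree = f.natDegree :=
    natDegree_map_eq_of_injective (by exact Int.cast_injective) f
  have hev : ∀ P : ℝ[X], aeval P f = (f.map (Int.castRingHom ℝ)).comp P := by
    intro P
    rw [← aeval_map_algebraMap ℝ P f, comp_eq_aeval]; rfl
  have hG : ∀ P Q : ℝ[X], MvPolynomial.aeval ![P, Q] (Gpoly f s r) =
      C (s:ℝ) * (f.map (Int.castRingHom ℝ)).comp Q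
        - C (r:ℝ) * (f.map (Int.castRingHom ℝ)).comp P := by
    intro P Q
    have h1 : ∀ i, MvPolynomial.aeval ![P, Q] (aeval (MvPolynomial.X i : MvPolynomial (Fin 2) ℝ) f)
        = aeval (![P, Q] i) f := by
      intro i
      have := aeval_algHom_apply ((MvPolynomial.aeval ![P, Q] : MvPolynomial (Fin 2) ℝ →ₐ[ℝ] ℝ[X]).restrictScalars ℤ) (MvPolynomial.X i) f
      simp only [AlgHom.coe_restrictScalars', MvPolynomial.aeval_X] at this
      exact this.symm
    simp only [Gpoly, map_sub, map_mul, h1, map_intCast]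
    simp [hev]
  have hsR : (0:ℝ) < s := by exact_mod_cast hr.trans hrs
  have hz : ∀ P Q : ℝ[X], MvPolynomial.aeval ![P, Q] g = 0 →
      MvPolynomial.aeval ![P, Q] (Gpoly f s r) = 0 := by
    intro P Q h
    obtain ⟨k, hk⟩ := hdiv
    rw [hk, map_mul, h, zero_mul]
  by_cases hc : c = 0
  · by_cases hb : b = 0
    · subst hc hb
      simp at hgeq
      have ha : a ≠ 0 := by rintro rfl; exact hg.ne_zero (by simpa using hgeq)
      apply hg.not_isUnit
      rw [hgeq]
      exact (isUnit_iff_ne_zero.mpr ha).map MvPolynomial.C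
    · have := hz (C (-a/b)) X (by
        
        rw [hgeq, hc]
        have e1 : C b * C (-a/b) = -C a := by rw [← C_mul, ← C_neg]; congr 1; field_simp
        simp
        linear_combination e1)
      rw [hG] at this
      have h2 := congrArg natDegree (sub_eq_zero.mp this)
      rw [comp_X, natDegree_C_mul hsR.ne', comp_C, ← C_mul, natDegree_C, hdp] at h2
      omega
  · have := hz X (C (-b/c) * X + C (-a/c)) (by
      rw [hgeq]
      have e1 : C c * C (-b/c) = -C b := by rw [← C_mul, ← C_neg]; congr 1; field_simp
      have e2 : C c * C (-a/c) = -C a := by rw [← C_mul, ← C_neg]; congr 1; field_simp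
      simp
      linear_combination X * e1 + e2)
    rw [hG, comp_X] at this
    exact keyA _ (by rw [hdp]; exact hd) (rootsC f hroots) s r (by exact_mod_cast hr)
      (by exact_mod_cast hrs) _ _ this

lemma decomp (p : ℝ[X]) (hd : 2 ≤ p.natDegree) :
    ∃ b K : ℝ, 0 < K ∧ ∀ t : ℝ, 1 ≤ t →
      |p.eval (t - b) - p.leadingCoeff * t ^ p.natDegree| ≤ K * t ^ (p.natDegree - 2) := by
  obtain ⟨n, hn⟩ : ∃ n, p.natDegree = n + 2 := ⟨p.natDegree - 2, by omega⟩
  have hp : p ≠ 0 := by rintro rfl; simp at hd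
  have hl : p.coeff (n+2) ≠ 0 := by rw [← hn]; simpa using hp
  have hn2 : ((n:ℝ) + 2) ≠ 0 := by positivity
  set b : ℝ := p.coeff (n+1) / ((n+2) * p.coeff (n+2)) with hb
  set q := taylor (-b) p with hq
  have hqd : q.natDegree = n + 2 := by rw [hq, natDegree_taylor, hn]
  have hq2 : q.coeff (n+2) = p.leadingCoeff := by
    rw [← hn, hq, coeff_taylor_natDegree]
  have hq1 : q.coeff (n+1) = 0 := by
    rw [hq, taylor_coeff, eval_eq_sum_range' (n := 2)]
    · simp only [Finset.sum_range_succ, Finset.sum_range_zero, hasseDeriv_coeff]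
      have e1 : (0 + (n+1)).choose (n+1) = 1 := by simp
      have e2 : (1 + (n+1)).choose (n+1) = n + 2 := by
        rw [show 1 + (n+1) = (n+1)+1 by ring, Nat.choose_succ_self_right]
      rw [e1, e2, show 0 + (n+1) = n+1 by ring, show 1 + (n+1) = n+2 by ring, hb]
      push_cast
      field_simp
      ring
    · have := natDegree_hasseDeriv_le p (n+1)
      omega
  refine ⟨b, (∑ i ∈ Finset.range (n+1), |q.coeff i|) + 1, by positivity, ?_⟩
  intro t ht
  have he : p.eval (t - b) = q.eval t := by rw [hq, taylor_eval]; ring_nf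
  rw [he, eval_eq_sum_range, hqd, Finset.sum_range_succ, Finset.sum_range_succ, hq1, hq2, hn]
  simp only [zero_mul, add_zero, add_sub_cancel_right, Nat.add_sub_cancel]
  calc |∑ i ∈ Finset.range (n+1), q.coeff i * t^i| ≤ ∑ i ∈ Finset.range (n+1), |q.coeff i * t^i| :=
        Finset.abs_sum_le_sum_abs _ _
    _ ≤ ∑ i ∈ Finset.range (n+1), |q.coeff i| * t^n := by
        apply Finset.sum_le_sum
        intro i hi
        rw [abs_mul, abs_of_nonneg (by positivity : (0:ℝ) ≤ t^i)]
        gcongr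
        have := Finset.mem_range.mp hi; omega
    _ = (∑ i ∈ Finset.range (n+1), |q.coeff i|) * t^n := by rw [Finset.sum_mul]
    _ ≤ _ := by gcongr; linarith

lemma pow_gap (n : ℕ) (y z : ℝ) (hy : 0 < y) (hz : 0 < z) :
    |y - z| * (max y z) ^ (n+1) ≤ |y^(n+2) - z^(n+2)| := by
  wlog h : z ≤ y generalizing y z
  · have := this z y hz hy (by linarith)
    rwa [abs_sub_comm, max_comm, abs_sub_comm (y^(n+2))]
  rw [max_eq_left h, abs_of_nonneg (by linarith),
    abs_of_nonneg (by have := pow_le_pow_left₀ hz.le h (n+2); linarith)]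
  have := pow_le_pow_left₀ hz.le h (n+1)
  have : z * z^(n+1) ≤ z * y^(n+1) := by gcongr
  have e1 : y^(n+2) = y * y^(n+1) := by ring
  have e2 : z^(n+2) = z * z^(n+1) := by ring
  rw [e1, e2]
  linarith

/-- near-linearity -/
lemma nearline (p : ℝ[X]) (hd : 2 ≤ p.natDegree) (hlead : 0 < p.leadingCoeff) :
    ∃ b W U : ℝ, 0 < W ∧ 1 ≤ U ∧ ∀ s r : ℝ, 0 < r → r < s → ∃ α : ℝ, 0 < α ∧ α ≤ 1 ∧ r / s ≤ α ^ 2 ∧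
      ∀ x y : ℝ, U ≤ x → U ≤ y → s * p.eval y = r * p.eval x →
        |(y + b) - α * (x + b)| ≤ W / (α * x) := by
  obtain ⟨b, K, hK, hdec⟩ := decomp p hd
  obtain ⟨n, hn⟩ : ∃ n, p.natDegree = n + 2 := ⟨p.natDegree - 2, by omega⟩
  rw [hn] at hdec
  set a := p.leadingCoeff with ha
  refine ⟨b, 4 * K / a, 2 * |b| + 2, by positivity, by have := abs_nonneg b; linarith, ?_⟩
  · 
    intro s r hr hrs
    have hs := hr.trans hrs
    have hrs0 : 0 < r / s := by positivity
    have hrs1 : r / s ≤ 1 := by rw [div_le_one hs]; exact hrs.le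
    set α := (r/s) ^ ((1:ℝ)/((n+2:ℕ):ℝ)) with hα
    have hαpos : 0 < α := Real.rpow_pos_of_pos hrs0 _
    have hα1 : α ≤ 1 := Real.rpow_le_one hrs0.le hrs1 (by positivity)
    have hαd : α ^ (n+2) = r / s := by
      rw [hα, ← Real.rpow_natCast, ← Real.rpow_mul hrs0.le, one_div, inv_mul_cancel₀ (by positivity), Real.rpow_one]
    refine ⟨α, hαpos, hα1, ?_, ?_⟩
    · rw [← hαd]; exact pow_le_pow_of_le_one hαpos.le hα1 (by omega)
    intro x y hx hy heq
    have hbb := neg_abs_le b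
    have hbb2 := abs_nonneg b
    set X := x + b with hX
    set Y := y + b with hY
    have hX1 : 1 ≤ X := by linarith
    have hY1 : 1 ≤ Y := by linarith
    have hXx : x / 2 ≤ X := by linarith
    have dX := hdec X hX1
    have dY := hdec Y hY1
    rw [show X - b = x by simp [hX]] at dX
    rw [show Y - b = y by simp [hY]] at dY
    simp only [Nat.add_sub_cancel] at dX dY
    have hy' : p.eval y = α ^ (n+2) * p.eval x := by
      rw [hαd]; field_simp; linarith
    set Z := α * X with hZ
    have hZ0 : 0 < Z := by positivity
    have hgap := pow_gap n Y Z (by linarith) hZ0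
    set M := max Y Z with hM
    have hM0 : 0 < M := lt_of_lt_of_le hZ0 (le_max_right _ _)
    have h1 : |α^(n+2) * (p.eval x - a * X^(n+2))| ≤ K * M^n := by
      rw [abs_mul, abs_of_pos (by positivity)]
      calc α^(n+2) * |p.eval x - a * X^(n+2)| ≤ α^(n+2) * (K * X^n) := by gcongr
        _ = α^2 * (K * Z^n) := by rw [hZ, mul_pow]; ring
        _ ≤ 1 * (K * M^n) := by
          gcongr
          · exact pow_le_one₀ hαpos.le hα1
          · exact le_max_right _ _
        _ = _ := by ring
    have h2 : |p.eval y - a * Y^(n+2)| ≤ K * M^n := by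
      refine dY.trans ?_
      gcongr
      exact le_max_left _ _
    have h3 : a * |Y^(n+2) - Z^(n+2)| ≤ 2 * K * M^n := by
      have ea : a * |Y^(n+2) - Z^(n+2)| = |a * (Y^(n+2) - Z^(n+2))| := by
        rw [abs_mul, abs_of_pos hlead]
      rw [ea]
      have : a * (Y^(n+2) - Z^(n+2)) = α^(n+2) * (p.eval x - a * X^(n+2)) - (p.eval y - a * Y^(n+2)) := by
        rw [hy', hZ, mul_pow]; ring
      rw [this]
      refine (abs_sub _ _).trans ?_
      linarith
    have h4 : (a * |Y - Z| * M) * M^n ≤ 2 * K * M^n := by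
      calc (a * |Y - Z| * M) * M^n = a * (|Y - Z| * M^(n+1)) := by ring
        _ ≤ a * |Y^(n+2) - Z^(n+2)| := by gcongr
        _ ≤ _ := h3
    have h5 : a * |Y - Z| * M ≤ 2 * K := le_of_mul_le_mul_right h4 (by positivity)
    have hx0 : 0 < x := by linarith
    rw [le_div_iff₀ (by positivity), le_div_iff₀ hlead]
    have h6 : α * x ≤ 2 * M := by
      have : α * (x/2) ≤ Z := by rw [hZ]; gcongr
      have := le_max_right Y Z
      linarith
    have h7 : |Y - Z| * (α * x) * a ≤ |Y - Z| * (2 * M) * a := by gcongr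
    linarith

lemma lineCount (f : ℤ[X]) (hd : 2 ≤ f.natDegree)
    (hroots : ∃ α β : AlgebraicClosure ℚ, α ≠ β ∧
      Polynomial.aeval α f = 0 ∧ Polynomial.aeval β f = 0) (s r : ℤ) (hr : 0 < r) (hrs : r < s)
    (T : Finset ℤ) (y : ℤ → ℤ) (hy : ∀ x ∈ T, s * f.eval (y x) = r * f.eval x)
    (hcol : ∀ p ∈ T, ∀ q ∈ T, ∀ x ∈ T, (q - p) * (y x - y p) = (x - p) * (y q - y p)) :
    T.card ≤ f.natDegree := by
  by_cases h1 : T.card ≤ 1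
  · omega
  push Not at h1
  obtain ⟨p, hp, q, hq, hpq⟩ := Finset.one_lt_card.mp h1
  set g := f.map (Int.castRingHom ℝ) with hg
  have hdp : g.natDegree = f.natDegree :=
    natDegree_map_eq_of_injective (by exact Int.cast_injective) f
  have hev : ∀ z : ℤ, g.eval (z:ℝ) = ((f.eval z : ℤ) : ℝ) := by
    intro z; rw [hg]; exact eval_intCast_map (Int.castRingHom ℝ) f z
  set l : ℝ := ((y q - y p : ℤ) : ℝ) / ((q - p : ℤ) : ℝ) with hl
  have hqp : ((q - p : ℤ) : ℝ) ≠ 0 := by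
    exact_mod_cast sub_ne_zero.mpr (Ne.symm hpq)
  set P : ℝ[X] := C (s:ℝ) * g.comp (C l * X + C ((y p : ℝ) - l * p)) - C (r:ℝ) * g with hP
  have hP0 : P ≠ 0 := keyA g (by rw [hdp]; exact hd) (rootsC f hroots) s r
    (by exact_mod_cast hr) (by exact_mod_cast hrs) _ _
  have hPd : P.natDegree ≤ f.natDegree := by
    rw [hP]
    refine (natDegree_sub_le _ _).trans (max_le ?_ ?_)
    · refine (natDegree_C_mul_le _ _).trans ?_
      rw [natDegree_comp, hdp]
      have := natDegree_linear_le (a := l) (b := (y p : ℝ) - l * p)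
      nlinarith
    · refine (natDegree_C_mul_le _ _).trans ?_
      rw [hdp]
  classical
  have hsub : T.image (fun x : ℤ => (x:ℝ)) ⊆ P.roots.toFinset := by
    intro w hw
    obtain ⟨x, hx, rfl⟩ := Finset.mem_image.mp hw
    rw [Multiset.mem_toFinset, mem_roots hP0, IsRoot.def, hP]
    simp only [eval_sub, eval_mul, eval_C, eval_comp, eval_add, eval_X]
    have e : l * (x:ℝ) + ((y p : ℝ) - l * p) = ((y x : ℤ) : ℝ) := by
      have := hcol p hp q hq x hx
      have h2 : ((q - p : ℤ) : ℝ) * ((y x - y p : ℤ) : ℝ) = ((x - p : ℤ) : ℝ) * ((y q - y p : ℤ) : ℝ) := by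
        exact_mod_cast this
      have h3 : ((y x - y p : ℤ) : ℝ) = l * ((x - p : ℤ) : ℝ) := by
        rw [hl]; field_simp; linarith
      push_cast at h3
      linarith
    rw [e, hev, hev, sub_eq_zero]
    exact_mod_cast hy x hx
  calc T.card = (T.image (fun x : ℤ => (x:ℝ))).card :=
        (Finset.card_image_of_injective _ Int.cast_injective).symm
    _ ≤ P.roots.toFinset.card := Finset.card_le_card hsub
    _ ≤ Multiset.card P.roots := Multiset.toFinset_card_le _
    _ ≤ P.natDegree := card_roots' P
    _ ≤ _ := hPd

lemma countD (f : ℤ[X]) (hd : 2 ≤ f.natDegree) (hlead : 0 < f.leadingCoeff)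
    (hroots : ∃ α β : AlgebraicClosure ℚ, α ≠ β ∧
      Polynomial.aeval α f = 0 ∧ Polynomial.aeval β f = 0) :
    ∃ U : ℤ, ∃ K : ℝ, 1 ≤ U ∧ 0 < K ∧ ∀ N : ℕ, 0 < N → ∀ s r : ℤ, 0 < r → r < s → ∀ S : Finset ℤ,
      (∀ a ∈ S, U ≤ a ∧ a ≤ N ∧ N ≤ a * a ∧ ∃ u, U ≤ u ∧ s * f.eval u = r * f.eval a) →
      (S.card : ℝ) ≤ K * √N * √(s/r) := by
  set g := f.map (Int.castRingHom ℝ) with hg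
  have hdp : g.natDegree = f.natDegree :=
    natDegree_map_eq_of_injective (by exact Int.cast_injective) f
  have hev : ∀ z : ℤ, g.eval (z:ℝ) = ((f.eval z : ℤ) : ℝ) := by
    intro z; rw [hg]; exact eval_intCast_map (Int.castRingHom ℝ) f z
  have hgl : 0 < g.leadingCoeff := by
    rw [hg, leadingCoeff_map_of_injective (by exact Int.cast_injective)]
    simpa using hlead
  obtain ⟨b, W, U, hW, hU, hmain⟩ := nearline g (by rw [hdp]; exact hd) hgl
  refine ⟨⌈U⌉, f.natDegree * (8 * W + 1), ?_, by positivity, ?_⟩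
  · exact_mod_cast hU.trans (Int.le_ceil U)
  intro N hN s r hr hrs S hS
  have hr' : (0:ℝ) < r := by exact_mod_cast hr
  have hrs' : (r:ℝ) < s := by exact_mod_cast hrs
  have hs' : (0:ℝ) < s := hr'.trans hrs'
  obtain ⟨α, hα0, hα1, hα2, hnear⟩ := hmain s r hr' hrs'
  have hN' : (1:ℝ) ≤ N := by exact_mod_cast hN
  have hsN : 1 ≤ √(N:ℝ) := Real.one_le_sqrt.mpr hN'
  have hsNN : √(N:ℝ) * √(N:ℝ) = N := Real.mul_self_sqrt (by linarith)
  choose! y hyU hyeq using fun a ha => (hS a ha).2.2.2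
  set w : ℝ := W / (α * √N) with hw
  have hw0 : 0 < w := by positivity
  have hstrip : ∀ a ∈ S, |((y a : ℝ) + b) - α * ((a:ℝ) + b)| ≤ w := by
    intro a ha
    obtain ⟨h1, h2, h3, -⟩ := hS a ha
    have hUa : U ≤ a := (Int.le_ceil U).trans (by exact_mod_cast h1)
    have hUy : U ≤ y a := (Int.le_ceil U).trans (by exact_mod_cast hyU a ha)
    refine (hnear a (y a) hUa hUy ?_).trans ?_
    · rw [hev, hev]; exact_mod_cast hyeq a ha
    · rw [hw]
      have : √(N:ℝ) ≤ a := by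
        apply Real.sqrt_le_iff.mpr
        refine ⟨by linarith, ?_⟩
        rw [sq]; exact_mod_cast h3
      gcongr
  set L : ℝ := 1 / (8 * w) with hL
  have hL0 : 0 < L := by positivity
  have hLw : L * w = 1 / 8 := by rw [hL]; field_simp
  have hcard := Finset.card_le_mul_card_image (f := fun a : ℤ => ⌊(a:ℝ) / L⌋₊) S f.natDegree (by
    intro k hk
    apply lineCount f hd hroots s r hr hrs _ y
    · intro x hx
      exact hyeq x (Finset.mem_filter.mp hx).1
    intro p hp q hq x hx
    obtain ⟨hp, hpk⟩ := Finset.mem_filter.mp hp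
    obtain ⟨hq, hqk⟩ := Finset.mem_filter.mp hq
    obtain ⟨hx, hxk⟩ := Finset.mem_filter.mp hx
    have hclose : ∀ c ∈ S, ∀ e ∈ S, ⌊(c:ℝ) / L⌋₊ = k → ⌊(e:ℝ) / L⌋₊ = k → |(c:ℝ) - e| ≤ L := by
      have hbd : ∀ c ∈ S, ⌊(c:ℝ) / L⌋₊ = k → k * L ≤ c ∧ (c:ℝ) < (k + 1) * L := by
        intro c hc hck
        have hc0 : (0:ℝ) ≤ c := by
          have hUa : U ≤ c := (Int.le_ceil U).trans (by exact_mod_cast (hS c hc).1)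
          linarith
        have h0 : 0 ≤ (c:ℝ)/L := by positivity
        have := (Nat.floor_eq_iff h0).mp hck
        rw [le_div_iff₀ hL0, div_lt_iff₀ hL0] at this
        exact this
      intro c hc e he hck hek
      have h1 := hbd c hc hck
      have h2 := hbd e he hek
      rw [abs_le]; constructor <;> nlinarith
    have c1 := hclose q hq p hp hqk hpk
    have c2 := hclose x hx p hp hxk hpk
    set E : ℤ → ℝ := fun a => ((y a : ℝ) + b) - α * ((a:ℝ) + b) with hE
    have ep : |E p| ≤ w := hstrip p hp
    have eq : |E q| ≤ w := hstrip q hq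
    have ex : |E x| ≤ w := hstrip x hx
    have hdet : (((q - p) * (y x - y p) - (x - p) * (y q - y p) : ℤ) : ℝ)
        = ((q:ℝ) - p) * (E x - E p) - ((x:ℝ) - p) * (E q - E p) := by
      simp only [hE]; push_cast; ring
    have b1 : |((q:ℝ) - p) * (E x - E p)| ≤ L * (2 * w) := by
      rw [abs_mul]
      gcongr
      refine (abs_sub _ _).trans ?_
      linarith
    have b2 : |((x:ℝ) - p) * (E q - E p)| ≤ L * (2 * w) := by
      rw [abs_mul]
      gcongr
      refine (abs_sub _ _).trans ?_
      linarith
    have hlt : |(((q - p) * (y x - y p) - (x - p) * (y q - y p) : ℤ) : ℝ)| < 1 := by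
      rw [hdet]
      refine lt_of_le_of_lt (abs_sub _ _) ?_
      linarith
    have : |((q - p) * (y x - y p) - (x - p) * (y q - y p) : ℤ)| < 1 := by exact_mod_cast hlt
    have := Int.abs_lt_one_iff.mp this
    linarith)
  have himg : (S.image (fun a : ℤ => ⌊(a:ℝ) / L⌋₊)).card ≤ ⌊(N:ℝ)/L⌋₊ + 1 := by
    rw [← Finset.card_range (⌊(N:ℝ)/L⌋₊ + 1)]
    apply Finset.card_le_card
    intro k hk
    obtain ⟨a, ha, rfl⟩ := Finset.mem_image.mp hk
    rw [Finset.mem_range, Nat.lt_succ_iff]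
    apply Nat.floor_le_floor
    gcongr
    exact_mod_cast (hS a ha).2.1
  have hfl : (⌊(N:ℝ)/L⌋₊ : ℝ) ≤ N / L := Nat.floor_le (by positivity)
  have hNL : N / L = 8 * W * √N * (1/α) := by
    rw [hL, hw]
    field_simp
    linarith
  have hαs : 1 / α ≤ √(s/r) := by
    apply Real.le_sqrt_of_sq_le
    rw [div_pow, one_pow, div_le_div_iff₀ (by positivity) hr']
    rw [div_le_iff₀ hs'] at hα2
    linarith
  have hone : 1 ≤ √((s:ℝ)/r) := by
    refine le_trans ?_ hαs
    rw [le_div_iff₀ hα0]; linarith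
  have hc2 : (S.card : ℝ) ≤ f.natDegree * (⌊(N:ℝ)/L⌋₊ + 1) := by
    exact_mod_cast hcard.trans (Nat.mul_le_mul_left _ himg)
  refine hc2.trans ?_
  rw [mul_assoc, mul_assoc]
  gcongr
  have h8 : 8 * W * √N * (1/α) ≤ 8 * W * √N * √(s/r) := by gcongr
  have h9 : 1 ≤ √(N:ℝ) * √(s/r) := one_le_mul_of_one_le_of_one_le hsN hone
  nlinarith

lemma exCount (f : ℤ[X]) (hd : 2 ≤ f.natDegree) (U s r : ℤ) (hr : 0 < r) (S : Finset ℤ)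
    (hS : ∀ a ∈ S, ∃ u, 1 ≤ u ∧ u ≤ U ∧ s * |f.eval u| = r * f.eval a) :
    S.card ≤ f.natDegree * U.toNat := by
  choose! y hy1 hyU hyeq using hS
  have := Finset.card_le_mul_card_image (f := y) S f.natDegree (by
    intro u hu
    set P : ℤ[X] := C r * f - C (s * |f.eval u|) with hP
    have hPd : P.natDegree = f.natDegree := by
      rw [hP, natDegree_sub_C, natDegree_C_mul hr.ne']
    have hP0 : P ≠ 0 := by
      intro h; rw [h] at hPd; simp at hPd; omega
    calc _ ≤ P.roots.toFinset.card := by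
          apply Finset.card_le_card
          intro a ha
          obtain ⟨haS, hau⟩ := Finset.mem_filter.mp ha
          rw [Multiset.mem_toFinset, mem_roots hP0, IsRoot.def, hP]
          simp only [eval_sub, eval_mul, eval_C]
          have := hyeq a haS
          rw [hau] at this
          linarith
      _ ≤ Multiset.card P.roots := Multiset.toFinset_card_le _
      _ ≤ P.natDegree := card_roots' P
      _ = _ := hPd)
  refine this.trans (Nat.mul_le_mul_left _ ?_)
  calc _ ≤ (Finset.Icc 1 U).card := by
        apply Finset.card_le_card
        intro u hu
        obtain ⟨a, ha, rfl⟩ := Finset.mem_image.mp hu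
        exact Finset.mem_Icc.mpr ⟨hy1 a ha, hyU a ha⟩
    _ = U.toNat := by simp

lemma growth (f : ℤ[X]) (hd : 2 ≤ f.natDegree) (hlead : 0 < f.leadingCoeff) :
    ∃ A : ℤ, 1 ≤ A ∧ ∀ a : ℤ, A ≤ a → 0 < f.eval a ∧ ∀ u : ℤ, 1 ≤ u → u < a →
      |f.eval u| < f.eval a := by
  set g := f.map (Int.castRingHom ℝ) with hg
  have hdp : g.natDegree = f.natDegree :=
    natDegree_map_eq_of_injective (by exact Int.cast_injective) f
  have hev : ∀ z : ℤ, g.eval (z:ℝ) = ((f.eval z : ℤ) : ℝ) := by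
    intro z; rw [hg]; exact eval_intCast_map (Int.castRingHom ℝ) f z
  have hgl : 0 < g.leadingCoeff := by
    rw [hg, leadingCoeff_map_of_injective (by exact Int.cast_injective)]
    simpa using hlead
  have hdd : g.derivative.natDegree = g.natDegree - 1 := natDegree_derivative g
  have hdl : g.derivative.leadingCoeff = g.leadingCoeff * g.natDegree := by
    rw [leadingCoeff, hdd, coeff_derivative, leadingCoeff]
    have : g.natDegree - 1 + 1 = g.natDegree := by omega
    rw [this]
    congr 1
    have h3 : ((g.natDegree - 1 + 1 : ℕ) : ℝ) = g.natDegree := by rw [this]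
    push_cast at h3
    exact h3
  have t1 : Tendsto (fun x => g.eval x) atTop atTop :=
    tendsto_atTop_of_leadingCoeff_nonneg g (natDegree_pos_iff_degree_pos.mp (by omega)) hgl.le
  have t2 : Tendsto (fun x => g.derivative.eval x) atTop atTop :=
    tendsto_atTop_of_leadingCoeff_nonneg _ (natDegree_pos_iff_degree_pos.mp (by omega))
      (by rw [hdl]; positivity)
  obtain ⟨A1, hA1⟩ := eventually_atTop.mp (t2.eventually_gt_atTop 0)
  have hmono : StrictMonoOn (fun x => g.eval x) (Set.Ici A1) := by
    apply strictMonoOn_of_deriv_pos (convex_Ici _) g.continuous.continuousOn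
    intro x hx
    rw [interior_Ici] at hx
    rw [Polynomial.deriv]
    exact hA1 x (le_of_lt hx)
  set M : ℤ := ⌈A1⌉ ⊔ 1 with hM
  set B : ℤ := ∑ u ∈ Finset.Icc 1 M, |f.eval u| with hB
  have hBu : ∀ u, 1 ≤ u → u ≤ M → |f.eval u| ≤ B := by
    intro u h1 h2
    exact Finset.single_le_sum (f := fun u => |f.eval u|) (fun i _ => abs_nonneg _)
      (Finset.mem_Icc.mpr ⟨h1, h2⟩)
  have hB0 : 0 ≤ B := Finset.sum_nonneg fun i _ => abs_nonneg _
  obtain ⟨A2, hA2⟩ := eventually_atTop.mp (t1.eventually_gt_atTop (B:ℝ))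
  refine ⟨M ⊔ ⌈A2⌉, le_sup_of_le_left le_sup_right, ?_⟩
  intro a ha
  have haM : M ≤ a := le_trans le_sup_left ha
  have ha2 : A2 ≤ a := (Int.le_ceil A2).trans (by exact_mod_cast le_trans le_sup_right ha)
  have hM1 : ∀ z : ℤ, M ≤ z → A1 ≤ z := fun z hz =>
    (Int.le_ceil A1).trans (by exact_mod_cast le_trans le_sup_left hz)
  have hfa : B < f.eval a := by
    have := hA2 a ha2
    rw [hev] at this; exact_mod_cast this
  refine ⟨by omega, ?_⟩
  intro u hu1 hua
  by_cases huM : u ≤ M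
  · exact lt_of_le_of_lt (hBu u hu1 huM) hfa
  · push Not at huM
    have hm : ∀ c e : ℤ, M ≤ c → c < e → f.eval c < f.eval e := by
      intro c e hc hce
      have := hmono (Set.mem_Ici.mpr (hM1 c hc)) (Set.mem_Ici.mpr (hM1 e (by omega)))
        (by exact_mod_cast hce : (c:ℝ) < e)
      simp only [hev] at this
      exact_mod_cast this
    have h1 := hm u a huM.le hua
    have h2 := hm M u le_rfl huM
    have h3 := hBu M le_sup_right le_rfl
    rw [abs_le] at h3
    rw [abs_lt]
    constructor <;> omega

lemma countG (f : ℤ[X]) (hd : 2 ≤ f.natDegree) (hlead : 0 < f.leadingCoeff)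
    (hroots : ∃ α β : AlgebraicClosure ℚ, α ≠ β ∧
      Polynomial.aeval α f = 0 ∧ Polynomial.aeval β f = 0) :
    ∃ K : ℝ, 0 < K ∧ ∀ N : ℕ, 0 < N → ∀ s r : ℤ, 0 < r → r < s → ∀ S : Finset ℤ,
      (∀ a ∈ S, a ≤ N ∧ N ≤ a * a ∧ ∃ u, 1 ≤ u ∧ u < a ∧ s * |f.eval u| = r * f.eval a) →
      (S.card : ℝ) ≤ K * √N * √(s/r) := by
  obtain ⟨A, hA, hgr⟩ := growth f hd hlead
  obtain ⟨U, K, hU, hK, hcount⟩ := countD f hd hlead hroots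
  set V : ℤ := A ⊔ U with hV
  have hVA : A ≤ V := le_sup_left
  have hVU : U ≤ V := le_sup_right
  refine ⟨K + f.natDegree * V.toNat, by positivity, ?_⟩
  intro N hN s r hr hrs S hS
  classical
  set P : ℤ → Prop := fun a => ∃ u, V ≤ u ∧ u < a ∧ s * f.eval u = r * f.eval a with hP
  have hN' : (1:ℝ) ≤ N := by exact_mod_cast hN
  have hsN : 1 ≤ √(N:ℝ) := Real.one_le_sqrt.mpr hN'
  have hr' : (0:ℝ) < r := by exact_mod_cast hr
  have hrs' : (r:ℝ) < s := by exact_mod_cast hrs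
  have hone : 1 ≤ √((s:ℝ)/r) := by
    rw [Real.one_le_sqrt, le_div_iff₀ hr']; linarith
  have h1 := hcount N hN s r hr hrs (S.filter P) (by
    intro a ha
    obtain ⟨haS, u, hu1, hu2, hu3⟩ := Finset.mem_filter.mp ha
    obtain ⟨g1, g2, -⟩ := hS a haS
    exact ⟨by omega, g1, g2, u, by omega, hu3⟩)
  have h2 := exCount f hd V s r hr (S.filter (fun a => ¬ P a)) (by
    intro a ha
    obtain ⟨haS, hnP⟩ := Finset.mem_filter.mp ha
    obtain ⟨g1, g2, u, hu1, hu2, hu3⟩ := hS a haS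
    refine ⟨u, hu1, ?_, hu3⟩
    by_contra hcon
    push Not at hcon
    refine hnP ⟨u, hcon.le, hu2, ?_⟩
    rwa [abs_of_pos (hgr u (by omega)).1] at hu3)
  have h3 := Finset.card_filter_add_card_filter_not (s := S) P
  have h4 : (S.card : ℝ) = (S.filter P).card + (S.filter (fun a => ¬ P a)).card := by
    exact_mod_cast h3.symm
  have h5 : ((S.filter (fun a => ¬ P a)).card : ℝ) ≤ f.natDegree * V.toNat := by exact_mod_cast h2
  have h6 : 1 ≤ √(N:ℝ) * √(s/r) := one_le_mul_of_one_le_of_one_le hsN hone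
  have h7 : (0:ℝ) ≤ f.natDegree * V.toNat := by positivity
  rw [h4]
  nlinarith

lemma sumSqrt (n : ℕ) : ∑ r ∈ Finset.Icc 1 n, 1 / √(r:ℝ) ≤ 2 * √(n:ℝ) := by
  induction n with
  | zero => simp
  | succ n ih =>
    rw [Finset.sum_Icc_succ_top (by omega)]
    have h0 : 0 < √((n+1:ℕ):ℝ) := Real.sqrt_pos.mpr (by positivity)
    have h1 : √((n+1:ℕ):ℝ) ^ 2 = n + 1 := by rw [Real.sq_sqrt (by positivity)]; push_cast; ring
    have h2 : √(n:ℝ) ^ 2 = n := Real.sq_sqrt (by positivity)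
    have h3 : 1 / √((n+1:ℕ):ℝ) ≤ 2 * √((n+1:ℕ):ℝ) - 2 * √(n:ℝ) := by
      rw [div_le_iff₀ h0]
      nlinarith [sq_nonneg (√((n+1:ℕ):ℝ) - √(n:ℝ))]
    linarith

lemma invis_data (f : ℤ[X]) (m : ℕ) (hm : 2 ≤ m) (A : ℤ) 
    (hgr : ∀ a : ℤ, A ≤ a → 0 < f.eval a ∧ ∀ u : ℤ, 1 ≤ u → u < a →
      |f.eval u| < f.eval a) (a h : ℤ) (ha : A ≤ a) (hh : 1 ≤ h)
    (hinv : ¬ VisibleAlong (f ^ m) a h) :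
    ∃ s r : ℕ, 0 < r ∧ r < s ∧ (s:ℤ)^2 ∣ h ∧
      ∃ u, 1 ≤ u ∧ u < a ∧ (s:ℤ) * |f.eval u| = r * f.eval a := by
  obtain ⟨hfa, hlt⟩ := hgr a ha
  have hFa : (((f^m).eval a : ℤ) : ℚ) ≠ 0 := by
    rw [eval_pow]; exact_mod_cast (pow_pos hfa m).ne'
  simp only [VisibleAlong, not_exists, not_and, not_forall] at hinv
  obtain ⟨u, hu0, ⟨k, hk0, hk⟩, hua⟩ := hinv ((h:ℚ) / (((f^m).eval a : ℤ) : ℚ)) (by field_simp)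
  push Not at hua
  have hkk : k * (f.eval a)^m = h * (f.eval u)^m := by
    have : (k:ℚ) * (((f^m).eval a : ℤ) : ℚ) = h * (((f^m).eval u : ℤ) : ℚ) := by
      rw [hk]; field_simp
    rw [eval_pow, eval_pow] at this
    exact_mod_cast this
  have hfu : f.eval u ≠ 0 := by
    intro h0
    rw [h0, zero_pow (by omega), mul_zero] at hkk
    exact (mul_pos hk0 (pow_pos hfa m)).ne' hkk
  have hlt' := hlt u (by omega) hua
  set x := (f.eval a).natAbs with hx
  set y := (f.eval u).natAbs with hy
  have hxa : (x:ℤ) = f.eval a := by rw [hx, Int.natCast_natAbs, abs_of_pos hfa]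
  have hya : (y:ℤ) = |f.eval u| := by rw [hy, Int.natCast_natAbs]
  have hy0 : 0 < y := Int.natAbs_pos.mpr hfu
  have hx0 : 0 < x := Int.natAbs_pos.mpr hfa.ne'
  have hyx : y < x := by
    have : (y:ℤ) < x := by rw [hxa, hya]; exact hlt'
    exact_mod_cast this
  obtain ⟨g, s, r, hg0, hcop, hxs, hyr⟩ := Nat.exists_coprime' (m := x) (n := y) (Nat.gcd_pos_of_pos_left y hx0)
  have hr0 : 0 < r := by
    rcases Nat.eq_zero_or_pos r with h | h
    · rw [h] at hyr; omega
    · exact h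
  have hrs : r < s := by
    rw [hxs, hyr] at hyx
    exact Nat.lt_of_mul_lt_mul_right hyx
  refine ⟨s, r, hr0, hrs, ?_, u, by omega, hua, ?_⟩
  · have h1 : k.natAbs * x^m = h.natAbs * y^m := by
      have := congrArg Int.natAbs hkk
      rwa [Int.natAbs_mul, Int.natAbs_mul, Int.natAbs_pow, Int.natAbs_pow] at this
    rw [hxs, hyr, mul_pow, mul_pow, ← mul_assoc, ← mul_assoc] at h1
    have h2 := Nat.eq_of_mul_eq_mul_right (pow_pos hg0 m) h1
    have h3 : s^m ∣ h.natAbs := by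
      have : s^m ∣ h.natAbs * r^m := ⟨k.natAbs, by rw [← h2]; ring⟩
      exact (Nat.Coprime.pow m m hcop).dvd_of_dvd_mul_right this
    have h4 : s^2 ∣ h.natAbs := (pow_dvd_pow s hm).trans h3
    have := Int.natCast_dvd.mpr h4
    exact_mod_cast this
  · rw [← hya, ← hxa, hxs, hyr]; push_cast; ring

lemma final_count (f : Polynomial ℤ) (hd : 2 ≤ f.natDegree) (hlead : 0 < f.leadingCoeff)
    (hroots : ∃ α β : AlgebraicClosure ℚ, α ≠ β ∧
      Polynomial.aeval α f = 0 ∧ Polynomial.aeval β f = 0)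
    (m : ℕ) (hm : 2 ≤ m) :
    ∃ K : ℝ, 0 < K ∧ ∀ N : ℕ, 0 < N →
      ((invisibleSet (f ^ m) N).ncard : ℝ) ≤ K * (N * √N * (1 + Real.log N)) := by
  classical
  obtain ⟨A, hA, hgr⟩ := growth f hd hlead
  obtain ⟨K, hK, hcount⟩ := countG f hd hlead hroots
  have hA0 : (1:ℝ) ≤ A := by exact_mod_cast hA
  refine ⟨1 + A + 2 * K, by positivity, ?_⟩
  intro N hN
  have hN' : (1:ℝ) ≤ N := by exact_mod_cast hN
  have hsN : 1 ≤ √(N:ℝ) := Real.one_le_sqrt.mpr hN'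
  let S : ℕ → ℕ → Finset ℤ := fun s r => (Finset.Icc (1:ℤ) N).filter (fun a => (N:ℤ) ≤ a * a ∧
    ∃ u, 1 ≤ u ∧ u < a ∧ (s:ℤ) * |f.eval u| = r * f.eval a)
  let H : ℕ → Finset ℤ := fun s => (Finset.Ioc (0:ℤ) N).filter (fun h => (s:ℤ)^2 ∣ h)
  let B1 : Finset (ℤ × ℤ) := Finset.Icc (1:ℤ) (Nat.sqrt N + A) ×ˢ Finset.Icc (1:ℤ) N
  let B2 : Finset (ℤ × ℤ) := (Finset.Icc 1 N).biUnion (fun s => (Finset.Icc 1 (s-1)).biUnion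
    (fun r => S s r ×ˢ H s))
  have hsub : invisibleSet (f ^ m) N ⊆ ((B1 ∪ B2 : Finset (ℤ × ℤ)) : Set (ℤ × ℤ)) := by
    rintro ⟨a, h⟩ ⟨ha1, haN, hh1, hhN, hinv⟩
    simp only at ha1 haN hh1 hhN hinv
    rw [Finset.coe_union]
    by_cases hsmall : a ≤ Nat.sqrt N + A
    · left
      simp only [B1, Finset.coe_product, Set.mem_prod, Finset.mem_coe, Finset.mem_Icc]
      exact ⟨⟨ha1, hsmall⟩, hh1, hhN⟩
    · right
      push Not at hsmall
      obtain ⟨s, r, hr0, hrs, hdvd, u, hu⟩ := invis_data f m hm A hgr a h (by omega) hh1 hinv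
      have hs2 : (s:ℤ)^2 ≤ N := (Int.le_of_dvd (by omega) hdvd).trans hhN
      have hsN2 : s ≤ N := by
        have : s^2 ≤ N := by exact_mod_cast hs2
        nlinarith
      simp only [B2, Finset.mem_coe, Finset.mem_biUnion, Finset.mem_product, S, H, Finset.mem_filter,
        Finset.mem_Icc, Finset.mem_Ioc]
      refine ⟨s, ⟨by omega, hsN2⟩, r, ⟨by omega, by omega⟩, ⟨⟨ha1, haN⟩, ?_, u, hu⟩, ⟨by omega, hhN⟩, hdvd⟩
      have h1 : N < (Nat.sqrt N + 1) * (Nat.sqrt N + 1) := Nat.lt_succ_sqrt N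
      have h2 : (N:ℤ) < (Nat.sqrt N + 1) * (Nat.sqrt N + 1) := by exact_mod_cast h1
      nlinarith
  have hcard : (invisibleSet (f ^ m) N).ncard ≤ B1.card + B2.card := by
    refine (Set.ncard_le_ncard hsub (Finset.finite_toSet _)).trans ?_
    rw [Set.ncard_coe_finset]
    exact Finset.card_union_le _ _
  have hB1 : (B1.card : ℝ) ≤ (1 + A) * (N * √N) := by
    have e : B1.card = (Nat.sqrt N + A).toNat * N := by simp [B1]
    have e2 : (((Nat.sqrt N + A).toNat : ℕ) : ℝ) = Nat.sqrt N + A := by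
      have : (((Nat.sqrt N + A).toNat : ℕ) : ℤ) = Nat.sqrt N + A := Int.toNat_of_nonneg (by omega)
      exact_mod_cast this
    rw [e, Nat.cast_mul, e2]
    have e3 : (Nat.sqrt N : ℝ) ≤ √N := Real.nat_sqrt_le_real_sqrt
    have : (Nat.sqrt N : ℝ) + A ≤ (1 + A) * √N := by nlinarith
    calc ((Nat.sqrt N : ℝ) + A) * N ≤ ((1 + A) * √N) * N := by gcongr
      _ = _ := by ring
  have hH : ∀ s : ℕ, 0 < s → ((H s).card : ℝ) ≤ N / (s:ℝ)^2 := by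
    intro s hs
    have hs2 : (0:ℤ) < (s:ℤ)^2 := by positivity
    have := Int.Ioc_filter_dvd_card 0 (N:ℤ) hs2
    have h2 : ((H s).card : ℤ) ≤ ⌊(N:ℚ) / ((s:ℚ)^2)⌋ := by
      simp only [H]
      rw [this]
      push_cast
      simp
      positivity
    have h3 : ((⌊(N:ℚ) / ((s:ℚ)^2)⌋ : ℤ) : ℚ) ≤ (N:ℚ) / ((s:ℚ)^2) := Int.floor_le _
    have h4 : (((H s).card : ℤ) : ℚ) ≤ (N:ℚ) / ((s:ℚ)^2) := le_trans (by exact_mod_cast h2) h3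
    have h5 : ((((H s).card : ℚ)) : ℝ) ≤ (((N:ℚ) / ((s:ℚ)^2) : ℚ) : ℝ) := by exact_mod_cast h4
    push_cast at h5
    exact h5
  have hB2 : (B2.card : ℝ) ≤ 2 * K * (N * √N * (1 + Real.log N)) := by
    have hb : B2.card ≤ ∑ s ∈ Finset.Icc 1 N, ∑ r ∈ Finset.Icc 1 (s-1), (S s r).card * (H s).card := by
      refine Finset.card_biUnion_le.trans (Finset.sum_le_sum fun s _ => ?_)
      refine Finset.card_biUnion_le.trans (Finset.sum_le_sum fun r _ => ?_)
      rw [Finset.card_product]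
    have hb' : (B2.card : ℝ) ≤ ∑ s ∈ Finset.Icc 1 N, ∑ r ∈ Finset.Icc 1 (s-1), ((S s r).card : ℝ) * (H s).card := by
      exact_mod_cast hb
    refine hb'.trans ?_
    calc _ ≤ ∑ s ∈ Finset.Icc 1 N, 2 * K * (N * √N) * ((s:ℝ))⁻¹ := by
          apply Finset.sum_le_sum
          intro s hs
          obtain ⟨hs1, -⟩ := Finset.mem_Icc.mp hs
          have hs0 : (0:ℝ) < s := by exact_mod_cast hs1
          calc _ ≤ ∑ r ∈ Finset.Icc 1 (s-1), (K * √N * √s * (N / (s:ℝ)^2)) * (1 / √(r:ℝ)) := by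
                apply Finset.sum_le_sum
                intro r hr
                obtain ⟨hr1, hr2⟩ := Finset.mem_Icc.mp hr
                have h1 := hcount N hN s r (by exact_mod_cast hr1) (by omega) (S s r) (by
                  intro a ha
                  obtain ⟨g1, g2, g3⟩ := Finset.mem_filter.mp ha
                  exact ⟨(Finset.mem_Icc.mp g1).2, g2, g3⟩)
                have h2 := hH s hs1
                calc ((S s r).card : ℝ) * (H s).card ≤ (K * √N * √(s/r)) * (N / (s:ℝ)^2) := by
                      gcongr
                      simpa only [Int.cast_natCast] using h1
                  _ = _ := by rw [Real.sqrt_div hs0.le]; ring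
            _ = (K * √N * √s * (N / (s:ℝ)^2)) * ∑ r ∈ Finset.Icc 1 (s-1), 1 / √(r:ℝ) := by
                rw [Finset.mul_sum]
            _ ≤ (K * √N * √s * (N / (s:ℝ)^2)) * (2 * √s) := by
                gcongr
                refine (sumSqrt (s-1)).trans ?_
                gcongr
                omega
            _ = K * √N * (√s * √s) * (N / (s:ℝ)^2) * 2 := by ring
            _ = _ := by rw [Real.mul_self_sqrt hs0.le]; field_simp
      _ = 2 * K * (N * √N) * ∑ s ∈ Finset.Icc 1 N, ((s:ℝ))⁻¹ := by rw [Finset.mul_sum]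
      _ ≤ 2 * K * (N * √N) * (1 + Real.log N) := by
          gcongr
          have := harmonic_le_one_add_log N
          rw [harmonic_eq_sum_Icc] at this
          push_cast at this
          exact this
      _ = _ := by ring
  have hlog : 0 ≤ Real.log N := Real.log_nonneg hN'
  have hc : ((invisibleSet (f ^ m) N).ncard : ℝ) ≤ B1.card + B2.card := by exact_mod_cast hcard
  have h9 : (1 + A) * (N * √N) ≤ (1 + A) * (N * √N * (1 + Real.log N)) := by
    have : (N:ℝ) * √N ≤ N * √N * (1 + Real.log N) := by
      apply le_mul_of_one_le_right (by positivity); linarith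
    gcongr
  linarith

theorem invisible_count_upper_bound
    (f : Polynomial ℤ) (hd : 2 ≤ f.natDegree) (hlead : 0 < f.leadingCoeff)
    (hroots : ∃ α β : AlgebraicClosure ℚ, α ≠ β ∧
      Polynomial.aeval α f = 0 ∧ Polynomial.aeval β f = 0)
    (m : ℕ) (hm : 2 ≤ m) :
    ∃ δ : ℕ, 2 ≤ δ ∧
      (∀ s r : ℤ, 0 < r → r < s →
        ∀ g : MvPolynomial (Fin 2) ℝ, Irreducible g → g ∣ Gpoly f s r →
          δ ≤ g.totalDegree) ∧
      ∀ ε : ℝ, 0 < ε → ∃ C : ℝ, 0 < C ∧ ∀ N : ℕ, 0 < N →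
        ((invisibleSet (f ^ m) N).ncard : ℝ) ≤ C * (N : ℝ) ^ ((1 : ℝ) + 1 / δ + ε) := by
  refine ⟨2, le_rfl, fun s r hr hrs g hg hdiv => partOne f hd hroots s r hr hrs g hg hdiv, ?_⟩
  intro ε hε
  obtain ⟨K, hK, hfin⟩ := final_count f hd hlead hroots m hm
  refine ⟨K * (1 + 1 / ε), by positivity, ?_⟩
  intro N hN
  have hN' : (1:ℝ) ≤ N := by exact_mod_cast hN
  have hN0 : (0:ℝ) < N := by linarith
  have hpow : (N:ℝ) ^ ((1 : ℝ) + 1 / (2:ℕ) + ε) = N * √N * (N:ℝ)^ε := by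
    rw [Real.rpow_add hN0, Real.rpow_add hN0, Real.rpow_one, Real.sqrt_eq_rpow]
    norm_num
  rw [hpow]
  refine (hfin N hN).trans ?_
  have hl : Real.log N ≤ (N:ℝ)^ε / ε := Real.log_le_rpow_div hN0.le hε
  have h1 : 1 ≤ (N:ℝ)^ε := Real.one_le_rpow hN' hε.le
  have h2 : 1 + Real.log N ≤ (1 + 1/ε) * (N:ℝ)^ε := by
    have : (1 + 1/ε) * (N:ℝ)^ε = (N:ℝ)^ε + (N:ℝ)^ε / ε := by ring
    linarith
  calc K * (N * √N * (1 + Real.log N)) ≤ K * (N * √N * ((1 + 1/ε) * (N:ℝ)^ε)) := by gcongr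
    _ = _ := by ring
end

section
/- Let F ∈ ℤ[x] be a nonconstant polynomial with positive leading coefficient and let n_F be as in the context. Then there is a constant C depending only on F such that #E_F(N) ≤ C·N for all positive integers N, where E_F(N) is the set of invisible lattice points (a,h) with 1 ≤ a ≤ N and 1 ≤ h ≤ N such that every lattice point (b,k) blocking (a,h) from being visible along F satisfies b ≤ n_F. -/
open Polynomial Filter

/-- The lattice point `(b, k)` *blocks* `(a, h)` from being visible along `F`. -/
def BlocksAlong (F : Polynomial ℤ) (b k a h : ℤ) : Prop :=
  0 < b ∧ 0 < k ∧ b < a ∧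
    ∃ t : ℚ, (h : ℚ) = t * ((F.eval a : ℤ) : ℚ) ∧ (k : ℚ) = t * ((F.eval b : ℤ) : ℚ)

/-- `E_F(N)`: the set of invisible lattice points in `[1,N]²` all of whose blockers
have first coordinate at most `nF`. -/
def EFset (F : Polynomial ℤ) (nF : ℤ) (N : ℕ) : Set (ℤ × ℤ) :=
  {p | 1 ≤ p.1 ∧ p.1 ≤ (N : ℤ) ∧ 1 ≤ p.2 ∧ p.2 ≤ (N : ℤ) ∧ ¬ VisibleAlong F p.1 p.2 ∧
    ∀ b k : ℤ, BlocksAlong F b k p.1 p.2 → b ≤ nF}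

theorem EF_linear_bound
    (F : Polynomial ℤ) (hdeg : 1 ≤ F.natDegree) (hlead : 0 < F.leadingCoeff)
    (nF : ℤ) (hnF : 0 < nF)
    (hnFprop : ∀ a b : ℤ, nF < a → 1 ≤ b → b < a →
      F.eval b < F.eval a ∧ 0 < F.eval a) :
    ∃ C : ℝ, ∀ N : ℕ, 0 < N → ((EFset F nF N).ncard : ℝ) ≤ C * (N : ℝ) := by
  set M : ℤ := nF + F.eval (nF + 1) with hM
  have hM0 : 0 < F.eval (nF + 1) := (hnFprop (nF + 1) 1 (by omega) le_rfl (by omega)).2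
  refine ⟨(M : ℝ), fun N hN => ?_⟩
  have hsub : EFset F nF N ⊆ ((Finset.Icc (1 : ℤ) M ×ˢ Finset.Icc (1 : ℤ) (N : ℤ) : Finset (ℤ × ℤ)) : Set (ℤ × ℤ)) := by
    rintro ⟨a, h⟩ ⟨h1, h2, h3, h4, h5, h6⟩
    simp only at h1 h2 h3 h4 h5 h6
    simp only [Finset.coe_product, Finset.coe_Icc, Set.mem_prod, Set.mem_Icc]
    refine ⟨⟨h1, ?_⟩, h3, h4⟩
    by_contra hlt
    have ha : nF < a := by omega
    have hFa : 0 < F.eval a := (hnFprop a 1 ha le_rfl (by omega)).2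
    have hFaQ : (0 : ℚ) < ((F.eval a : ℤ) : ℚ) := by exact_mod_cast hFa
    have hhQ : (0 : ℚ) < (h : ℚ) := by exact_mod_cast (by omega : 0 < h)
    apply h5
    obtain ⟨t, ht⟩ : ∃ t : ℚ, (h : ℚ) = t * ((F.eval a : ℤ) : ℚ) :=
      ⟨h / (F.eval a : ℤ), by field_simp⟩
    have htpos : 0 < t := by
      rw [ht] at hhQ
      exact pos_of_mul_pos_left hhQ hFaQ.le
    refine ⟨t, ht, fun u hu ⟨k, hk, hkt⟩ => ?_⟩
    by_contra hua
    have hua' : u < a := by omega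
    have hub : u ≤ nF := h6 u k ⟨hu, hk, hua', t, ht, hkt⟩
    have hFu : 0 < F.eval u := by
      have hkQ : (0 : ℚ) < (k : ℚ) := by exact_mod_cast hk
      rw [hkt] at hkQ
      exact_mod_cast pos_of_mul_pos_right hkQ htpos.le
    have hFu2 : F.eval u < F.eval (nF + 1) :=
      (hnFprop (nF + 1) u (by omega) (by omega) (by omega)).1
    have hb : nF < a - F.eval u := by omega
    have hFb : 0 < F.eval (a - F.eval u) := (hnFprop _ 1 hb le_rfl (by omega)).2
    obtain ⟨m, hm⟩ : F.eval u ∣ F.eval (a - F.eval u) - F.eval a := by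
      have := F.sub_dvd_eval_sub (a - F.eval u) a
      rw [show a - F.eval u - a = -F.eval u by ring, neg_dvd] at this
      exact this
    have hbk : ((h + k * m : ℤ) : ℚ) = t * ((F.eval (a - F.eval u) : ℤ) : ℚ) := by
      rw [show F.eval (a - F.eval u) = F.eval a + F.eval u * m by omega]
      push_cast
      rw [ht, hkt]; ring
    have hpos : 0 < h + k * m := by
      have : (0 : ℚ) < t * ((F.eval (a - F.eval u) : ℤ) : ℚ) :=
        mul_pos htpos (by exact_mod_cast hFb)
      rw [← hbk] at this
      exact_mod_cast this
    have := h6 (a - F.eval u) (h + k * m) ⟨by omega, hpos, by omega, t, ht, hbk⟩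
    omega
  have hc := Set.ncard_le_ncard hsub (Finset.finite_toSet _)
  rw [Set.ncard_coe_finset, Finset.card_product, Int.card_Icc, Int.card_Icc] at hc
  have e : (((M + 1 - 1).toNat * ((N : ℤ) + 1 - 1).toNat : ℕ) : ℤ) = M * N := by
    push_cast
    rw [Int.toNat_of_nonneg (by omega), Int.toNat_of_nonneg (by omega)]
    ring
  have hz : ((EFset F nF N).ncard : ℤ) ≤ M * N := by rw [← e]; exact_mod_cast hc
  exact_mod_cast hz
end

section
/- Let F ∈ ℤ[x] be a nonconstant polynomial with positive leading coefficient and let n_F be as in the context. If a, b, N are positive integers with n_F < b < a ≤ N, then #Block_F(a,b;N) ≤ N·gcd(F(a),F(b))/F(a). -/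
open Polynomial Filter

/-- `Block_F(a,b;N)`: the set of lattice points `(a,h) ∈ [1,N]²` (with first
coordinate equal to `a`) blocked by `(b,k)` for some integer `k`. -/
def blockSet (F : Polynomial ℤ) (a b : ℤ) (N : ℕ) : Set (ℤ × ℤ) :=
  {p | p.1 = a ∧ 1 ≤ p.1 ∧ p.1 ≤ (N : ℤ) ∧ 1 ≤ p.2 ∧ p.2 ≤ (N : ℤ) ∧
    ∃ k : ℤ, BlocksAlong F b k p.1 p.2}

theorem block_count_upper_bound
    (F : Polynomial ℤ) (hdeg : 1 ≤ F.natDegree) (hlead : 0 < F.leadingCoeff)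
    (nF : ℤ) (hnF : 0 < nF)
    (hnFprop : ∀ a b : ℤ, nF < a → 1 ≤ b → b < a →
      F.eval b < F.eval a ∧ 0 < F.eval a)
    (a b : ℤ) (N : ℕ) (hN : 0 < N) (hb : nF < b) (hba : b < a) (haN : a ≤ (N : ℤ)) :
    ((blockSet F a b N).ncard : ℝ) ≤
      (N : ℝ) * (Int.gcd (F.eval a) (F.eval b) : ℝ) / ((F.eval a : ℤ) : ℝ) := by
  have hA : 0 < F.eval a := (hnFprop a b (by omega) (by omega) hba).2
  generalize hAe : F.eval a = A at *
  generalize hBe : F.eval b = B at *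
  have hg : 0 < Int.gcd A B := Int.gcd_pos_of_ne_zero_left _ hA.ne'
  obtain ⟨q, hq⟩ : ((Int.gcd A B : ℕ) : ℤ) ∣ A := Int.gcd_dvd_left _ _
  have hgz : (0 : ℤ) < (Int.gcd A B : ℕ) := by exact_mod_cast hg
  have hqpos : 0 < q := by
    rw [hq] at hA
    exact pos_of_mul_pos_right hA hgz.le
  have hsub : blockSet F a b N ⊆
      ((Finset.Icc (1 : ℤ) ((N : ℤ) / q)).image (fun m => (a, q * m)) : Finset (ℤ × ℤ)) := by
    rintro ⟨x, h⟩ ⟨hx, -, -, h1, h2, k, -, -, -, t, ht1, ht2⟩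
    simp only at hx h1 h2 ht1 ht2
    subst hx
    rw [hAe] at ht1
    rw [hBe] at ht2
    have hk : h * B = k * A := by
      have : (h : ℚ) * B = k * A := by rw [ht1, ht2]; ring
      exact_mod_cast this
    have hdvd : q ∣ h := by
      obtain ⟨r, hr⟩ : ((Int.gcd A B : ℕ) : ℤ) ∣ B := Int.gcd_dvd_right _ _
      have hcop := Int.gcd_eq_gcd_ab A B
      refine ⟨h * A.gcdA B + k * A.gcdB B, ?_⟩
      have : (Int.gcd A B : ℤ) * h = (Int.gcd A B : ℤ) * (q * (h * A.gcdA B + k * A.gcdB B)) := by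
        rw [← mul_assoc, ← hq]
        conv_lhs => rw [hcop]
        linear_combination (A.gcdB B) * hk
      exact mul_left_cancel₀ hgz.ne' this
    obtain ⟨m, rfl⟩ := hdvd
    simp only [Finset.coe_image, Set.mem_image, Finset.coe_Icc, Set.mem_Icc]
    refine ⟨m, ⟨?_, ?_⟩, rfl⟩
    · have : 0 < m := pos_of_mul_pos_right (by omega : 0 < q * m) hqpos.le
      omega
    · rw [Int.le_ediv_iff_mul_le hqpos]
      linarith
  have hcard : (blockSet F a b N).ncard ≤ ((N : ℤ) / q).toNat := by
    refine (Set.ncard_le_ncard hsub (Finset.finite_toSet _)).trans ?_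
    rw [Set.ncard_coe_finset]
    refine Finset.card_image_le.trans ?_
    simp
  have hnn : 0 ≤ (N : ℤ) / q := Int.ediv_nonneg (by omega) hqpos.le
  have h3 : ((blockSet F a b N).ncard : ℤ) * q ≤ N := by
    rw [← Int.le_ediv_iff_mul_le hqpos]
    omega
  have h4 : ((blockSet F a b N).ncard : ℤ) * A ≤ N * (Int.gcd A B : ℕ) := by
    calc ((blockSet F a b N).ncard : ℤ) * A
        = ((blockSet F a b N).ncard : ℤ) * q * (Int.gcd A B : ℕ) := by
          conv_lhs => rw [hq]
          ring
      _ ≤ _ := mul_le_mul_of_nonneg_right h3 hgz.le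
  rw [le_div_iff₀ (by exact_mod_cast hA)]
  exact_mod_cast h4
end

section
/- Let F ∈ ℤ[x] be a nonconstant polynomial with positive leading coefficient and let n_F be as in the context. Then there is a constant C depending only on F such that for all positive integers N, #Invisible_F(N) ≤ N·S_F(N) + C·N. -/
open Polynomial Filter

/-- The gcd sum `S_F(N) = Σ_{a ≤ N} Σ_{n_F < b < a} gcd(F(a),F(b))/F(a)`. -/
noncomputable def SF (F : Polynomial ℤ) (nF : ℤ) (N : ℕ) : ℝ :=
  ∑ a ∈ Finset.Icc (1 : ℤ) (N : ℤ), ∑ b ∈ Finset.Ioo nF a,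
    (Int.gcd (F.eval a) (F.eval b) : ℝ) / ((F.eval a : ℤ) : ℝ)

lemma card_aux (A D : ℤ) (hA : 0 < A) (N : ℕ) :
    (((Finset.Icc (1:ℤ) N).filter (fun h => A ∣ h * D)).card : ℝ)
      ≤ (N : ℝ) * ((Int.gcd A D : ℝ) / (A : ℝ)) := by
  obtain ⟨q, hq⟩ : (Int.gcd A D : ℤ) ∣ A := Int.gcd_dvd_left ..
  have hg : (0:ℤ) < Int.gcd A D := by
    have := Int.gcd_pos_of_ne_zero_left D hA.ne'
    exact_mod_cast this
  have hqpos : 0 < q := by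
    by_contra hcon
    push Not at hcon
    nlinarith
  have hsub : (Finset.Icc (1:ℤ) N).filter (fun h => A ∣ h * D) ⊆
      (Finset.Icc (1:ℤ) (N / q)).image (fun k => q * k) := by
    intro h hh
    simp only [Finset.mem_filter, Finset.mem_Icc] at hh
    obtain ⟨⟨h1, h2⟩, h3⟩ := hh
    have h4 : A ∣ h * (Int.gcd A D : ℤ) := by
      rw [Int.gcd_eq_gcd_ab, mul_add]
      apply dvd_add
      · exact Dvd.intro _ (by ring : A * (h * Int.gcdA A D) = _)
      · rw [← mul_assoc]; exact Dvd.dvd.mul_right h3 _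
    have h5 : q ∣ h := by
      rw [hq, mul_comm h] at h4
      have h6 : (Int.gcd A D : ℤ) * q ∣ (Int.gcd A D : ℤ) * h := by
        rw [← hq] at h4 ⊢
        exact h4
      exact Int.dvd_of_mul_dvd_mul_left hg.ne' h6
    obtain ⟨k, rfl⟩ := h5
    refine Finset.mem_image.2 ⟨k, Finset.mem_Icc.2 ⟨?_, ?_⟩, rfl⟩
    · by_contra hcon
      push Not at hcon
      nlinarith
    · rw [Int.le_ediv_iff_mul_le hqpos]; linarith
  have hc := (Finset.card_le_card hsub).trans Finset.card_image_le
  rw [Int.card_Icc] at hc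
  have h0 : 0 ≤ (N:ℤ) / q := Int.ediv_nonneg (by positivity) hqpos.le
  have hc2 : (((Finset.Icc (1:ℤ) N).filter (fun h => A ∣ h * D)).card : ℤ) ≤ N / q := by omega
  have hc3 : (((Finset.Icc (1:ℤ) N).filter (fun h => A ∣ h * D)).card : ℤ) * q ≤ N :=
    (Int.le_ediv_iff_mul_le hqpos).1 hc2
  have hc4 : (((Finset.Icc (1:ℤ) N).filter (fun h => A ∣ h * D)).card : ℝ) * q ≤ N := by
    exact_mod_cast hc3
  have hAR : (0:ℝ) < A := by exact_mod_cast hA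
  have hgR : (0:ℝ) < (Int.gcd A D : ℝ) := by exact_mod_cast hg
  have hqR : (A:ℝ) = (Int.gcd A D : ℝ) * q := by exact_mod_cast hq
  rw [← mul_div_assoc, le_div_iff₀ hAR]
  calc _ = ((((Finset.Icc (1:ℤ) N).filter (fun h => A ∣ h * D)).card : ℝ) * q) * (Int.gcd A D : ℝ) := by
        rw [mul_assoc, mul_comm (q : ℝ), ← hqR]
    _ ≤ _ := by gcongr

lemma exists_b (F : Polynomial ℤ) (nF : ℤ) (hnF : 0 < nF)
    (hnFprop : ∀ a b : ℤ, nF < a → 1 ≤ b → b < a →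
      F.eval b < F.eval a ∧ 0 < F.eval a) (a h : ℤ)
    (ha : nF + (∑ b ∈ Finset.Icc 1 nF, |F.eval b|) * nF < a) (hh : 1 ≤ h)
    (hv : ¬ VisibleAlong F a h) :
    ∃ b ∈ Finset.Ioo nF a, F.eval a ∣ h * F.eval b := by
  have hs : 0 ≤ ∑ b ∈ Finset.Icc 1 nF, |F.eval b| := Finset.sum_nonneg fun _ _ => abs_nonneg _
  have hna : nF < a := by nlinarith
  have hpos : 0 < F.eval a := (hnFprop a 1 hna le_rfl (by omega)).2
  have hposQ : (0:ℚ) < ((F.eval a : ℤ) : ℚ) := by exact_mod_cast hpos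
  unfold VisibleAlong at hv
  push Not at hv
  obtain ⟨u, hu, ⟨k, hk, hku⟩, hua⟩ := hv ((h : ℚ) / ((F.eval a : ℤ) : ℚ)) (by field_simp)
  have hku2 : k * F.eval a = h * F.eval u := by
    have : (k:ℚ) * ((F.eval a : ℤ) : ℚ) = h * ((F.eval u : ℤ) : ℚ) := by
      rw [hku]; field_simp
    exact_mod_cast this
  have hFu : 0 < F.eval u := by
    have : 0 < h * F.eval u := hku2 ▸ mul_pos hk hpos
    exact pos_of_mul_pos_right this (by omega)
  have hdv : F.eval a ∣ h * F.eval u := ⟨k, by rw [← hku2]; ring⟩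
  by_cases hun : nF < u
  · exact ⟨u, Finset.mem_Ioo.2 ⟨hun, hua⟩, hdv⟩
  push Not at hun
  have hle : |F.eval u| ≤ ∑ b ∈ Finset.Icc 1 nF, |F.eval b| :=
    Finset.single_le_sum (f := fun b => |F.eval b|) (fun _ _ => abs_nonneg _)
      (Finset.mem_Icc.2 ⟨hu, hun⟩)
  rw [abs_of_pos hFu] at hle
  refine ⟨u + F.eval u * nF, Finset.mem_Ioo.2 ⟨by nlinarith, by nlinarith⟩, ?_⟩
  have h1 := F.sub_dvd_eval_sub (u + F.eval u * nF) u
  have h2 : F.eval u ∣ F.eval (u + F.eval u * nF) := by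
    have h3 : F.eval u ∣ F.eval (u + F.eval u * nF) - F.eval u :=
      (Dvd.intro nF (by ring)).trans h1
    exact (dvd_sub_self_right).1 h3
  exact hdv.trans (mul_dvd_mul_left h h2)

theorem invisible_le_SF
    (F : Polynomial ℤ) (hdeg : 1 ≤ F.natDegree) (hlead : 0 < F.leadingCoeff)
    (nF : ℤ) (hnF : 0 < nF)
    (hnFprop : ∀ a b : ℤ, nF < a → 1 ≤ b → b < a →
      F.eval b < F.eval a ∧ 0 < F.eval a) :
    ∃ C : ℝ, ∀ N : ℕ, 0 < N →
      ((invisibleSet F N).ncard : ℝ) ≤ (N : ℝ) * SF F nF N + C * (N : ℝ) := by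
  set B : ℤ := nF + (∑ b ∈ Finset.Icc 1 nF, |F.eval b|) * nF with hB
  refine ⟨(B.toNat : ℝ), fun N hN => ?_⟩
  let T : Finset (ℤ × ℤ) := (Finset.Icc (1:ℤ) N).biUnion fun a => (Finset.Ioo nF a).biUnion
    fun b => ((Finset.Icc (1:ℤ) N).filter (fun h => F.eval a ∣ h * F.eval b)).image (fun h => (a, h))
  have hsub : invisibleSet F N ⊆ ((T ∪ Finset.Icc (1:ℤ) B ×ˢ Finset.Icc (1:ℤ) N : Finset (ℤ × ℤ)) : Set (ℤ × ℤ)) := by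
    rintro ⟨a, h⟩ ⟨h1, h2, h3, h4, h5⟩
    simp only at h1 h2 h3 h4 h5
    rw [Finset.mem_coe, Finset.mem_union]
    by_cases haB : a ≤ B
    · right
      exact Finset.mem_product.2 ⟨Finset.mem_Icc.2 ⟨h1, haB⟩, Finset.mem_Icc.2 ⟨h3, h4⟩⟩
    · left
      obtain ⟨b, hb, hd⟩ := exists_b F nF hnF hnFprop a h (by omega) h3 h5
      refine Finset.mem_biUnion.2 ⟨a, Finset.mem_Icc.2 ⟨h1, h2⟩, Finset.mem_biUnion.2 ⟨b, hb, ?_⟩⟩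
      exact Finset.mem_image.2 ⟨h, Finset.mem_filter.2 ⟨Finset.mem_Icc.2 ⟨h3, h4⟩, hd⟩, rfl⟩
  have hcard := Set.ncard_le_ncard hsub (Finset.finite_toSet _)
  rw [Set.ncard_coe_finset] at hcard
  have hcard2 := hcard.trans (Finset.card_union_le _ _)
  have hT : (T.card : ℝ) ≤ N * SF F nF N := by
    have h1 : T.card ≤ ∑ a ∈ Finset.Icc (1:ℤ) N, ∑ b ∈ Finset.Ioo nF a,
        ((Finset.Icc (1:ℤ) N).filter (fun h => F.eval a ∣ h * F.eval b)).card :=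
      Finset.card_biUnion_le.trans (Finset.sum_le_sum fun a _ =>
        Finset.card_biUnion_le.trans (Finset.sum_le_sum fun b _ => Finset.card_image_le))
    have h2 : (T.card : ℝ) ≤ ((∑ a ∈ Finset.Icc (1:ℤ) N, ∑ b ∈ Finset.Ioo nF a,
        ((Finset.Icc (1:ℤ) N).filter (fun h => F.eval a ∣ h * F.eval b)).card : ℕ) : ℝ) := by
      exact_mod_cast h1
    refine h2.trans ?_
    push_cast
    unfold SF
    rw [Finset.mul_sum]
    refine Finset.sum_le_sum fun a _ => ?_
    rw [Finset.mul_sum]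
    refine Finset.sum_le_sum fun b hb => ?_
    rw [Finset.mem_Ioo] at hb
    exact card_aux _ _ (hnFprop a b (by omega) (by omega) hb.2).2 N
  have hP : (Finset.Icc (1:ℤ) B ×ˢ Finset.Icc (1:ℤ) (N:ℤ)).card = B.toNat * N := by
    rw [Finset.card_product, Int.card_Icc, Int.card_Icc]
    simp
  rw [hP] at hcard2
  have h3 : ((invisibleSet F N).ncard : ℝ) ≤ T.card + B.toNat * N := by exact_mod_cast hcard2
  linarith
end

section
/- Let F ∈ ℤ[x] be a nonconstant polynomial with positive leading coefficient and let n_F be as in the context. If S_F(N)/N tends to 0 as N → ∞, then the set of lattice points visible along F has density 1, i.e., #Visible_F(N)/N² tends to 1 as N → ∞. -/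
open Polynomial Filter

lemma aux_count (N : ℕ) (A B : ℤ) (hA : 0 < A) :
    (((Finset.Icc (1:ℤ) N).filter (fun h => A ∣ h * B)).card : ℝ) ≤
      N * ((Int.gcd A B : ℝ) / (A : ℝ)) := by
  have hg : 0 < Int.gcd A B := Int.gcd_pos_of_ne_zero_left _ hA.ne'
  obtain ⟨d, hd⟩ : ((Int.gcd A B : ℕ) : ℤ) ∣ A := Int.gcd_dvd_left _ _
  have hgz : (0:ℤ) < (Int.gcd A B : ℤ) := by exact_mod_cast hg
  have hdpos : 0 < d := by
    by_contra hcon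
    push Not at hcon
    nlinarith
  have hsub : (Finset.Icc (1:ℤ) N).filter (fun h => A ∣ h * B) ⊆
      (Finset.Ioc (0:ℤ) N).filter (fun h => d ∣ h) := by
    intro h hh
    simp only [Finset.mem_filter, Finset.mem_Icc, Finset.mem_Ioc] at hh ⊢
    refine ⟨⟨by omega, by omega⟩, ?_⟩
    have h1 : A ∣ h * (Int.gcd A B : ℤ) := by
      rw [Int.gcd_eq_gcd_ab A B, mul_add]
      refine dvd_add ⟨h * Int.gcdA A B, by ring⟩ ?_
      obtain ⟨k, hk⟩ := hh.2
      exact ⟨k * Int.gcdB A B, by rw [← mul_assoc, hk]; ring⟩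
    obtain ⟨k, hk⟩ := h1
    refine ⟨k, ?_⟩
    have : (Int.gcd A B : ℤ) * h = (Int.gcd A B : ℤ) * (d * k) := by
      calc (Int.gcd A B : ℤ) * h = A * k := by rw [← hk]; ring
        _ = ((Int.gcd A B : ℤ) * d) * k := by rw [← hd]
        _ = _ := by ring
    exact mul_left_cancel₀ hgz.ne' this
  have hcard : ((((Finset.Ioc (0:ℤ) N).filter (fun h => d ∣ h)).card : ℤ)) ≤ (N:ℤ) / d := by
    have hs : (Finset.Ioc (0:ℤ) N).filter (fun h => d ∣ h) ⊆
        (Finset.Icc (1:ℤ) ((N:ℤ)/d)).image (fun k => d * k) := by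
      intro h hh
      simp only [Finset.mem_filter, Finset.mem_Ioc, Finset.mem_image, Finset.mem_Icc] at hh ⊢
      obtain ⟨⟨h0, hN⟩, k, rfl⟩ := hh
      refine ⟨k, ⟨?_, ?_⟩, rfl⟩
      · have := (pos_iff_pos_of_mul_pos h0).1 hdpos
        omega
      · rw [Int.le_ediv_iff_mul_le hdpos]
        linarith
    have h1 := (Finset.card_le_card hs).trans Finset.card_image_le
    have h2 : (0:ℤ) ≤ (N:ℤ)/d := Int.ediv_nonneg (by omega) hdpos.le
    rw [Int.card_Icc] at h1
    omega
  have h3 : ((N:ℤ) / d) * d ≤ N := Int.ediv_mul_le _ hdpos.ne'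
  have h4 : (((Finset.Icc (1:ℤ) N).filter (fun h => A ∣ h * B)).card : ℤ) * d ≤ N := by
    have : (((Finset.Icc (1:ℤ) N).filter (fun h => A ∣ h * B)).card : ℤ) ≤ (N:ℤ)/d := by
      refine le_trans ?_ hcard
      exact_mod_cast Finset.card_le_card hsub
    nlinarith
  have h5 : (((Finset.Icc (1:ℤ) N).filter (fun h => A ∣ h * B)).card : ℝ) * (d:ℝ) ≤ N := by
    exact_mod_cast h4
  have hAR : (A:ℝ) = (Int.gcd A B : ℝ) * d := by exact_mod_cast hd
  have hgR : (0:ℝ) < (Int.gcd A B : ℝ) := by exact_mod_cast hg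
  have hdR : (0:ℝ) < (d : ℝ) := by exact_mod_cast hdpos
  have : (Int.gcd A B : ℝ) / (A : ℝ) = 1 / d := by
    rw [hAR]; field_simp
  rw [this, mul_one_div, le_div_iff₀ hdR]
  exact h5

/-- the error weight -/
noncomputable def errW (F : Polynomial ℤ) (nF : ℤ) (a : ℤ) : ℝ :=
  if a ≤ nF then 1 else (∑ b ∈ Finset.Icc 1 nF, |((F.eval b : ℤ) : ℝ)|) / ((F.eval a : ℤ) : ℝ)

open Classical in
lemma aux_row (F : Polynomial ℤ) (nF : ℤ) (hnF : 0 < nF)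
    (hnFprop : ∀ a b : ℤ, nF < a → 1 ≤ b → b < a →
      F.eval b < F.eval a ∧ 0 < F.eval a) (N : ℕ) (a : ℤ) :
    (((Finset.Icc (1:ℤ) N).filter (fun h => ¬ VisibleAlong F a h)).card : ℝ) ≤
      N * ((∑ b ∈ Finset.Ioo nF a, (Int.gcd (F.eval a) (F.eval b) : ℝ) / ((F.eval a : ℤ) : ℝ))
        + errW F nF a) := by
  by_cases han : a ≤ nF
  · rw [errW, if_pos han, Finset.Ioo_eq_empty (by omega)]
    have : ((Finset.Icc (1:ℤ) N).filter (fun h => ¬ VisibleAlong F a h)).card ≤ N := by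
      refine (Finset.card_filter_le _ _).trans ?_
      simp
    have : (((Finset.Icc (1:ℤ) N).filter (fun h => ¬ VisibleAlong F a h)).card : ℝ) ≤ N := by
      exact_mod_cast this
    simpa using this
  · rw [errW, if_neg han]
    push Not at han
    have hFa : 0 < F.eval a := (hnFprop a 1 han le_rfl (by omega)).2
    have hFaR : (0:ℝ) < ((F.eval a : ℤ) : ℝ) := by exact_mod_cast hFa
    have hsub : (Finset.Icc (1:ℤ) N).filter (fun h => ¬ VisibleAlong F a h) ⊆
        ((Finset.Icc 1 nF ∪ Finset.Ioo nF a).filter (fun b => 0 < F.eval b)).biUnion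
          (fun b => (Finset.Icc (1:ℤ) N).filter (fun h => F.eval a ∣ h * F.eval b)) := by
      intro h hh
      simp only [Finset.mem_filter, Finset.mem_biUnion, Finset.mem_union, Finset.mem_Icc,
        Finset.mem_Ioo] at hh ⊢
      obtain ⟨⟨h1, hN⟩, hv⟩ := hh
      unfold VisibleAlong at hv
      push Not at hv
      have hFaQ : (0:ℚ) < ((F.eval a : ℤ) : ℚ) := by exact_mod_cast hFa
      have hhQ : (0:ℚ) < (h : ℚ) := by exact_mod_cast (by omega : 0 < h)
      obtain ⟨u, hu0, ⟨k, hk, hke⟩, hua⟩ := hv ((h:ℚ) / ((F.eval a : ℤ) : ℚ))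
        (by field_simp)
      have hke2 : (h : ℚ) * ((F.eval u : ℤ) : ℚ) = ((F.eval a : ℤ) : ℚ) * k := by
        rw [hke]; field_simp
      have hke3 : h * F.eval u = F.eval a * k := by exact_mod_cast hke2
      refine ⟨u, ⟨by omega, ?_⟩, ⟨h1, hN⟩, ⟨k, hke3⟩⟩
      have : 0 < h * F.eval u := by rw [hke3]; positivity
      exact (pos_iff_pos_of_mul_pos this).1 (by omega)
    have hdisj : Disjoint (Finset.Icc 1 nF) (Finset.Ioo nF a) := by
      rw [Finset.disjoint_left]
      intro x hx hy
      simp only [Finset.mem_Icc, Finset.mem_Ioo] at hx hy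
      omega
    calc (((Finset.Icc (1:ℤ) N).filter (fun h => ¬ VisibleAlong F a h)).card : ℝ)
        ≤ ∑ b ∈ (Finset.Icc 1 nF ∪ Finset.Ioo nF a).filter (fun b => 0 < F.eval b),
          (((Finset.Icc (1:ℤ) N).filter (fun h => F.eval a ∣ h * F.eval b)).card : ℝ) := by
          exact_mod_cast (Finset.card_le_card hsub).trans Finset.card_biUnion_le
      _ ≤ ∑ b ∈ (Finset.Icc 1 nF ∪ Finset.Ioo nF a).filter (fun b => 0 < F.eval b),
          (N:ℝ) * ((Int.gcd (F.eval a) (F.eval b) : ℝ) / ((F.eval a : ℤ) : ℝ)) :=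
          Finset.sum_le_sum fun b _ => aux_count N _ _ hFa
      _ = (N:ℝ) * (∑ b ∈ (Finset.Icc 1 nF).filter (fun b => 0 < F.eval b),
            ((Int.gcd (F.eval a) (F.eval b) : ℝ) / ((F.eval a : ℤ) : ℝ))
          + ∑ b ∈ (Finset.Ioo nF a).filter (fun b => 0 < F.eval b),
            ((Int.gcd (F.eval a) (F.eval b) : ℝ) / ((F.eval a : ℤ) : ℝ))) := by
          rw [← Finset.mul_sum, Finset.filter_union, Finset.sum_union]
          exact Finset.disjoint_filter_filter hdisj
      _ ≤ _ := by
          refine mul_le_mul_of_nonneg_left ?_ (Nat.cast_nonneg N)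
          rw [add_comm]
          refine add_le_add ?_ ?_
          · exact Finset.sum_le_sum_of_subset_of_nonneg (Finset.filter_subset _ _)
              fun _ _ _ => by positivity
          · rw [Finset.sum_div]
            calc _ ≤ ∑ b ∈ (Finset.Icc 1 nF).filter (fun b => 0 < F.eval b),
                  |((F.eval b : ℤ) : ℝ)| / ((F.eval a : ℤ) : ℝ) := by
                  refine Finset.sum_le_sum fun b hb => ?_
                  have hb2 := (Finset.mem_filter.1 hb).2
                  refine div_le_div_of_nonneg_right ?_ hFaR.le
                  have : ((Int.gcd (F.eval a) (F.eval b) : ℕ) : ℤ) ≤ F.eval b :=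
                    Int.le_of_dvd hb2 (Int.gcd_dvd_right _ _)
                  refine le_trans ?_ (le_abs_self _)
                  exact_mod_cast this
              _ ≤ _ := Finset.sum_le_sum_of_subset_of_nonneg (Finset.filter_subset _ _)
                  fun _ _ _ => by positivity

lemma aux_sum (f : ℤ → ℝ) (N : ℕ) :
    ∑ a ∈ Finset.Icc (1:ℤ) N, f a = ∑ i ∈ Finset.range N, f ((i:ℤ) + 1) := by
  symm
  refine Finset.sum_bij (fun i _ => (i:ℤ) + 1) ?_ ?_ ?_ ?_
  · intro i hi
    simp only [Finset.mem_range, Finset.mem_Icc] at *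
    omega
  · intro i _ j _ h
    simpa using h
  · intro b hb
    simp only [Finset.mem_range, Finset.mem_Icc] at *
    exact ⟨(b-1).toNat, by omega, by omega⟩
  · intros; rfl

lemma aux_err (F : Polynomial ℤ) (nF : ℤ) (hnF : 0 < nF)
    (hnFprop : ∀ a b : ℤ, nF < a → 1 ≤ b → b < a →
      F.eval b < F.eval a ∧ 0 < F.eval a) :
    Tendsto (fun N : ℕ => (∑ a ∈ Finset.Icc (1:ℤ) N, errW F nF a) / N) atTop (nhds 0) := by
  have hlow : ∀ n : ℕ, (n:ℤ) ≤ F.eval (nF + 1 + n) := by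
    intro n
    induction n with
    | zero => simpa using (hnFprop (nF+1) 1 (by omega) le_rfl (by omega)).2.le
    | succ n ih =>
      have := (hnFprop (nF+1+(n+1:ℕ)) (nF+1+n) (by omega) (by omega) (by push_cast; omega)).1
      push_cast at *
      omega
  have hc : Tendsto (fun i : ℕ => errW F nF ((i:ℤ)+1)) atTop (nhds 0) := by
    rw [← tendsto_add_atTop_iff_nat nF.toNat]
    have hF : Tendsto (fun n : ℕ => ((F.eval (nF + 1 + n) : ℤ) : ℝ)) atTop atTop := by
      refine tendsto_atTop_mono (fun n => ?_) (tendsto_natCast_atTop_atTop (R := ℝ))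
      exact_mod_cast hlow n
    have := hF.const_div_atTop (∑ b ∈ Finset.Icc 1 nF, |((F.eval b : ℤ) : ℝ)|)
    refine this.congr fun n => ?_
    have e : (((n + nF.toNat : ℕ) : ℤ) + 1) = nF + 1 + n := by omega
    rw [errW, e, if_neg (by omega)]
  refine hc.cesaro.congr fun N => ?_
  rw [aux_sum]
  ring

theorem SF_small_implies_density_one
    (F : Polynomial ℤ) (hdeg : 1 ≤ F.natDegree) (hlead : 0 < F.leadingCoeff)
    (nF : ℤ) (hnF : 0 < nF)
    (hnFprop : ∀ a b : ℤ, nF < a → 1 ≤ b → b < a →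
      F.eval b < F.eval a ∧ 0 < F.eval a)
    (hSF : Tendsto (fun N : ℕ => SF F nF N / (N : ℝ)) atTop (nhds 0)) :
    Tendsto (fun N : ℕ => ((visibleSet F N).ncard : ℝ) / (N : ℝ) ^ 2)
      atTop (nhds 1) := by
  classical
  have hE := aux_err F nF hnF hnFprop
  have hlim : Tendsto (fun N : ℕ => 1 - (SF F nF N / (N : ℝ) +
      (∑ a ∈ Finset.Icc (1:ℤ) N, errW F nF a) / N)) atTop (nhds 1) := by
    simpa using (hSF.add hE).const_sub 1
  have key : ∀ N : ℕ, ((visibleSet F N).ncard : ℝ) ≤ (N:ℝ)^2 ∧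
      (N:ℝ)^2 ≤ (visibleSet F N).ncard +
        N * (SF F nF N + ∑ a ∈ Finset.Icc (1:ℤ) N, errW F nF a) := by
    intro N
    have hset : visibleSet F N = (((Finset.Icc (1:ℤ) N ×ˢ Finset.Icc (1:ℤ) N).filter
        (fun p => VisibleAlong F p.1 p.2) : Finset (ℤ × ℤ)) : Set (ℤ × ℤ)) := by
      ext p
      simp only [visibleSet, Set.mem_setOf_eq, Finset.coe_filter, Finset.mem_product,
        Finset.mem_Icc]
      tauto
    rw [hset, Set.ncard_coe_finset]
    have htot := Finset.card_filter_add_card_filter_not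
      (s := Finset.Icc (1:ℤ) N ×ˢ Finset.Icc (1:ℤ) N) (fun p => VisibleAlong F p.1 p.2)
    have hbox : (Finset.Icc (1:ℤ) N ×ˢ Finset.Icc (1:ℤ) N).card = N ^ 2 := by
      rw [Finset.card_product]; simp [sq]
    rw [hbox] at htot
    have hinv : (((Finset.Icc (1:ℤ) N ×ˢ Finset.Icc (1:ℤ) N).filter
        (fun p => ¬ VisibleAlong F p.1 p.2)).card : ℝ) ≤
        N * (SF F nF N + ∑ a ∈ Finset.Icc (1:ℤ) N, errW F nF a) := by
      have : ((Finset.Icc (1:ℤ) N ×ˢ Finset.Icc (1:ℤ) N).filter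
        (fun p => ¬ VisibleAlong F p.1 p.2)).card = ∑ a ∈ Finset.Icc (1:ℤ) N,
          ((Finset.Icc (1:ℤ) N).filter (fun h => ¬ VisibleAlong F a h)).card := by
        simp only [Finset.card_filter]
        rw [Finset.sum_product]
      rw [this, SF, ← Finset.sum_add_distrib, Finset.mul_sum]
      push_cast
      exact Finset.sum_le_sum fun a _ => aux_row F nF hnF hnFprop N a
    have htotR := congrArg (Nat.cast (R := ℝ)) htot
    push_cast at htotR
    constructor
    · rw [← htotR]
      have : (0:ℝ) ≤ (((Finset.Icc (1:ℤ) N ×ˢ Finset.Icc (1:ℤ) N).filter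
        (fun p => ¬ VisibleAlong F p.1 p.2)).card : ℝ) := Nat.cast_nonneg _
      linarith
    · linarith
  refine tendsto_of_tendsto_of_tendsto_of_le_of_le' hlim tendsto_const_nhds ?_ ?_
  · filter_upwards [eventually_gt_atTop 0] with N hN
    have hNR : (0:ℝ) < N := by exact_mod_cast hN
    have := (key N).2
    rw [le_div_iff₀ (by positivity)]
    have e : (1 - (SF F nF N / (N : ℝ) + (∑ a ∈ Finset.Icc (1:ℤ) N, errW F nF a) / N)) * (N:ℝ)^2
        = (N:ℝ)^2 - N * (SF F nF N + ∑ a ∈ Finset.Icc (1:ℤ) N, errW F nF a) := by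
      field_simp
    rw [e]; linarith
  · filter_upwards [eventually_gt_atTop 0] with N hN
    have hNR : (0:ℝ) < N := by exact_mod_cast hN
    rw [div_le_one (by positivity)]
    exact (key N).1
end

section
/- Let f ∈ ℤ[x] be a polynomial of degree d ≥ 2 having at least two distinct roots in an algebraic closure K of ℚ, and let r, s be positive integers with r < s. Then the polynomial G_{s,r}(x,y) = s·f(y) − r·f(x), viewed as a polynomial in two variables over K, has no factor of total degree 1; that is, there is no polynomial L(x,y) = αx + βy + γ with α, β, γ ∈ K not all zero and L of total degree 1 dividing G_{s,r}(x,y) in K[x,y]. -/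
open Polynomial MvPolynomial

/-- `G_{s,r}(x,y) = s·f(y) − r·f(x)`, viewed as a polynomial in the two variables
`X 0 = x`, `X 1 = y` with coefficients in `K`. -/
noncomputable def GpolyK (K : Type*) [CommRing K] (f : Polynomial ℤ) (s r : ℤ) :
    MvPolynomial (Fin 2) K :=
  (s : MvPolynomial (Fin 2) K) * Polynomial.aeval (MvPolynomial.X 1) f -
    (r : MvPolynomial (Fin 2) K) * Polynomial.aeval (MvPolynomial.X 0) f

lemma eval_GpolyK {K : Type*} [CommRing K] (f : Polynomial ℤ) (s r : ℤ) (x y : K) :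
    MvPolynomial.eval ![x, y] (GpolyK K f s r) =
      s * Polynomial.eval₂ (Int.castRingHom K) y f
        - r * Polynomial.eval₂ (Int.castRingHom K) x f := by
  have e : ∀ i : Fin 2, MvPolynomial.eval ![x, y]
      (Polynomial.aeval (MvPolynomial.X i : MvPolynomial (Fin 2) K) f)
      = Polynomial.eval₂ (Int.castRingHom K) (![x, y] i) f := by
    intro i
    rw [Polynomial.aeval_def, Polynomial.hom_eval₂, MvPolynomial.eval_X]
    congr 1
    exact RingHom.ext_int _ _
  simp only [GpolyK, map_sub, map_mul, map_intCast, e]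
  simp

theorem no_linear_factor_over_closure
    (f : Polynomial ℤ) (hd : 2 ≤ f.natDegree)
    (hroots : ∃ α β : AlgebraicClosure ℚ, α ≠ β ∧
      Polynomial.aeval α f = 0 ∧ Polynomial.aeval β f = 0)
    (r s : ℤ) (hr : 0 < r) (hrs : r < s) :
    ¬ ∃ α β γ : AlgebraicClosure ℚ,
      ¬ (α = 0 ∧ β = 0 ∧ γ = 0) ∧
      (MvPolynomial.C α * MvPolynomial.X 0 + MvPolynomial.C β * MvPolynomial.X 1 +
        MvPolynomial.C γ : MvPolynomial (Fin 2) (AlgebraicClosure ℚ)).totalDegree = 1 ∧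
      (MvPolynomial.C α * MvPolynomial.X 0 + MvPolynomial.C β * MvPolynomial.X 1 +
        MvPolynomial.C γ) ∣ GpolyK (AlgebraicClosure ℚ) f s r := by
  rintro ⟨α, β, γ, -, hdeg, hdvd⟩
  obtain ⟨u, v, huv, hu, hv⟩ := hroots
  have hf0 : f ≠ 0 := by
    rintro rfl
    simp at hd
  have hinj : Function.Injective (algebraMap ℤ (AlgebraicClosure ℚ)) :=
    FaithfulSMul.algebraMap_injective _ _
  have hs0 : (s : AlgebraicClosure ℚ) ≠ 0 := by
    have : s ≠ 0 := by omega
    exact_mod_cast this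
  have hr0 : (r : AlgebraicClosure ℚ) ≠ 0 := by
    have : r ≠ 0 := by omega
    exact_mod_cast this
  have hfin : (f.rootSet (AlgebraicClosure ℚ)).Finite := Polynomial.rootSet_finite f _
  have hmem : ∀ x : AlgebraicClosure ℚ,
      x ∈ f.rootSet (AlgebraicClosure ℚ) ↔ Polynomial.aeval x f = 0 := by
    intro x
    rw [Polynomial.mem_rootSet_of_injective hinj hf0]
  obtain ⟨z, hz⟩ : ∃ z : AlgebraicClosure ℚ, Polynomial.aeval z f ≠ 0 := by
    obtain ⟨z, hz⟩ := hfin.exists_notMem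
    exact ⟨z, fun h => hz ((hmem z).2 h)⟩
  have key : ∀ x y : AlgebraicClosure ℚ, α * x + β * y + γ = 0 →
      (s : AlgebraicClosure ℚ) * Polynomial.aeval y f = r * Polynomial.aeval x f := by
    intro x y h
    obtain ⟨Q, hQ⟩ := hdvd
    have h1 := congrArg (MvPolynomial.eval (![x, y] : Fin 2 → AlgebraicClosure ℚ)) hQ
    rw [eval_GpolyK, map_mul] at h1
    simp [h] at h1
    rw [Polynomial.aeval_def, Polynomial.aeval_def,
      RingHom.ext_int (algebraMap ℤ (AlgebraicClosure ℚ)) (Int.castRingHom _)]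
    exact sub_eq_zero.1 h1
  by_cases hβ : β = 0
  · subst hβ
    have hα : α ≠ 0 := by
      rintro rfl
      simp at hdeg
    have h1 : ∀ y, α * (-γ / α) + 0 * y + γ = 0 := by
      intro y
      field_simp
      ring
    have h2 := key _ u (h1 u)
    have h3 := key _ z (h1 z)
    rw [← h2, hu, mul_zero] at h3
    exact (mul_ne_zero hs0 hz) h3
  · obtain ⟨T, hT⟩ : ∃ T : AlgebraicClosure ℚ → AlgebraicClosure ℚ,
        T = fun x => (-α / β) * x + (-γ / β) := ⟨_, rfl⟩
    have hfT : ∀ x, Polynomial.aeval (T x) f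
        = (r / s : AlgebraicClosure ℚ) * Polynomial.aeval x f := by
      intro x
      have := key x (T x) (by rw [hT]; field_simp; ring)
      field_simp
      linear_combination this
    have hiter : ∀ (n : ℕ) x, Polynomial.aeval (T^[n] x) f
        = (r / s : AlgebraicClosure ℚ) ^ n * Polynomial.aeval x f := by
      intro n x
      induction n with
      | zero => simp
      | succ n ih => rw [Function.iterate_succ_apply', hfT, ih]; ring
    have haff : ∀ n : ℕ, ∃ c d : AlgebraicClosure ℚ, ∀ x, T^[n] x = c * x + d := by
      intro n
      induction n with
      | zero => exact ⟨1, 0, by simp⟩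
      | succ n ih =>
        obtain ⟨c, d, h⟩ := ih
        refine ⟨(-α / β) * c, (-α / β) * d + (-γ / β), fun x => ?_⟩
        rw [Function.iterate_succ_apply', h, hT]
        ring
    obtain ⟨m, n, hmn, heq⟩ : ∃ m n : ℕ, m < n ∧ (T^[m] u, T^[m] v) = (T^[n] u, T^[n] v) := by
      refine (hfin.prod hfin).exists_lt_map_eq_of_forall_mem
        (f := fun m : ℕ => (T^[m] u, T^[m] v)) ?_
      intro n
      exact ⟨(hmem _).2 (by simp [hiter, hu]), (hmem _).2 (by simp [hiter, hv])⟩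
    obtain ⟨hu', hv'⟩ := Prod.mk.inj heq
    obtain ⟨c, d, h1⟩ := haff m
    obtain ⟨c', d', h2⟩ := haff n
    rw [h1, h2] at hu' hv'
    have hc : c = c' := by
      have : (c - c') * (u - v) = 0 := by linear_combination hu' - hv'
      rcases mul_eq_zero.1 this with h | h
      · exact sub_eq_zero.1 h
      · exact absurd (sub_eq_zero.1 h) huv
    subst hc
    have hd' : d = d' := by linear_combination hu'
    subst hd'
    have h3 : T^[m] z = T^[n] z := by rw [h1, h2]
    have h4 := hiter m z
    rw [h3, hiter n z] at h4
    have h5 := mul_right_cancel₀ hz h4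
    have h6 : ((r : ℚ) / s) ^ n = ((r : ℚ) / s) ^ m := by
      apply (algebraMap ℚ (AlgebraicClosure ℚ)).injective
      simpa using h5
    have hsq : (0 : ℚ) < s := by exact_mod_cast hr.trans hrs
    have hrq : (0 : ℚ) < r := by exact_mod_cast hr
    have hlt : (r : ℚ) / s < 1 := by
      rw [div_lt_one hsq]
      exact_mod_cast hrs
    exact absurd h6 (pow_lt_pow_right_of_lt_one₀ (div_pos hrq hsq) hlt hmn).ne
end

section
/- Let f ∈ ℤ[x] be a polynomial of degree d ≥ 2 having at least two distinct roots in an algebraic closure of ℚ, and let r, s be positive integers with r < s. Then the polynomial G_{s,r}(x,y) = s·f(y) − r·f(x), viewed as a polynomial in two variables with real coefficients, has no factor of total degree 1 in ℝ[x,y]; equivalently, every irreducible factor of G_{s,r}(x,y) in ℝ[x,y] has total degree at least 2. -/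
open Polynomial MvPolynomial

lemma aux_poly (f : Polynomial ℤ) (hd : 2 ≤ f.natDegree)
    (hroots : ∃ α β : AlgebraicClosure ℚ, α ≠ β ∧
      Polynomial.aeval α f = 0 ∧ Polynomial.aeval β f = 0)
    (r s : ℤ) (hr : 0 < r) (hrs : r < s) (a b : ℝ)
    (h : Polynomial.C (s:ℝ) * (f.map (Int.castRingHom ℝ)).comp (Polynomial.C a * Polynomial.X + Polynomial.C b)
      = Polynomial.C (r:ℝ) * f.map (Int.castRingHom ℝ)) : False := by
  have hr' : (0:ℝ) < r := by exact_mod_cast hr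
  have hs' : (r:ℝ) < s := by exact_mod_cast hrs
  have hf0 : f ≠ 0 := by rintro rfl; simp at hd
  set F := f.map (Int.castRingHom ℝ) with hF
  have hFd : F.natDegree = f.natDegree :=
    Polynomial.natDegree_map_eq_of_injective Int.cast_injective f
  have hF0 : F.leadingCoeff ≠ 0 := by
    rw [Polynomial.leadingCoeff_ne_zero]
    intro h0; rw [h0] at hFd; simp at hFd; omega
  have ha0 : a ≠ 0 := by
    rintro rfl
    have h1 := congrArg Polynomial.natDegree h
    rw [Polynomial.natDegree_C_mul hr'.ne'] at h1
    simp [Polynomial.comp_C] at h1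
    have : (Polynomial.C (s:ℝ) * Polynomial.C (F.eval b)).natDegree = 0 := by
      rw [← Polynomial.C_mul]; exact Polynomial.natDegree_C _
    simp at this
    omega
  have hlead : (s:ℝ) * a ^ f.natDegree = r := by
    have h1 := congrArg Polynomial.leadingCoeff h
    rw [Polynomial.leadingCoeff_mul, Polynomial.leadingCoeff_mul, Polynomial.leadingCoeff_comp,
      Polynomial.leadingCoeff_C, Polynomial.leadingCoeff_C, Polynomial.leadingCoeff_linear ha0, hFd] at h1
    · apply mul_left_cancel₀ hF0
      linarith
    · rw [Polynomial.natDegree_linear ha0]; simp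
  have ha1 : |a| < 1 := by
    by_contra hc
    push Not at hc
    have h1 : 1 ≤ |a ^ f.natDegree| := by rw [abs_pow]; exact one_le_pow₀ hc
    have h2 : (s:ℝ) * |a ^ f.natDegree| = r := by
      have := congrArg abs hlead
      rwa [abs_mul, abs_of_pos hr', abs_of_pos (hr'.trans hs')] at this
    nlinarith
  -- roots in ℂ
  have hmap : ∀ z : ℂ, Polynomial.aeval z f = 0 → Polynomial.aeval ((a:ℂ) * z + b) f = 0 := by
    intro z hz
    have h1 := congrArg (Polynomial.aeval z) h
    have e1 : ∀ w : ℂ, Polynomial.aeval w F = Polynomial.aeval w f := by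
      intro w
      have := Polynomial.aeval_map_algebraMap ℝ w f
      simpa [hF] using this
    simp [Polynomial.aeval_comp, e1, hz] at h1
    rcases h1 with h1 | h1
    · exfalso; omega
    · exact h1
  obtain ⟨α, β, hne, h1, h2⟩ := hroots
  have hAlg : Algebra.IsAlgebraic ℚ (AlgebraicClosure ℚ) := by
    convert AlgebraicClosure.isAlgebraic ℚ
    · rfl
    · exact Subsingleton.elim _ _
  let φ : AlgebraicClosure ℚ →+* ℂ :=
    (IsAlgClosed.lift : AlgebraicClosure ℚ →ₐ[ℚ] ℂ).toRingHom
  have hφ : ∀ x, Polynomial.aeval x f = 0 → Polynomial.aeval (φ x) f = 0 := by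
    intro x hx
    rw [Polynomial.aeval_def] at hx ⊢
    have := Polynomial.hom_eval₂ f (algebraMap ℤ (AlgebraicClosure ℚ)) φ x
    rw [hx, map_zero] at this
    rw [this]
    congr 1
    exact RingHom.ext_int _ _
  let R : Set ℂ := f.rootSet ℂ
  have hR : R.Finite := f.rootSet_finite ℂ
  have hmem : ∀ z, z ∈ R ↔ Polynomial.aeval z f = 0 := fun z => by
    rw [Polynomial.mem_rootSet']
    refine ⟨fun h => h.2, fun h => ⟨?_, h⟩⟩
    rw [Ne, Polynomial.map_eq_zero_iff]
    · exact hf0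
    · exact Int.cast_injective
  obtain ⟨p, ⟨hp1, hp2, hp3⟩, hmin⟩ := Set.exists_min_image {p : ℂ × ℂ | p.1 ∈ R ∧ p.2 ∈ R ∧ p.1 ≠ p.2}
    (fun p => ‖p.1 - p.2‖) ((hR.prod hR).subset (fun p hp => ⟨hp.1, hp.2.1⟩))
    ⟨(φ α, φ β), (hmem _).2 (hφ _ h1), (hmem _).2 (hφ _ h2), fun h => hne (φ.injective h)⟩
  have haC : (a:ℂ) ≠ 0 := by exact_mod_cast ha0
  have := hmin ((a:ℂ) * p.1 + b, (a:ℂ) * p.2 + b)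
    ⟨(hmem _).2 (hmap _ ((hmem _).1 hp1)), (hmem _).2 (hmap _ ((hmem _).1 hp2)), fun h => hp3 (by
      simpa [haC] using h)⟩
  have e : (a:ℂ) * p.1 + b - ((a:ℂ) * p.2 + b) = a * (p.1 - p.2) := by ring
  simp only [e, norm_mul, Complex.norm_real, Real.norm_eq_abs] at this
  have hpos : 0 < ‖p.1 - p.2‖ := norm_pos_iff.2 (sub_ne_zero.2 hp3)
  nlinarith

lemma aux_aeval (f : Polynomial ℤ) (s r : ℤ) (p q : Polynomial ℝ) :
    MvPolynomial.aeval ![p, q] (Gpoly f s r) =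
      Polynomial.C (s:ℝ) * (f.map (Int.castRingHom ℝ)).comp q
      - Polynomial.C (r:ℝ) * (f.map (Int.castRingHom ℝ)).comp p := by
  have key : ∀ i, MvPolynomial.aeval ![p, q] (Polynomial.aeval (MvPolynomial.X i : MvPolynomial (Fin 2) ℝ) f)
      = (f.map (Int.castRingHom ℝ)).comp (![p, q] i) := by
    intro i
    have := Polynomial.aeval_algHom_apply ((MvPolynomial.aeval (R := ℝ) ![p, q]).restrictScalars ℤ)
      (MvPolynomial.X i : MvPolynomial (Fin 2) ℝ) f
    simp only [AlgHom.restrictScalars_apply, MvPolynomial.aeval_X] at this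
    rw [← this, Polynomial.comp, Polynomial.eval₂_map, Polynomial.aeval_def]
    congr 1
  simp [Gpoly, key]

lemma aux_main (f : Polynomial ℤ) (hd : 2 ≤ f.natDegree)
    (hroots : ∃ α β : AlgebraicClosure ℚ, α ≠ β ∧
      Polynomial.aeval α f = 0 ∧ Polynomial.aeval β f = 0)
    (r s : ℤ) (hr : 0 < r) (hrs : r < s) (α β γ : ℝ) (h0 : ¬ (α = 0 ∧ β = 0))
    (h : (MvPolynomial.C α * MvPolynomial.X 0 + MvPolynomial.C β * MvPolynomial.X 1 +
        MvPolynomial.C γ) ∣ Gpoly f s r) : False := by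
  have hs' : (s:ℝ) ≠ 0 := by have : s ≠ 0 := by omega
                             exact_mod_cast this
  obtain ⟨q, hq⟩ := h
  by_cases hβ : β = 0
  · have hα : α ≠ 0 := fun h => h0 ⟨h, hβ⟩
    have h1 := congrArg (MvPolynomial.aeval ![Polynomial.C (-γ/α), (Polynomial.X : Polynomial ℝ)]) hq
    rw [aux_aeval, map_mul] at h1
    have e : MvPolynomial.aeval ![Polynomial.C (-γ/α), (Polynomial.X : Polynomial ℝ)]
      (MvPolynomial.C α * MvPolynomial.X 0 + MvPolynomial.C β * MvPolynomial.X 1 +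
        MvPolynomial.C γ : MvPolynomial (Fin 2) ℝ) = 0 := by
      simp only [map_add, map_mul, MvPolynomial.aeval_X, MvPolynomial.aeval_C, hβ,
        Polynomial.algebraMap_eq]
      simp only [Matrix.cons_val_zero, Polynomial.C_0, zero_mul, add_zero, ← Polynomial.C_mul,
        ← Polynomial.C_add]
      rw [Polynomial.C_eq_zero]; field_simp; ring
    rw [e, zero_mul, Polynomial.comp_X, Polynomial.comp_C, ← Polynomial.C_mul, sub_eq_zero] at h1
    have h2 := congrArg Polynomial.natDegree h1
    rw [Polynomial.natDegree_C_mul hs', Polynomial.natDegree_C,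
      Polynomial.natDegree_map_eq_of_injective Int.cast_injective f] at h2
    omega
  · have h1 := congrArg (MvPolynomial.aeval ![(Polynomial.X : Polynomial ℝ),
      Polynomial.C (-α/β) * Polynomial.X + Polynomial.C (-γ/β)]) hq
    rw [aux_aeval, map_mul] at h1
    have e : MvPolynomial.aeval ![(Polynomial.X : Polynomial ℝ),
      Polynomial.C (-α/β) * Polynomial.X + Polynomial.C (-γ/β)]
      (MvPolynomial.C α * MvPolynomial.X 0 + MvPolynomial.C β * MvPolynomial.X 1 +
        MvPolynomial.C γ : MvPolynomial (Fin 2) ℝ) = 0 := by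
      simp only [map_add, map_mul, MvPolynomial.aeval_X, MvPolynomial.aeval_C,
        Polynomial.algebraMap_eq]
      simp only [Matrix.cons_val_zero, Matrix.cons_val_one, mul_add, ← mul_assoc, ← Polynomial.C_mul]
      rw [mul_div_cancel₀ _ hβ, mul_div_cancel₀ _ hβ]
      simp
    rw [e, zero_mul, Polynomial.comp_X, sub_eq_zero] at h1
    exact aux_poly f hd hroots r s hr hrs _ _ h1

lemma aux_form (g : MvPolynomial (Fin 2) ℝ) (hg : g.totalDegree < 2) :
    g = MvPolynomial.C (g.coeff (Finsupp.single 0 1)) * MvPolynomial.X 0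
      + MvPolynomial.C (g.coeff (Finsupp.single 1 1)) * MvPolynomial.X 1
      + MvPolynomial.C (g.coeff 0) := by
  ext m
  simp only [MvPolynomial.coeff_add, MvPolynomial.coeff_C_mul, MvPolynomial.coeff_X,
    MvPolynomial.coeff_C]
  have hm : m 0 + m 1 < 2 ∨ 2 ≤ m 0 + m 1 := lt_or_ge _ _
  have hext : ∀ n : Fin 2 →₀ ℕ, n = m ↔ n 0 = m 0 ∧ n 1 = m 1 := by
    intro n
    rw [Finsupp.ext_iff, Fin.forall_fin_two]
  rcases hm with hm | hm
  · have : (m 0 = 0 ∧ m 1 = 0) ∨ (m 0 = 1 ∧ m 1 = 0) ∨ (m 0 = 0 ∧ m 1 = 1) := by omega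
    rcases this with ⟨h1, h2⟩ | ⟨h1, h2⟩ | ⟨h1, h2⟩
    · have : (0 : Fin 2 →₀ ℕ) = m := (hext _).2 (by simp [h1, h2])
      subst this; simp
    · have : (Finsupp.single 0 1 : Fin 2 →₀ ℕ) = m := (hext _).2 (by simp [h1, h2])
      subst this; simp [Finsupp.single_left_inj, eq_comm (a := (0 : Fin 2 →₀ ℕ))]
    · have : (Finsupp.single 1 1 : Fin 2 →₀ ℕ) = m := (hext _).2 (by simp [h1, h2])
      subst this; simp [Finsupp.single_left_inj, eq_comm (a := (0 : Fin 2 →₀ ℕ))]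
  · rw [if_neg, if_neg, if_neg, MvPolynomial.coeff_eq_zero_of_totalDegree_lt]
    · simp
    · have : m.degree = m 0 + m 1 := by
        rw [Finsupp.degree_eq_sum, Fin.sum_univ_two]
      rw [Finsupp.degree] at this
      have h3 : ∑ i ∈ m.support, m i = m 0 + m 1 := this
      omega
    all_goals
      rw [hext]
      simp
      omega

theorem no_linear_factor_over_reals
    (f : Polynomial ℤ) (hd : 2 ≤ f.natDegree)
    (hroots : ∃ α β : AlgebraicClosure ℚ, α ≠ β ∧
      Polynomial.aeval α f = 0 ∧ Polynomial.aeval β f = 0)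
    (r s : ℤ) (hr : 0 < r) (hrs : r < s) :
    (¬ ∃ α β γ : ℝ,
      ¬ (α = 0 ∧ β = 0 ∧ γ = 0) ∧
      (MvPolynomial.C α * MvPolynomial.X 0 + MvPolynomial.C β * MvPolynomial.X 1 +
        MvPolynomial.C γ : MvPolynomial (Fin 2) ℝ).totalDegree = 1 ∧
      (MvPolynomial.C α * MvPolynomial.X 0 + MvPolynomial.C β * MvPolynomial.X 1 +
        MvPolynomial.C γ) ∣ Gpoly f s r) ∧
    (∀ g : MvPolynomial (Fin 2) ℝ, Irreducible g → g ∣ Gpoly f s r →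
      2 ≤ g.totalDegree) := by
  constructor
  · rintro ⟨α, β, γ, -, hdeg, hdvd⟩
    refine aux_main f hd hroots r s hr hrs α β γ ?_ hdvd
    rintro ⟨rfl, rfl⟩
    simp at hdeg
  · intro g hg hdvd
    by_contra hlt
    have hform := aux_form g (by omega)
    refine aux_main f hd hroots r s hr hrs _ _ _ ?_ (hform ▸ hdvd)
    rintro ⟨h1, h2⟩
    rw [h1, h2] at hform
    simp only [MvPolynomial.C_0, zero_mul, zero_add] at hform
    apply hg.not_isUnit
    have hc : g.coeff 0 ≠ 0 := by
      intro h
      rw [h, MvPolynomial.C_0] at hform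
      exact hg.ne_zero hform
    rw [hform]
    exact (IsUnit.mk0 _ hc).map MvPolynomial.C
end

section
/- Let f ∈ ℤ[x] be a polynomial of degree d ≥ 2 with positive leading coefficient having at least two distinct roots in an algebraic closure of ℚ, let m ≥ 2 be an integer, and let F(x) = f(x)^m; let n_F be as in the context. Let δ ≥ 2 be an integer such that for all positive integers s > r, every irreducible factor of G_{s,r}(x,y) = s·f(y) − r·f(x) in ℝ[x,y] has total degree at least δ. Then for every ε > 0 there is a constant C, depending only on F and ε, such that S_F(N) ≤ C·N^{1/δ + ε} for all positive integers N. -/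
open Polynomial Filter

lemma aux_poly_bound (P : Polynomial ℝ) (n : ℕ) (h : P.natDegree ≤ n) :
    ∃ A : ℝ, 0 ≤ A ∧ ∀ x : ℝ, 1 ≤ x → |P.eval x| ≤ A * x ^ n := by
  refine ⟨∑ i ∈ Finset.range (n+1), |P.coeff i|, Finset.sum_nonneg fun _ _ => abs_nonneg _, ?_⟩
  intro x hx
  rw [Polynomial.eval_eq_sum_range' (Nat.lt_succ_of_le h), Finset.sum_mul]
  refine (Finset.abs_sum_le_sum_abs _ _).trans (Finset.sum_le_sum ?_)
  intro i hi
  rw [abs_mul, abs_of_nonneg (by positivity : 0 ≤ x ^ i)]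
  have : i ≤ n := by simpa [Nat.lt_succ_iff] using hi
  gcongr

lemma aux_pow_diff (n : ℕ) (p q : ℝ) (hp : 0 ≤ p) (hq : 0 ≤ q) :
    |p - q| * q ^ n ≤ |p ^ (n+1) - q ^ (n+1)| := by
  rcases le_total p q with h | h
  · have h1 : p ^ n ≤ q ^ n := by gcongr
    rw [abs_sub_comm, abs_of_nonneg (by linarith), abs_sub_comm, abs_of_nonneg (by
      have : p ^ (n+1) ≤ q ^ (n+1) := by gcongr
      linarith)]
    have : p * p ^ n ≤ p * q ^ n := by gcongr
    rw [pow_succ, pow_succ]; nlinarith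
  · have h1 : q ^ n ≤ p ^ n := by gcongr
    rw [abs_of_nonneg (by linarith), abs_of_nonneg (by
      have : q ^ (n+1) ≤ p ^ (n+1) := by gcongr
      linarith)]
    have : p * q ^ n ≤ p * p ^ n := by gcongr
    rw [pow_succ, pow_succ]; nlinarith

lemma aux_asymp (P : Polynomial ℝ) (n : ℕ) (hn : P.natDegree = n + 2)
    (hl : 0 < P.leadingCoeff) :
    ∃ c K Y α : ℝ, 0 ≤ K ∧ 1 ≤ Y ∧ 0 < α ∧ ∀ x : ℝ, Y ≤ x →
      0 < P.eval x ∧ |(P.eval x) ^ ((1:ℝ) / (n + 2 : ℕ)) - α * (x + c)| ≤ α * (K / x) := by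
  set a0 := P.leadingCoeff with ha0
  set c : ℝ := P.coeff (n+1) / ((n+2) * a0) with hc
  set H : Polynomial ℝ := P - C a0 * (X + C c) ^ (n+2) with hH
  have hHd : H.natDegree ≤ n := by
    rw [Polynomial.natDegree_le_iff_coeff_eq_zero]
    intro k hk
    rw [hH, coeff_sub, coeff_C_mul, coeff_X_add_C_pow]
    rcases Nat.lt_trichotomy k (n+2) with h | h | h
    · have : k = n + 1 := by omega
      subst this
      have e : n + 2 - (n+1) = 1 := by omega
      have e2 : (n+2).choose (n+1) = n + 2 := Nat.choose_succ_self_right (n+1)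
      rw [e, e2, hc]
      push_cast
      have : (n:ℝ) + 2 ≠ 0 := by positivity
      field_simp
      ring
    · subst h
      simp [ha0, leadingCoeff, hn]
    · rw [Polynomial.coeff_eq_zero_of_natDegree_lt (by omega), Nat.choose_eq_zero_of_lt h]
      simp
  obtain ⟨A, hA, hAb⟩ := aux_poly_bound H n hHd
  have hdeg : 0 < P.degree := by
    rw [← natDegree_pos_iff_degree_pos]; omega
  have ht := Polynomial.tendsto_atTop_of_leadingCoeff_nonneg P hdeg hl.le
  obtain ⟨Y1, hY1⟩ := eventually_atTop.1 (ht.eventually_gt_atTop 0)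
  set α : ℝ := a0 ^ ((1:ℝ) / (n+2 : ℕ)) with hα
  have hαp : 0 < α := Real.rpow_pos_of_pos hl _
  have hαd : α ^ (n+2) = a0 := by
    rw [hα, ← Real.rpow_natCast, ← Real.rpow_mul hl.le, one_div, inv_mul_cancel₀ (by positivity), Real.rpow_one]
  refine ⟨c, A * 2 ^ (n+1) / a0, max 1 (max Y1 (2 * |c|)), α, by positivity, le_max_left _ _, hαp, ?_⟩
  intro x hx
  have hx1 : 1 ≤ x := (le_max_left _ _).trans hx
  have hx2 : Y1 ≤ x := ((le_max_left _ _).trans (le_max_right _ _)).trans hx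
  have hx3 : 2 * |c| ≤ x := ((le_max_right _ _).trans (le_max_right _ _)).trans hx
  have hpos := hY1 x hx2
  refine ⟨hpos, ?_⟩
  have hxc : x / 2 ≤ x + c := by linarith [neg_abs_le c]
  set p : ℝ := (P.eval x) ^ ((1:ℝ) / (n + 2 : ℕ)) with hp
  have hp0 : 0 ≤ p := Real.rpow_nonneg hpos.le _
  have hpd : p ^ (n+2) = P.eval x := by
    rw [hp, ← Real.rpow_natCast, ← Real.rpow_mul hpos.le, one_div, inv_mul_cancel₀ (by positivity), Real.rpow_one]
  have key := aux_pow_diff (n+1) p (α * (x+c)) hp0 (mul_nonneg hαp.le (by linarith))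
  have e1 : p ^ (n+1+1) - (α * (x+c)) ^ (n+1+1) = H.eval x := by
    rw [mul_pow, show n+1+1 = n+2 from rfl, hpd, hαd, hH]; simp
  rw [e1] at key
  have k2 := key.trans (hAb x hx1)
  have k3 : (α * (x/2)) ^ (n+1) ≤ (α * (x+c)) ^ (n+1) := by gcongr
  have k4 : |p - α * (x+c)| * (α * (x/2)) ^ (n+1) ≤ A * x ^ n :=
    (mul_le_mul_of_nonneg_left k3 (abs_nonneg _)).trans k2
  have k5 : 0 < (α * (x/2)) ^ (n+1) := by positivity
  rw [← le_div_iff₀ k5] at k4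
  refine k4.trans (le_of_eq ?_)
  rw [← hαd, mul_pow, div_pow]
  field_simp
  ring

lemma aux_count_s12 (P : Finset (ℤ × ℤ)) (d : ℕ) (N c K θ : ℝ) (hN : 1 ≤ N) (hK : 0 ≤ K) (hθ : 0 < θ)
    (hP : ∀ p ∈ P, 1 ≤ p.2 ∧ (p.2 : ℝ) ≤ N ∧ |(p.2 : ℝ) + c - θ * (p.1 + c)| ≤ K / p.2)
    (hline : ∀ Q ⊆ P, (∀ p ∈ Q, ∀ q ∈ Q, ∀ r ∈ Q,
      (q.1 - p.1) * (r.2 - p.2) - (r.1 - p.1) * (q.2 - p.2) = 0) → Q.card ≤ d) :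
    (P.card : ℝ) ≤ d * ((8 * K / θ + 1) * Real.log N + 1) := by
  classical
  set M : ℝ := 8 * K / θ + 1 with hM
  have hM1 : 1 ≤ M := by have : 0 ≤ 8 * K / θ := by positivity
                         linarith
  have hM0 : 0 < M := by linarith
  set T := ⌊M * Real.log N⌋₊
  have hlogN : 0 ≤ Real.log N := Real.log_nonneg hN
  let key : ℤ × ℤ → ℕ := fun p => ⌊M * Real.log p.2⌋₊
  have hmaps : ∀ p ∈ P, key p ∈ Finset.range (T+1) := by
    intro p hp
    obtain ⟨h1, h2, -⟩ := hP p hp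
    have h1' : (1:ℝ) ≤ p.2 := by exact_mod_cast h1
    rw [Finset.mem_range, Nat.lt_succ_iff]
    apply Nat.floor_le_floor
    gcongr
  have hfib : ∀ k ∈ Finset.range (T+1), (P.filter fun p => key p = k).card ≤ d := by
    intro k _
    apply hline _ (Finset.filter_subset _ _)
    set b0 := Real.exp (k / M) with hb0
    have hb0p : 0 < b0 := Real.exp_pos _
    have hb : ∀ p ∈ P.filter (fun p => key p = k), b0 ≤ p.2 ∧ (p.2:ℝ) ≤ b0 * (1 + 2 / M) ∧
        |(p.2 : ℝ) + c - θ * (p.1 + c)| ≤ K / b0 := by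
      intro p hp
      rw [Finset.mem_filter] at hp
      obtain ⟨hp, hk⟩ := hp
      obtain ⟨h1, h2, h3⟩ := hP p hp
      have h1' : (1:ℝ) ≤ p.2 := by exact_mod_cast h1
      have hl : 0 ≤ M * Real.log p.2 := mul_nonneg hM0.le (Real.log_nonneg h1')
      have h4 : (k:ℝ) ≤ M * Real.log p.2 := by rw [← hk]; exact Nat.floor_le hl
      have h5 : M * Real.log p.2 < k + 1 := by rw [← hk]; exact Nat.lt_floor_add_one _
      have h6 : b0 ≤ p.2 := by
        rw [hb0, ← Real.le_log_iff_exp_le (by linarith), div_le_iff₀ hM0]; linarith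
      refine ⟨h6, ?_, h3.trans (by gcongr)⟩
      have h7 : Real.log p.2 ≤ k / M + 1 / M := by
        rw [← add_div, le_div_iff₀ hM0]; linarith
      rw [Real.log_le_iff_le_exp (by linarith), Real.exp_add] at h7
      refine h7.trans ?_
      have h8 := Real.abs_exp_sub_one_le (x := 1 / M) (by
        rw [abs_of_pos (by positivity), div_le_one hM0]; exact hM1)
      rw [abs_of_pos (by positivity : 0 < 1 / M)] at h8
      have h9 := (le_abs_self _).trans h8
      gcongr
      have : 2 * (1 / M) = 2 / M := by ring
      linarith
    intro p hp q hq r hr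
    obtain ⟨p1, p2, p3⟩ := hb p hp
    obtain ⟨q1, q2, q3⟩ := hb q hq
    obtain ⟨r1, r2, r3⟩ := hb r hr
    set ep := (p.2 : ℝ) + c - θ * (p.1 + c) with hep
    set eq := (q.2 : ℝ) + c - θ * (q.1 + c) with heq
    set er := (r.2 : ℝ) + c - θ * (r.1 + c) with her
    set D := (q.1 - p.1) * (r.2 - p.2) - (r.1 - p.1) * (q.2 - p.2) with hD
    have hDr : θ * (D : ℝ) = (ep - eq) * (r.2 - p.2) - (ep - er) * (q.2 - p.2) := by
      rw [hD, hep, heq, her]; push_cast; ring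
    have i1 : |ep - eq| ≤ 2 * (K / b0) := (abs_sub _ _).trans (by linarith)
    have i2 : |ep - er| ≤ 2 * (K / b0) := (abs_sub _ _).trans (by linarith)
    have i3 : |(r.2:ℝ) - p.2| ≤ b0 * (2 / M) := by rw [abs_le]; constructor <;> nlinarith
    have i4 : |(q.2:ℝ) - p.2| ≤ b0 * (2 / M) := by rw [abs_le]; constructor <;> nlinarith
    have i5 : θ * |(D:ℝ)| ≤ 8 * K / M := by
      have j0 : θ * |(D:ℝ)| = |θ * (D:ℝ)| := by rw [abs_mul, abs_of_pos hθ]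
      rw [j0, hDr]
      refine (abs_sub _ _).trans ?_
      rw [abs_mul, abs_mul]
      have j1 : |ep - eq| * |(r.2:ℝ) - p.2| ≤ 2 * (K / b0) * (b0 * (2/M)) := by gcongr
      have j2 : |ep - er| * |(q.2:ℝ) - p.2| ≤ 2 * (K / b0) * (b0 * (2/M)) := by gcongr
      have j3 : 2 * (K / b0) * (b0 * (2/M)) = 4 * K / M := by field_simp; ring
      have j4 : 8 * K / M = 4 * K / M + 4 * K / M := by ring
      linarith
    have i6 : 8 * K / M < θ := by
      rw [div_lt_iff₀ hM0, hM, mul_add, mul_div_cancel₀ _ hθ.ne']; linarith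
    have i7 : |(D:ℝ)| < 1 := by
      by_contra h
      push Not at h
      nlinarith
    have i8 : |D| < 1 := by exact_mod_cast i7
    exact Int.abs_lt_one_iff.1 i8
  have hcard := Finset.card_le_mul_card_image_of_maps_to hmaps d hfib
  rw [Finset.card_range] at hcard
  have : (P.card : ℝ) ≤ d * (T + 1) := by exact_mod_cast hcard
  refine this.trans ?_
  gcongr
  exact Nat.floor_le (by positivity)

lemma aux_nofactor (f : Polynomial ℤ) (s r : ℤ)
    (h : ∀ g : MvPolynomial (Fin 2) ℝ, Irreducible g → g ∣ Gpoly f s r → 2 ≤ g.totalDegree)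
    (θ κ : ℝ) :
    C (s:ℝ) * ((f.map (Int.castRingHom ℝ)).comp (C θ * X + C κ))
      - C (r:ℝ) * (f.map (Int.castRingHom ℝ)) ≠ 0 := by
  intro h0
  set A : MvPolynomial (Fin 2) ℝ := MvPolynomial.C θ * MvPolynomial.X 0 + MvPolynomial.C κ with hA
  have h1 := congrArg (Polynomial.aeval (MvPolynomial.X 0 : MvPolynomial (Fin 2) ℝ)) h0
  have hint : (Int.castRingHom ℝ) = algebraMap ℤ ℝ := rfl
  rw [map_sub, map_mul, map_mul, Polynomial.aeval_comp, map_zero, hint,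
    Polynomial.aeval_map_algebraMap, Polynomial.aeval_map_algebraMap] at h1
  have hA' : (Polynomial.aeval (MvPolynomial.X 0 : MvPolynomial (Fin 2) ℝ)) (C θ * X + C κ) = A := by
    simp [hA, MvPolynomial.algebraMap_eq]
  rw [hA'] at h1
  simp only [Polynomial.aeval_C] at h1
  rw [map_intCast, map_intCast] at h1
  set l : MvPolynomial (Fin 2) ℝ := MvPolynomial.X 1 - A with hl
  have hdvd : l ∣ Gpoly f s r := by
    have e : Gpoly f s r = (s : MvPolynomial (Fin 2) ℝ) *
        (Polynomial.aeval (MvPolynomial.X 1) f - Polynomial.aeval A f) := by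
      unfold Gpoly
      linear_combination h1
    rw [e]
    refine Dvd.dvd.mul_left ?_ _
    have := Polynomial.sub_dvd_eval_sub (MvPolynomial.X 1 : MvPolynomial (Fin 2) ℝ) A
      (f.map (algebraMap ℤ (MvPolynomial (Fin 2) ℝ)))
    simpa [Polynomial.eval_map_algebraMap] using this
  have hco : l.coeff (Finsupp.single 1 1) = 1 := by
    rw [hl, hA]
    simp only [MvPolynomial.coeff_sub, MvPolynomial.coeff_add, MvPolynomial.coeff_C_mul,
      MvPolynomial.coeff_C, MvPolynomial.coeff_X]
    have e1 : (Finsupp.single (0: Fin 2) 1 : Fin 2 →₀ ℕ) ≠ Finsupp.single 1 1 := by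
      intro h; have := DFunLike.congr_fun h 1; simp at this
    have e2 : (0 : Fin 2 →₀ ℕ) ≠ Finsupp.single 1 1 := by
      intro h; have := DFunLike.congr_fun h 1; simp at this
    simp [e1, e2]
  have hl0 : l ≠ 0 := by intro h; rw [h] at hco; simp at hco
  have hlu : ¬ IsUnit l := by
    intro hu
    rw [MvPolynomial.isUnit_iff_eq_C_of_isReduced] at hu
    obtain ⟨c, -, hc⟩ := hu
    rw [hc, MvPolynomial.coeff_C] at hco
    have e2 : (0 : Fin 2 →₀ ℕ) ≠ Finsupp.single 1 1 := by
      intro h; have := DFunLike.congr_fun h 1; simp at this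
    simp [e2] at hco
  have hld : l.totalDegree ≤ 1 := by
    rw [hl]
    refine (MvPolynomial.totalDegree_sub _ _).trans (max_le (by simp) ?_)
    rw [hA]
    refine (MvPolynomial.totalDegree_add _ _).trans (max_le ?_ (by simp))
    refine (MvPolynomial.totalDegree_mul _ _).trans (by simp)
  obtain ⟨g, hg, hgl⟩ := WfDvdMonoid.exists_irreducible_factor hlu hl0
  have h2 := h g hg (hgl.trans hdvd)
  have h3 := MvPolynomial.totalDegree_le_of_dvd_of_isDomain hgl hl0
  omega

lemma aux_line (f : Polynomial ℤ) (hd : 2 ≤ f.natDegree) (s r : ℤ)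
    (h : ∀ g : MvPolynomial (Fin 2) ℝ, Irreducible g → g ∣ Gpoly f s r → 2 ≤ g.totalDegree)
    (Q : Finset (ℤ × ℤ)) (hQ : ∀ p ∈ Q, s * f.eval p.2 = r * f.eval p.1)
    (hinj : ∀ p ∈ Q, ∀ q ∈ Q, p.1 = q.1 → p = q)
    (hdet : ∀ p ∈ Q, ∀ q ∈ Q, ∀ r ∈ Q,
      (q.1 - p.1) * (r.2 - p.2) - (r.1 - p.1) * (q.2 - p.2) = 0) : Q.card ≤ f.natDegree := by
  classical
  by_cases hc : Q.card ≤ 1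
  · omega
  push Not at hc
  obtain ⟨p, hp, q, hq, hpq⟩ := Finset.one_lt_card.1 hc
  have hu : q.1 - p.1 ≠ 0 := fun h0 => hpq (hinj p hp q hq (by omega))
  have huR : ((q.1:ℝ) - p.1) ≠ 0 := by exact_mod_cast hu
  set θ : ℝ := ((q.2:ℝ) - p.2) / (q.1 - p.1) with hθ
  set κ : ℝ := p.2 - θ * p.1 with hκ
  set P := C (s:ℝ) * ((f.map (Int.castRingHom ℝ)).comp (C θ * X + C κ))
      - C (r:ℝ) * (f.map (Int.castRingHom ℝ)) with hP
  have hP0 : P ≠ 0 := aux_nofactor f s r h θ κ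
  have hPd : P.natDegree ≤ f.natDegree := by
    refine (natDegree_sub_le _ _).trans (max_le ?_ ?_)
    · refine (natDegree_C_mul_le _ _).trans (natDegree_comp_le.trans ?_)
      have a1 : (f.map (Int.castRingHom ℝ)).natDegree ≤ f.natDegree := natDegree_map_le
      have a2 : (C θ * X + C κ : ℝ[X]).natDegree ≤ 1 := natDegree_linear_le
      calc _ ≤ f.natDegree * 1 := Nat.mul_le_mul a1 a2
        _ = _ := mul_one _
    · exact (natDegree_C_mul_le _ _).trans natDegree_map_le
  have hev : ∀ z : ℤ, (f.map (Int.castRingHom ℝ)).eval (z:ℝ) = ((f.eval z : ℤ) : ℝ) := by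
    intro z
    simp [Polynomial.eval_intCast_map]
  have hroot : ∀ z ∈ Q, ((z.1:ℤ):ℝ) ∈ P.roots.toFinset := by
    intro z hz
    rw [Multiset.mem_toFinset, mem_roots hP0, IsRoot.def, hP]
    have e : θ * (z.1:ℝ) + κ = z.2 := by
      have := hdet p hp q hq z hz
      have t : ((q.1:ℝ) - p.1) * (z.2 - p.2) - (z.1 - p.1) * (q.2 - p.2) = 0 := by exact_mod_cast this
      rw [hκ, hθ]
      field_simp
      linarith
    simp only [eval_sub, eval_mul, eval_C, eval_comp, eval_add, eval_X]
    rw [e, hev, hev]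
    have := hQ z hz
    have t : (s:ℝ) * (f.eval z.2 : ℤ) = r * (f.eval z.1 : ℤ) := by exact_mod_cast this
    linarith
  calc Q.card = (Q.image fun z => (z.1:ℝ)).card := by
        rw [Finset.card_image_of_injOn]
        intro x hx y hy hxy
        exact hinj x hx y hy (by simpa using hxy)
    _ ≤ P.roots.toFinset.card := Finset.card_le_card (by
        intro x hx
        rw [Finset.mem_image] at hx
        obtain ⟨z, hz, rfl⟩ := hx
        exact hroot z hz)
    _ ≤ Multiset.card P.roots := Multiset.toFinset_card_le _
    _ ≤ P.natDegree := P.card_roots'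
    _ ≤ _ := hPd

lemma aux_main_s12 (f : Polynomial ℤ) (hd : 2 ≤ f.natDegree) (hlead : 0 < f.leadingCoeff)
    (nF : ℤ) (hnF : 0 < nF)
    (hinj : ∀ a b : ℤ, nF < a → nF < b → (f.eval a).natAbs = (f.eval b).natAbs → a = b)
    (h : ∀ s r : ℤ, 0 < r → r < s → ∀ g : MvPolynomial (Fin 2) ℝ,
      Irreducible g → g ∣ Gpoly f s r → 2 ≤ g.totalDegree) :
    ∃ B : ℝ, 0 ≤ B ∧ ∀ N s r : ℕ, 0 < N → 0 < r → r < s → ∀ P : Finset (ℤ × ℤ),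
      (∀ p ∈ P, nF < p.2 ∧ p.2 < p.1 ∧ p.1 ≤ N ∧
        s * (f.eval p.2).natAbs = r * (f.eval p.1).natAbs) →
      (P.card : ℝ) ≤ B * (1 + Real.log N) * √((s:ℝ) / r) := by
  classical
  obtain ⟨n, hn⟩ : ∃ n, f.natDegree = n + 2 := ⟨f.natDegree - 2, by omega⟩
  set fR := f.map (Int.castRingHom ℝ) with hfR
  have hev : ∀ z : ℤ, fR.eval (z:ℝ) = ((f.eval z : ℤ) : ℝ) := by
    intro z
    simp [hfR, Polynomial.eval_intCast_map]
  have hdR : fR.natDegree = n + 2 := by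
    rw [hfR, natDegree_map_eq_of_injective Int.cast_injective, hn]
  have hlR : 0 < fR.leadingCoeff := by
    rw [hfR, leadingCoeff_map_of_injective Int.cast_injective]
    simpa using hlead
  obtain ⟨c, K, Y, α, hK, hY, hα, hasy⟩ := aux_asymp fR n hdR hlR
  set d := f.natDegree with hdd
  refine ⟨(Y + 1) + d * (16 * K + 1) + d, by positivity, ?_⟩
  intro N s r hN hr hrs P hP
  have hrR : (0:ℝ) < r := by exact_mod_cast hr
  have hrsR : (r:ℝ) < s := by exact_mod_cast hrs
  have hsR : (0:ℝ) < s := hrR.trans hrsR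
  have hNR : (1:ℝ) ≤ N := by exact_mod_cast hN
  have hL : 0 ≤ Real.log N := Real.log_nonneg hNR
  set L := Real.log N with hLdef
  set R := √((s:ℝ) / r) with hRdef
  have hsr1 : (1:ℝ) ≤ s / r := by rw [le_div_iff₀ hrR]; linarith
  have hR1 : 1 ≤ R := by rw [hRdef]; exact Real.one_le_sqrt.2 hsr1
  set e : ℝ := (1:ℝ) / (n + 2 : ℕ) with he
  have he0 : 0 ≤ e := by positivity
  set θ : ℝ := ((r:ℝ) / s) ^ e with hθ
  have hθ0 : 0 < θ := Real.rpow_pos_of_pos (by positivity) _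
  have hθ1 : θ ≤ 1 := Real.rpow_le_one (by positivity) (by rw [div_le_one hsR]; exact hrsR.le) he0
  have hθR : 1 / θ ≤ R := by
    rw [hθ, one_div, ← Real.inv_rpow (by positivity), inv_div, hRdef, Real.sqrt_eq_rpow]
    apply Real.rpow_le_rpow_of_exponent_le hsr1
    rw [he]
    apply one_div_le_one_div_of_le (by norm_num)
    push_cast
    linarith [Nat.cast_nonneg (α := ℝ) n]
  have h21 : ∀ p ∈ P, ∀ q ∈ P, p.1 = q.1 → p = q := by
    intro p hp q hq hpq
    obtain ⟨p1, p2, p3, p4⟩ := hP p hp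
    obtain ⟨q1, q2, q3, q4⟩ := hP q hq
    rw [hpq, ← q4] at p4
    exact Prod.ext hpq (hinj _ _ p1 q1 (Nat.eq_of_mul_eq_mul_left (by omega) p4))
  have h12 : ∀ p ∈ P, ∀ q ∈ P, p.2 = q.2 → p = q := by
    intro p hp q hq hpq
    obtain ⟨p1, p2, p3, p4⟩ := hP p hp
    obtain ⟨q1, q2, q3, q4⟩ := hP q hq
    rw [hpq, q4] at p4
    exact Prod.ext (hinj _ _ (by omega) (by omega) (Nat.eq_of_mul_eq_mul_left hr p4)).symm hpq
  -- small points
  have hsmall : ((P.filter fun p => ¬ (Y ≤ (p.2:ℝ))).card : ℝ) ≤ Y + 1 := by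
    have c1 : (P.filter fun p => ¬ (Y ≤ (p.2:ℝ))).card ≤ (Finset.Icc 1 ⌊Y⌋₊).card := by
      apply Finset.card_le_card_of_injOn (fun p => p.2.toNat)
      · intro p hp
        simp only [Finset.coe_filter, Set.mem_ofPred_eq] at hp
        obtain ⟨hp, hpY⟩ := hp
        obtain ⟨p1, -⟩ := hP p hp
        push Not at hpY
        simp only [Finset.coe_Icc, Set.mem_Icc]
        refine ⟨by omega, Nat.le_floor ?_⟩
        have : ((p.2.toNat : ℕ) : ℝ) = (p.2 : ℝ) := by
          have : ((p.2.toNat : ℕ) : ℤ) = p.2 := Int.toNat_of_nonneg (by omega)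
          exact_mod_cast this
        rw [this]; exact hpY.le
      · intro p hp q hq hpq
        simp only [Finset.coe_filter, Set.mem_ofPred_eq] at hp hq
        have p1 := (hP p hp.1).1
        have q1 := (hP q hq.1).1
        exact h12 p hp.1 q hq.1 (by simp only at hpq; omega)
    rw [Nat.card_Icc] at c1
    have c2 : ((P.filter fun p => ¬ (Y ≤ (p.2:ℝ))).card : ℝ) ≤ ⌊Y⌋₊ := by
      exact_mod_cast (by omega)
    linarith [Nat.floor_le (by linarith : 0 ≤ Y)]
  have hlarge : ((P.filter fun p => Y ≤ (p.2:ℝ)).card : ℝ) ≤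
      d * ((8 * (2 * K) / θ + 1) * Real.log N + 1) := by
    have hpos : ∀ p ∈ P, Y ≤ (p.2:ℝ) → Y ≤ (p.1 : ℝ) := by
      intro p hp hpY
      have : (p.2:ℝ) < p.1 := by exact_mod_cast (hP p hp).2.1
      linarith
    have hreal : ∀ p ∈ P, Y ≤ (p.2:ℝ) → (s:ℤ) * f.eval p.2 = r * f.eval p.1 := by
      intro p hp hpY
      have t1 := (hasy _ hpY).1
      have t2 := (hasy _ (hpos p hp hpY)).1
      rw [hev] at t1 t2
      have t1' : 0 < f.eval p.2 := by exact_mod_cast t1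
      have t2' : 0 < f.eval p.1 := by exact_mod_cast t2
      have := (hP p hp).2.2.2
      have u : (s:ℤ) * (f.eval p.2).natAbs = r * (f.eval p.1).natAbs := by exact_mod_cast this
      rwa [Int.natAbs_of_nonneg t1'.le, Int.natAbs_of_nonneg t2'.le] at u
    refine aux_count_s12 _ d N c (2 * K) θ hNR (by positivity) hθ0 ?_ ?_
    · intro p hp
      rw [Finset.mem_filter] at hp
      obtain ⟨hp, hpY⟩ := hp
      obtain ⟨p1, p2, p3, p4⟩ := hP p hp
      have hpY1 := hpos p hp hpY
      have p2R : (p.2:ℝ) < p.1 := by exact_mod_cast p2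
      have p3R : (p.1:ℝ) ≤ N := by exact_mod_cast p3
      refine ⟨by omega, by linarith, ?_⟩
      obtain ⟨f2, g2⟩ := hasy _ hpY
      obtain ⟨f1, g1⟩ := hasy _ hpY1
      have er : (s:ℝ) * fR.eval (p.2:ℝ) = r * fR.eval (p.1:ℝ) := by
        rw [hev, hev]; exact_mod_cast hreal p hp hpY
      have er2 : fR.eval (p.2:ℝ) = (r / s) * fR.eval (p.1:ℝ) := by
        field_simp; linarith
      have er3 : (fR.eval (p.2:ℝ)) ^ e = θ * (fR.eval (p.1:ℝ)) ^ e := by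
        rw [er2, Real.mul_rpow (by positivity) f1.le]
      rw [er3] at g2
      set U := (fR.eval (p.1:ℝ)) ^ e
      have hb0 : (0:ℝ) < p.2 := by linarith
      have ha0 : (0:ℝ) < p.1 := by linarith
      have g3 : K / (p.1:ℝ) ≤ K / p.2 := by gcongr
      have g4 : |U - α * ((p.1:ℝ) + c)| ≤ α * (K / p.2) := g1.trans (by gcongr)
      have g5 : |θ * (U - α * ((p.1:ℝ) + c))| ≤ α * (K / p.2) := by
        rw [abs_mul, abs_of_pos hθ0]
        calc _ ≤ 1 * |U - α * ((p.1:ℝ) + c)| := by gcongr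
          _ ≤ _ := by rw [one_mul]; exact g4
      have g6 : α * |(p.2:ℝ) + c - θ * (p.1 + c)| ≤ α * (2 * K / p.2) := by
        have e1 : α * |(p.2:ℝ) + c - θ * (p.1 + c)| =
            |θ * (U - α * ((p.1:ℝ) + c)) - (θ * U - α * ((p.2:ℝ) + c))| := by
          rw [← abs_of_pos hα, ← abs_mul, abs_of_pos hα]; congr 1; ring
        rw [e1]
        refine (abs_sub _ _).trans ((add_le_add g5 g2).trans (le_of_eq ?_))
        ring
      exact le_of_mul_le_mul_left g6 hα
    · intro Q hQ hdet
      have hQP : ∀ p ∈ Q, p ∈ P ∧ Y ≤ (p.2:ℝ) := fun p hp => Finset.mem_filter.1 (hQ hp)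
      refine aux_line f hd s r (h s r (by exact_mod_cast hr) (by exact_mod_cast hrs)) Q ?_ ?_ hdet
      · intro p hp; exact hreal p (hQP p hp).1 (hQP p hp).2
      · intro p hp q hq; exact h21 p (hQP p hp).1 q (hQP q hq).1
  have hsplit := Finset.card_filter_add_card_filter_not (s := P) (fun p => Y ≤ (p.2:ℝ))
  have hsplitR : (P.card : ℝ) = ((P.filter fun p => Y ≤ (p.2:ℝ)).card : ℝ) +
      ((P.filter fun p => ¬ (Y ≤ (p.2:ℝ))).card : ℝ) := by exact_mod_cast hsplit.symm
  rw [hsplitR]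
  have hd0 : (0:ℝ) ≤ d := Nat.cast_nonneg _
  have hW : 1 ≤ (1 + L) * R := by nlinarith
  have w1 : Y + 1 ≤ (Y + 1) * ((1+L)*R) := le_mul_of_one_le_right (by linarith) hW
  have w2 : (d:ℝ) ≤ d * ((1+L)*R) := le_mul_of_one_le_right hd0 hW
  have w3 : (8 * (2*K) / θ + 1) * L ≤ (16 * K + 1) * ((1+L)*R) := by
    have v1 : 8 * (2*K) / θ + 1 ≤ (16*K+1) * R := by
      have : 8 * (2*K) / θ = 16 * K * (1/θ) := by ring
      rw [this, add_mul, one_mul]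
      gcongr
    calc _ ≤ ((16*K+1) * R) * (1 + L) := by gcongr; linarith
      _ = _ := by ring
  have w4 := mul_le_mul_of_nonneg_left w3 hd0
  rw [← hLdef] at hlarge
  calc _ ≤ d * ((8 * (2 * K) / θ + 1) * L + 1) + (Y+1) := add_le_add hlarge hsmall
    _ = d * ((8 * (2 * K) / θ + 1) * L) + d + (Y+1) := by ring
    _ ≤ d * ((16 * K + 1) * ((1+L)*R)) + d * ((1+L)*R) + (Y + 1) * ((1+L)*R) := by gcongr
    _ = _ := by ring

lemma aux_sqrt_sum (s : ℕ) : ∑ r ∈ Finset.Ico 1 (s+1), 1 / √(r:ℝ) ≤ 2 * √(s:ℝ) := by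
  induction s with
  | zero => simp
  | succ s ih =>
    rw [Finset.sum_Ico_succ_top (by omega)]
    have hs : (0:ℝ) ≤ s := Nat.cast_nonneg s
    have a1 : 0 < √((s+1:ℕ):ℝ) := Real.sqrt_pos.2 (by positivity)
    have a2 : √(s:ℝ) ^ 2 = s := Real.sq_sqrt hs
    have a3 : √((s+1:ℕ):ℝ) ^ 2 = s + 1 := by rw [Real.sq_sqrt (by positivity)]; push_cast; ring
    have a4 : 1 / √((s+1:ℕ):ℝ) ≤ 2 * √((s+1:ℕ):ℝ) - 2 * √(s:ℝ) := by
      rw [div_le_iff₀ a1]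
      nlinarith [sq_nonneg (√((s+1:ℕ):ℝ) - √(s:ℝ))]
    linarith

lemma aux_double (S : ℕ) (W : ℝ) (hW : 0 ≤ W) :
    ∑ s ∈ Finset.Icc 1 S, ∑ r ∈ Finset.Ico 1 s, (W * √((s:ℝ) / r)) * (1 / (s:ℝ) ^ 2)
      ≤ 2 * W * (1 + Real.log S) := by
  have h1 : ∀ s ∈ Finset.Icc 1 S, ∑ r ∈ Finset.Ico 1 s, (W * √((s:ℝ) / r)) * (1 / (s:ℝ) ^ 2)
      ≤ 2 * W * ((s:ℝ))⁻¹ := by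
    intro s hs
    have hs1 : 1 ≤ s := (Finset.mem_Icc.1 hs).1
    have hs0 : (0:ℝ) < s := by exact_mod_cast hs1
    have e : ∑ r ∈ Finset.Ico 1 s, (W * √((s:ℝ) / r)) * (1 / (s:ℝ) ^ 2)
        = (W * √(s:ℝ) / (s:ℝ)^2) * ∑ r ∈ Finset.Ico 1 s, 1 / √(r:ℝ) := by
      rw [Finset.mul_sum]
      refine Finset.sum_congr rfl fun r _ => ?_
      rw [Real.sqrt_div hs0.le]; ring
    rw [e]
    have b1 : ∑ r ∈ Finset.Ico 1 s, 1 / √(r:ℝ) ≤ 2 * √(s:ℝ) := by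
      refine le_trans ?_ (aux_sqrt_sum s)
      apply Finset.sum_le_sum_of_subset_of_nonneg
      · exact Finset.Ico_subset_Ico_right (by omega)
      · intros; positivity
    calc _ ≤ (W * √(s:ℝ) / (s:ℝ)^2) * (2 * √(s:ℝ)) := by gcongr
      _ = 2 * W * (√(s:ℝ) ^ 2) / (s:ℝ)^2 := by ring
      _ = _ := by rw [Real.sq_sqrt hs0.le]; field_simp
  refine (Finset.sum_le_sum h1).trans ?_
  rw [← Finset.mul_sum]
  have h2 := harmonic_le_one_add_log S
  rw [harmonic_eq_sum_Icc] at h2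
  push_cast at h2
  gcongr

theorem SF_upper_bound
    (f : Polynomial ℤ) (hd : 2 ≤ f.natDegree) (hlead : 0 < f.leadingCoeff)
    (hroots : ∃ α β : AlgebraicClosure ℚ, α ≠ β ∧
      Polynomial.aeval α f = 0 ∧ Polynomial.aeval β f = 0)
    (m : ℕ) (hm : 2 ≤ m)
    (nF : ℤ) (hnF : 0 < nF)
    (hnFprop : ∀ a b : ℤ, nF < a → 1 ≤ b → b < a →
      (f ^ m).eval b < (f ^ m).eval a ∧ 0 < (f ^ m).eval a)
    (δ : ℕ) (hδ : 2 ≤ δ)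
    (hδprop : ∀ s r : ℤ, 0 < r → r < s →
      ∀ g : MvPolynomial (Fin 2) ℝ, Irreducible g → g ∣ Gpoly f s r →
        δ ≤ g.totalDegree) :
    ∀ ε : ℝ, 0 < ε → ∃ C : ℝ, ∀ N : ℕ, 0 < N →
      SF (f ^ m) nF N ≤ C * (N : ℝ) ^ ((1 : ℝ) / δ + ε) := by
  classical
  have hm0 : m ≠ 0 := by omega
  have hpow : ∀ a : ℤ, nF < a → (f ^ m).eval a = (((f.eval a).natAbs ^ m : ℕ) : ℤ) := by
    intro a ha
    have h1 := (hnFprop a 1 ha le_rfl (by omega)).2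
    rw [← Int.natAbs_of_nonneg h1.le, eval_pow, Int.natAbs_pow]
  have habs0 : ∀ a : ℤ, nF < a → 0 < (f.eval a).natAbs := by
    intro a ha
    have h1 := (hnFprop a 1 ha le_rfl (by omega)).2
    rw [Int.natAbs_pos]
    intro h0
    rw [eval_pow, h0, zero_pow hm0] at h1
    exact lt_irrefl _ h1
  have hmono : ∀ a b : ℤ, nF < b → b < a → (f.eval b).natAbs < (f.eval a).natAbs := by
    intro a b hb hab
    have h1 := (hnFprop a b (by omega) (by omega) hab).1
    rw [hpow a (by omega), hpow b hb] at h1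
    have h2 : (f.eval b).natAbs ^ m < (f.eval a).natAbs ^ m := by exact_mod_cast h1
    exact lt_of_pow_lt_pow_left₀ m (Nat.zero_le _) h2
  have hinj : ∀ a b : ℤ, nF < a → nF < b → (f.eval a).natAbs = (f.eval b).natAbs → a = b := by
    intro a b ha hb hab
    rcases lt_trichotomy a b with h | h | h
    · have := hmono b a ha h; omega
    · exact h
    · have := hmono a b hb h; omega
  obtain ⟨B, hB, hcount⟩ := aux_main_s12 f hd hlead nF hnF hinj
    (fun s r hr hrs g hg hgd => hδ.trans (hδprop s r hr hrs g hg hgd))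
  obtain ⟨A, hA, hAb⟩ := aux_poly_bound (f.map (Int.castRingHom ℝ)) f.natDegree natDegree_map_le
  set d := f.natDegree with hdd
  -- the main inequality
  have hmain : ∀ N : ℕ, 0 < N → SF (f ^ m) nF N ≤
      2 * (B * (1 + Real.log N)) * (1 + (Real.log (A + 1) + d * Real.log N)) := by
    intro N hN
    have hNR : (1:ℝ) ≤ N := by exact_mod_cast hN
    have hL : 0 ≤ Real.log N := Real.log_nonneg hNR
    set S : ℕ := ⌊(A + 1) * (N:ℝ) ^ d⌋₊ with hS
    set Ω : Finset (ℤ × ℤ) := (Finset.Icc (1:ℤ) N ×ˢ Finset.Icc (1:ℤ) N).filter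
      (fun p => nF < p.2 ∧ p.2 < p.1) with hΩ
    have hΩm : ∀ p : ℤ × ℤ, p ∈ Ω ↔ p.1 ∈ Finset.Icc (1:ℤ) N ∧ p.2 ∈ Finset.Ioo nF p.1 := by
      intro p
      simp only [hΩ, Finset.mem_filter, Finset.mem_product, Finset.mem_Icc, Finset.mem_Ioo]
      constructor
      · rintro ⟨⟨⟨h1, h2⟩, h3, h4⟩, h5, h6⟩; exact ⟨⟨h1, h2⟩, h5, h6⟩
      · rintro ⟨⟨h1, h2⟩, h5, h6⟩; exact ⟨⟨⟨h1, h2⟩, by omega, by omega⟩, h5, h6⟩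
    let G : ℤ × ℤ → ℕ := fun p => Int.gcd (f.eval p.1) (f.eval p.2)
    let σ : ℤ × ℤ → ℕ := fun p => (f.eval p.1).natAbs / G p
    let ρ : ℤ × ℤ → ℕ := fun p => (f.eval p.2).natAbs / G p
    have hfact : ∀ p ∈ Ω, 0 < G p ∧ (f.eval p.1).natAbs = G p * σ p ∧
        (f.eval p.2).natAbs = G p * ρ p ∧ 0 < ρ p ∧ ρ p < σ p ∧ σ p ≤ S := by
      intro p hp
      rw [hΩm, Finset.mem_Icc, Finset.mem_Ioo] at hp
      obtain ⟨⟨p1, p2⟩, p3, p4⟩ := hp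
      have z1 := habs0 p.1 (by omega)
      have z2 := habs0 p.2 p3
      have z3 := hmono p.1 p.2 p3 p4
      have e1 : (f.eval p.1).natAbs = G p * σ p :=
        (Nat.mul_div_cancel' (Nat.gcd_dvd_left _ _)).symm
      have e2 : (f.eval p.2).natAbs = G p * ρ p :=
        (Nat.mul_div_cancel' (Nat.gcd_dvd_right _ _)).symm
      have g0 : 0 < G p := Nat.pos_of_ne_zero (by intro h; rw [h] at e1; omega)
      refine ⟨g0, e1, e2, ?_, ?_, ?_⟩
      · exact Nat.pos_of_ne_zero (by intro h; rw [h] at e2; omega)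
      · rw [e1, e2] at z3; exact lt_of_mul_lt_mul_left z3 (Nat.zero_le _)
      · refine (Nat.div_le_self _ _).trans (Nat.le_floor ?_)
        have p1R : (1:ℝ) ≤ p.1 := by exact_mod_cast p1
        have p2R : (p.1:ℝ) ≤ N := by exact_mod_cast p2
        have b1 := hAb p.1 p1R
        have b2 : (f.map (Int.castRingHom ℝ)).eval (p.1:ℝ) = ((f.eval p.1 : ℤ) : ℝ) := by
          simp [Polynomial.eval_intCast_map]
        rw [b2] at b1
        rw [Nat.cast_natAbs, Int.cast_abs]
        refine b1.trans ?_
        gcongr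
        linarith
    have hSF : SF (f ^ m) nF N = ∑ p ∈ Ω,
        (Int.gcd ((f^m).eval p.1) ((f^m).eval p.2) : ℝ) / (((f^m).eval p.1 : ℤ) : ℝ) := by
      unfold SF
      exact (Finset.sum_finset_product' Ω _ _ hΩm).symm
    have hterm : ∀ p ∈ Ω, (Int.gcd ((f^m).eval p.1) ((f^m).eval p.2) : ℝ) /
        (((f^m).eval p.1 : ℤ) : ℝ) ≤ 1 / (σ p : ℝ) ^ 2 := by
      intro p hp
      obtain ⟨g0, e1, e2, r0, rs, sS⟩ := hfact p hp
      rw [hΩm, Finset.mem_Icc, Finset.mem_Ioo] at hp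
      have q1 : Int.gcd ((f^m).eval p.1) ((f^m).eval p.2) = G p ^ m := by
        rw [eval_pow, eval_pow, Int.pow_gcd_pow]
      rw [q1, hpow p.1 (by omega), e1]
      have g0R : (0:ℝ) < G p := by exact_mod_cast g0
      have s1R : (1:ℝ) ≤ σ p := by exact_mod_cast (by omega : 1 ≤ σ p)
      have s0R : (0:ℝ) < σ p := by linarith
      have q2 : ((G p ^ m : ℕ) : ℝ) / ((((G p * σ p) ^ m : ℕ) : ℤ) : ℝ) = 1 / (σ p : ℝ) ^ m := by
        push_cast
        rw [mul_pow]
        field_simp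
      rw [q2]
      gcongr
    rw [hSF]
    refine (Finset.sum_le_sum hterm).trans ?_
    let key : ℤ × ℤ → (Σ _ : ℕ, ℕ) := fun p => ⟨σ p, ρ p⟩
    set T : Finset (Σ _ : ℕ, ℕ) := (Finset.Icc 1 S).sigma (fun s => Finset.Ico 1 s) with hT
    have hkey : ∀ p ∈ Ω, key p ∈ T := by
      intro p hp
      obtain ⟨g0, e1, e2, r0, rs, sS⟩ := hfact p hp
      simp only [hT, Finset.mem_sigma, Finset.mem_Icc, Finset.mem_Ico, key]
      omega
    rw [← Finset.sum_fiberwise_of_maps_to hkey]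
    have hfib : ∀ x ∈ T, ∑ p ∈ Ω with key p = x, 1 / (σ p : ℝ) ^ 2 ≤
        (B * (1 + Real.log N) * √((x.1:ℝ) / x.2)) * (1 / (x.1:ℝ) ^ 2) := by
      intro x hx
      simp only [hT, Finset.mem_sigma, Finset.mem_Icc, Finset.mem_Ico] at hx
      have c1 : ∑ p ∈ Ω with key p = x, 1 / (σ p : ℝ) ^ 2 =
          ((Ω.filter fun p => key p = x).card : ℝ) * (1 / (x.1:ℝ) ^ 2) := by
        rw [← nsmul_eq_mul, ← Finset.sum_const]
        refine Finset.sum_congr rfl fun p hp => ?_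
        rw [← (Finset.mem_filter.1 hp).2]
      rw [c1]
      refine mul_le_mul_of_nonneg_right ?_ (by positivity)
      refine hcount N x.1 x.2 hN (by omega) (by omega) _ ?_
      intro p hp
      obtain ⟨hp, hpx⟩ := Finset.mem_filter.1 hp
      obtain ⟨g0, e1, e2, r0, rs, sS⟩ := hfact p hp
      rw [hΩm, Finset.mem_Icc, Finset.mem_Ioo] at hp
      refine ⟨hp.2.1, hp.2.2, hp.1.2, ?_⟩
      rw [← hpx, e1, e2]
      simp only [key]
      ring
    refine (Finset.sum_le_sum hfib).trans ?_
    rw [hT, Finset.sum_sigma]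
    have hW : 0 ≤ B * (1 + Real.log N) := by positivity
    refine (aux_double S _ hW).trans ?_
    have hlogS : Real.log S ≤ Real.log (A + 1) + d * Real.log N := by
      have hpos : 1 ≤ (A + 1) * (N:ℝ) ^ d :=
        one_le_mul_of_one_le_of_one_le (by linarith) (one_le_pow₀ hNR)
      rw [← Real.log_pow, ← Real.log_mul (by positivity) (by positivity)]
      have hS1 : 0 < S := Nat.floor_pos.2 hpos
      apply Real.log_le_log (by exact_mod_cast hS1)
      exact Nat.floor_le (by linarith)
    gcongr
  intro ε hε
  set η := ε / 2 with hη
  have hη0 : 0 < η := by positivity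
  have hlA : 0 ≤ Real.log (A + 1) := Real.log_nonneg (by linarith)
  refine ⟨2 * (B * (1 + 1 / η)) * (1 + (Real.log (A + 1) + d * (1 / η))), ?_⟩
  intro N hN
  have hNR : (1:ℝ) ≤ N := by exact_mod_cast hN
  have hN0 : (0:ℝ) < N := by linarith
  have hL : 0 ≤ Real.log N := Real.log_nonneg hNR
  refine (hmain N hN).trans ?_
  set E := (N:ℝ) ^ η with hE
  have hE1 : 1 ≤ E := Real.one_le_rpow hNR hη0.le
  have hLE : Real.log N ≤ (1 / η) * E := by
    have := Real.log_le_rpow_div hN0.le hη0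
    rw [← hE] at this
    calc _ ≤ E / η := this
      _ = _ := by ring
  have i1 : 1 + Real.log N ≤ (1 + 1/η) * E := by linarith
  have i2 : 1 + (Real.log (A + 1) + d * Real.log N) ≤
      (1 + (Real.log (A + 1) + d * (1/η))) * E := by
    have j1 : Real.log (A+1) ≤ Real.log (A+1) * E := le_mul_of_one_le_right hlA hE1
    have j2 : d * Real.log N ≤ d * ((1/η) * E) := by gcongr
    linarith
  have i3 : E * E ≤ (N:ℝ) ^ ((1 : ℝ) / δ + ε) := by
    rw [hE, ← Real.rpow_add hN0]
    apply Real.rpow_le_rpow_of_exponent_le hNR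
    have : (0:ℝ) ≤ 1 / δ := by positivity
    rw [hη]; linarith
  calc _ ≤ 2 * (B * ((1 + 1/η) * E)) * ((1 + (Real.log (A + 1) + d * (1/η))) * E) := by
        gcongr
    _ = 2 * (B * (1 + 1 / η)) * (1 + (Real.log (A + 1) + d * (1 / η))) * (E * E) := by ring
    _ ≤ _ := by gcongr
end

section
/- Let F ∈ ℤ[x] and let (a,h) be a lattice point with a,h positive integers such that F(a) > 0. If (a,h) is invisible along F, then there exist positive integers b and k with b < a such that (b,k) blocks (a,h) from being visible along F and (b,k) is itself visible along F. -/
open Polynomial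

theorem invisible_has_visible_blocker
    (F : Polynomial ℤ) (a h : ℤ) (ha : 0 < a) (hh : 0 < h)
    (hFa : 0 < F.eval a) (hinv : ¬ VisibleAlong F a h) :
    ∃ b k : ℤ, 0 < b ∧ 0 < k ∧ b < a ∧ BlocksAlong F b k a h ∧ VisibleAlong F b k := by
  classical
  have hF : ((F.eval a : ℤ) : ℚ) ≠ 0 := by exact_mod_cast hFa.ne'
  obtain ⟨t, ht⟩ : ∃ t : ℚ, (h : ℚ) = t * ((F.eval a : ℤ) : ℚ) :=
    ⟨h / ((F.eval a : ℤ) : ℚ), by field_simp⟩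
  have hex : ∃ n : ℕ, 0 < (n : ℤ) ∧
      ∃ k : ℤ, 0 < k ∧ (k : ℚ) = t * ((F.eval (n : ℤ) : ℤ) : ℚ) := by
    refine ⟨a.toNat, ?_⟩
    rw [Int.toNat_of_nonneg ha.le]
    exact ⟨ha, h, hh, ht⟩
  obtain ⟨hb, k, hk, hkt⟩ := Nat.find_spec hex
  have hmin : ∀ u : ℤ, 0 < u →
      (∃ k : ℤ, 0 < k ∧ (k : ℚ) = t * ((F.eval u : ℤ) : ℚ)) → ((Nat.find hex : ℕ) : ℤ) ≤ u := by
    intro u hu hP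
    have h1 : Nat.find hex ≤ u.toNat := by
      apply Nat.find_min'
      rw [Int.toNat_of_nonneg hu.le]
      exact ⟨hu, hP⟩
    omega
  have hlt : ((Nat.find hex : ℕ) : ℤ) < a := by
    by_contra hge
    exact hinv ⟨t, ht, fun u hu hP => (not_lt.mp hge).trans (hmin u hu hP)⟩
  exact ⟨_, k, hb, hk, hlt, ⟨hb, hk, hlt, t, ht, hkt⟩, t, hkt, hmin⟩
end
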